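/- Let n ≥ 1, 0 < p ≤ 1, 0 < q₁ < q < q₂ ≤ ∞, and define η ∈ (0,1) by 1/q = (1−η)/q₁ + η/q₂ (with η/q₂ = 0 when q₂ = ∞). Fix ψ smooth, compactly supported on ℝⁿ with ∫ψ ≠ 0, and let N denote the associated non-tangential maximal operator. For locally integrable f and t > 0 set K(t,f) = inf { ‖N f₀‖_{p,q₁} + t ‖N f₁‖_{p,q₂} : f = f₀ + f₁, f₀, f₁ locally integrable }. Then there is a constant c such that every locally integrable f with ‖N f‖_{p,q} < ∞ satisfies (∫_0^∞ (t^{−η} K(t,f))^q dt/t)^{1/q} ≤ c · ‖N f‖_{p,q}. -/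

import Mathlib

open MeasureTheory ENNReal Set

noncomputable section

abbrev Euc (n : ℕ) := EuclideanSpace ℝ (Fin n)

/-- Distribution function `m(F, lam) = |{x : lam < F x}|` (Lebesgue measure). -/
def distFn {n : ℕ} (F : Euc n → ℝ≥0∞) (lam : ℝ≥0∞) : ℝ≥0∞ :=
  volume {x | lam < F x}

/-- View a real-valued function as an `ℝ≥0∞`-valued one via its absolute value. -/
def eF {n : ℕ} (g : Euc n → ℝ) : Euc n → ℝ≥0∞ :=
  fun x => ENNReal.ofReal |g x|

/-- Dyadic Lorentz `L^{p,q}` quasinorm. -/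
def lorentzNorm {n : ℕ} (p : ℝ) (q : ℝ≥0∞) (F : Euc n → ℝ≥0∞) : ℝ≥0∞ :=
  if q = ∞ then ⨆ k : ℤ, (2 : ℝ≥0∞) ^ k * (distFn F ((2 : ℝ≥0∞) ^ k)) ^ (1/p)
  else (∑' k : ℤ, ((2 : ℝ≥0∞) ^ k * (distFn F ((2 : ℝ≥0∞) ^ k)) ^ (1/p)) ^ q.toReal) ^ (1/q.toReal)

/-- `ℓ^q(ℤ)` norm of a nonnegative sequence. -/
def ellq (q : ℝ≥0∞) (a : ℤ → ℝ≥0∞) : ℝ≥0∞ :=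
  if q = ∞ then ⨆ k : ℤ, a k else (∑' k : ℤ, (a k) ^ q.toReal) ^ (1/q.toReal)

/-- The axis-parallel closed cube centered at `c` with half side-length `r`. -/
def cube {n : ℕ} (c : Euc n) (r : ℝ) : Set (Euc n) := {y | ∀ i, |y i - c i| ≤ r}

/-- `H^p` atom with defining cube `cube c r`; `|cube c r| = (2r)^n`. -/
def IsHpAtom {n : ℕ} (p : ℝ) (a : Euc n → ℝ) (c : Euc n) (r : ℝ) : Prop :=
  0 < r ∧ Measurable a ∧ (∀ x, x ∉ cube c r → a x = 0) ∧
    (∀ᵐ x ∂(volume : Measure (Euc n)), |a x| ≤ ((((2*r)^n : ℝ)) ^ (1/p))⁻¹) ∧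
    ∀ α : Fin n → ℕ, (∑ i, α i) ≤ ⌊(n : ℝ) * (1/p - 1)⌋₊ →
      (∫ y : Euc n, (∏ i, y i ^ α i) * a y) = 0

/-- `(f * ψ_t)(y)` where `ψ_t(x) = t⁻ⁿ ψ(x/t)`. -/
def convAt {n : ℕ} (ψ f : Euc n → ℝ) (t : ℝ) (y : Euc n) : ℝ :=
  ∫ z : Euc n, f z * ((t ^ n)⁻¹ * ψ (t⁻¹ • (y - z)))

/-- Non-tangential maximal function. -/
def ntMax {n : ℕ} (ψ f : Euc n → ℝ) (x : Euc n) : ℝ≥0∞ :=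
  ⨆ (y : Euc n) (t : ℝ) (_ : 0 < t) (_ : dist x y < t), ENNReal.ofReal |convAt ψ f t y|

/-- Radial maximal function. -/
def radMax {n : ℕ} (φ f : Euc n → ℝ) (x : Euc n) : ℝ≥0∞ :=
  ⨆ (t : ℝ) (_ : 0 < t), ENNReal.ofReal |convAt φ f t x|


/-- The Peetre `K`-functional for the couple `(H^{p,q₁}, H^{p,q₂})`, with the `H^{p,q}`
quasinorm computed via the non-tangential maximal operator associated to `ψ`. -/
def Kfun {n : ℕ} (ψ : Euc n → ℝ) (p : ℝ) (q1 q2 : ℝ≥0∞) (f : Euc n → ℝ) (t : ℝ) : ℝ≥0∞ :=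
  ⨅ (f0 : Euc n → ℝ) (f1 : Euc n → ℝ) (_ : LocallyIntegrable f0 volume)
    (_ : LocallyIntegrable f1 volume) (_ : ∀ x, f x = f0 x + f1 x),
      lorentzNorm p q1 (ntMax ψ f0) + ENNReal.ofReal t * lorentzNorm p q2 (ntMax ψ f1)


lemma two_rpow_neg_lt_one {δ : ℝ} (hδ : 0 < δ) : (2:ℝ≥0∞) ^ (-δ) < 1 := by
  apply ENNReal.rpow_lt_one_of_one_lt_of_neg (by norm_num) (by linarith)

lemma geo_ne_top {δ : ℝ} (hδ : 0 < δ) : (∑' i : ℕ, ((2:ℝ≥0∞) ^ (-(δ * i)))) ≠ ∞ := by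
  have h : ∀ i : ℕ, (2:ℝ≥0∞) ^ (-(δ * i)) = ((2:ℝ≥0∞) ^ (-δ)) ^ i := by
    intro i
    rw [← ENNReal.rpow_natCast, ← ENNReal.rpow_mul]; congr 1; ring
  simp_rw [h]
  rw [ENNReal.tsum_geometric]
  have := two_rpow_neg_lt_one hδ
  simp only [ne_eq, ENNReal.inv_eq_top]
  exact (tsub_pos_of_lt this).ne'

lemma zpow_eq_rpow2 (j : ℤ) : (2:ℝ≥0∞) ^ j = (2:ℝ≥0∞) ^ (j:ℝ) := by
  rw [ENNReal.rpow_intCast]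

lemma two_rpow_ne_zero (x : ℝ) : (2:ℝ≥0∞) ^ x ≠ 0 := by
  simp [ENNReal.rpow_eq_zero_iff]
lemma two_rpow_ne_top (x : ℝ) : (2:ℝ≥0∞) ^ x ≠ ∞ := by
  simp [ENNReal.rpow_eq_top_iff]

lemma two_rpow_add (x y : ℝ) : (2:ℝ≥0∞) ^ (x + y) = 2 ^ x * 2 ^ y :=
  ENNReal.rpow_add _ _ (by norm_num) (by norm_num)

lemma geo_sum {q : ℝ} (hq : 0 < q) : ∃ C : ℝ≥0∞, C ≠ ∞ ∧ ∀ D : ℝ≥0∞,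
    ∑' j : ℤ, (if (2:ℝ≥0∞) ^ j ≤ D then ((2:ℝ≥0∞) ^ j) ^ q else 0) ≤ C * D ^ q := by
  refine ⟨∑' i : ℕ, ((2:ℝ≥0∞) ^ (-(q * i))), geo_ne_top hq, fun D => ?_⟩
  have hC0 : (∑' i : ℕ, ((2:ℝ≥0∞) ^ (-(q * i)))) ≠ 0 := by
    intro h
    have := ENNReal.tsum_eq_zero.1 h 0
    simp at this
  by_cases hD0 : D = 0
  · subst hD0
    have : ∀ j : ℤ, ¬ ((2:ℝ≥0∞) ^ j ≤ 0) := by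
      intro j; rw [zpow_eq_rpow2, nonpos_iff_eq_zero]; exact two_rpow_ne_zero _
    simp [this]
  by_cases hDt : D = ∞
  · subst hDt; rw [ENNReal.top_rpow_of_pos hq, ENNReal.mul_top hC0]; exact le_top
  obtain ⟨m, hm1, hm2⟩ := ENNReal.exists_mem_Ico_zpow hD0 hDt (y := 2) (by norm_num) (by norm_num)
  have hle : ∀ j : ℤ, (if (2:ℝ≥0∞) ^ j ≤ D then ((2:ℝ≥0∞) ^ j) ^ q else 0) ≤
      (if j ≤ m then ((2:ℝ≥0∞) ^ j) ^ q else 0) := by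
    intro j
    split_ifs with h1 h2 <;> try simp
    exfalso; push Not at h2
    have : (2:ℝ≥0∞) ^ (m+1) ≤ 2 ^ j := ENNReal.zpow_le_of_le (by norm_num) (by omega)
    exact absurd (this.trans h1) (not_le.2 hm2)
  refine (ENNReal.tsum_le_tsum hle).trans ?_
  have hinj : Function.Injective (fun i : ℕ => m - (i:ℤ)) := fun a b h => by
    simp only at h; omega
  rw [← hinj.tsum_eq]
  · rw [← ENNReal.tsum_mul_right]
    apply ENNReal.tsum_le_tsum
    intro i
    rw [if_pos (by omega)]
    calc ((2:ℝ≥0∞) ^ (m - (i:ℤ))) ^ q = 2 ^ (-(q * i)) * (2 ^ m) ^ q := by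
          rw [zpow_eq_rpow2, zpow_eq_rpow2, ← ENNReal.rpow_mul, ← ENNReal.rpow_mul, ← two_rpow_add]
          congr 1; push_cast; ring
      _ ≤ _ := by gcongr
  · intro j hj
    simp only [Function.mem_support, ne_eq, ite_eq_right_iff, not_forall] at hj
    obtain ⟨h, _⟩ := hj
    exact ⟨(m - j).toNat, by simp; omega⟩

lemma gconv_point {δ τ : ℝ} (hδ : 0 < δ) (hτ : 0 < τ) : ∃ C : ℝ≥0∞, C ≠ ∞ ∧ ∀ x : ℕ → ℝ≥0∞,
    (∑' i : ℕ, (2:ℝ≥0∞) ^ (-(δ * i)) * x i) ^ τ ≤ C * ∑' i : ℕ, (2:ℝ≥0∞) ^ (-(δ / 2 * τ * i)) * x i ^ τ := by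
  refine ⟨(∑' i : ℕ, ((2:ℝ≥0∞) ^ (-(δ / 2 * i)))) ^ τ, ?_, fun x => ?_⟩
  · exact ENNReal.rpow_ne_top_of_nonneg hτ.le (geo_ne_top (by linarith))
  have h1 : ∑' i : ℕ, (2:ℝ≥0∞) ^ (-(δ * i)) * x i ≤
      (∑' i : ℕ, ((2:ℝ≥0∞) ^ (-(δ / 2 * i)))) *
        (∑' i : ℕ, (2:ℝ≥0∞) ^ (-(δ / 2 * τ * i)) * x i ^ τ) ^ (1/τ) := by
    rw [← ENNReal.tsum_mul_right]
    apply ENNReal.tsum_le_tsum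
    intro i
    have : (2:ℝ≥0∞) ^ (-(δ / 2 * i)) * x i ≤
        (∑' i : ℕ, (2:ℝ≥0∞) ^ (-(δ / 2 * τ * i)) * x i ^ τ) ^ (1/τ) := by
      rw [one_div, ENNReal.le_rpow_inv_iff hτ, ENNReal.mul_rpow_of_nonneg _ _ hτ.le, ← ENNReal.rpow_mul]
      refine le_trans (le_of_eq ?_) (ENNReal.le_tsum i)
      congr 2; ring
    calc (2:ℝ≥0∞) ^ (-(δ * i)) * x i = 2 ^ (-(δ / 2 * i)) * (2 ^ (-(δ / 2 * i)) * x i) := by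
          rw [← mul_assoc, ← two_rpow_add]; congr 2; ring
      _ ≤ _ := by gcongr
  calc _ ≤ _ := ENNReal.rpow_le_rpow h1 hτ.le
    _ = _ := by
      rw [ENNReal.mul_rpow_of_nonneg _ _ hτ.le, ← ENNReal.rpow_mul, one_div_mul_cancel hτ.ne',
        ENNReal.rpow_one]

lemma ellq_ofReal {q : ℝ} (a : ℤ → ℝ≥0∞) (hq : 0 < q) :
    ellq (ENNReal.ofReal q) a = (∑' k, a k ^ q) ^ (1/q) := by
  simp [ellq, ENNReal.toReal_ofReal hq.le]

lemma gconv {δ σ : ℝ} (hδ : 0 < δ) (hσ : 0 < σ) {q : ℝ≥0∞} (hq : q ≠ 0) : ∃ C : ℝ≥0∞, C ≠ ∞ ∧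
    ∀ (φ : ℕ → ℤ) (a : ℤ → ℝ≥0∞),
      ellq q (fun l => (∑' i : ℕ, (2:ℝ≥0∞) ^ (-(δ * i)) * (a (l + φ i)) ^ σ) ^ (1/σ)) ≤
        C * ellq q a := by
  by_cases hqt : q = ∞
  · subst hqt
    refine ⟨(∑' i : ℕ, ((2:ℝ≥0∞) ^ (-(δ * i)))) ^ (1/σ),
      ENNReal.rpow_ne_top_of_nonneg (by positivity) (geo_ne_top hδ), fun φ a => ?_⟩
    simp only [ellq, if_true]
    refine iSup_le fun l => ?_
    have : ∑' i : ℕ, (2:ℝ≥0∞) ^ (-(δ * i)) * (a (l + φ i)) ^ σ ≤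
        (∑' i : ℕ, ((2:ℝ≥0∞) ^ (-(δ * i)))) * (⨆ k, a k) ^ σ := by
      rw [← ENNReal.tsum_mul_right]
      apply ENNReal.tsum_le_tsum
      intro i
      gcongr
      exact le_iSup a _
    refine (ENNReal.rpow_le_rpow this (by positivity)).trans ?_
    rw [ENNReal.mul_rpow_of_nonneg _ _ (by positivity), ← ENNReal.rpow_mul,
      mul_one_div_cancel hσ.ne', ENNReal.rpow_one]
  · have hQ : 0 < q.toReal := ENNReal.toReal_pos hq hqt
    set Q := q.toReal with hQdef
    obtain ⟨C, hC, h⟩ := gconv_point hδ (τ := Q/σ) (by positivity)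
    set W := ∑' i : ℕ, ((2:ℝ≥0∞) ^ (-(δ / 2 * (Q/σ) * i))) with hW
    have hWt : W ≠ ∞ := geo_ne_top (by positivity)
    refine ⟨(C * W) ^ (1/Q), ENNReal.rpow_ne_top_of_nonneg (by positivity)
      (ENNReal.mul_ne_top hC hWt), fun φ a => ?_⟩
    simp only [ellq, if_neg hqt, ← hQdef]
    rw [← ENNReal.mul_rpow_of_nonneg _ _ (by positivity)]
    apply ENNReal.rpow_le_rpow _ (by positivity)
    calc ∑' l, ((∑' i : ℕ, (2:ℝ≥0∞) ^ (-(δ * i)) * (a (l + φ i)) ^ σ) ^ (1/σ)) ^ Q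
        ≤ ∑' l, C * ∑' i : ℕ, (2:ℝ≥0∞) ^ (-(δ / 2 * (Q/σ) * i)) * (a (l + φ i)) ^ Q := by
          apply ENNReal.tsum_le_tsum
          intro l
          rw [← ENNReal.rpow_mul]
          have := h (fun i => (a (l + φ i)) ^ σ)
          rw [show 1/σ * Q = Q/σ by ring]
          refine this.trans (le_of_eq ?_)
          congr 1
          apply tsum_congr; intro i
          rw [← ENNReal.rpow_mul]; congr 2; field_simp
      _ = C * ∑' i : ℕ, ∑' l : ℤ, (2:ℝ≥0∞) ^ (-(δ / 2 * (Q/σ) * i)) * (a (l + φ i)) ^ Q := by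
          rw [ENNReal.tsum_mul_left, ENNReal.tsum_comm]
      _ = C * W * ∑' k, a k ^ Q := by
          rw [mul_assoc, hW, ← ENNReal.tsum_mul_right]
          congr 1
          apply tsum_congr; intro i
          rw [ENNReal.tsum_mul_left]
          congr 1
          exact (Equiv.addRight (φ i)).tsum_eq (fun k => a k ^ Q)


def cnt (a : ℤ → ℝ≥0∞) (s : ℝ≥0∞) : ℝ≥0∞ := ∑' k, if s < a k then (1:ℝ≥0∞) else 0

def lev (a : ℤ → ℝ≥0∞) (l : ℤ) : ℝ≥0∞ := sInf {s | cnt a s ≤ (2:ℝ≥0∞) ^ l}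

lemma cnt_lev (a : ℤ → ℝ≥0∞) (l : ℤ) : cnt a (lev a l) ≤ (2:ℝ≥0∞) ^ l := by
  rw [cnt, ENNReal.tsum_eq_iSup_sum]
  refine iSup_le fun F => ?_
  by_cases hF : (F.filter (fun k => lev a l < a k)).Nonempty
  · have hlt : lev a l < (F.filter (fun k => lev a l < a k)).inf' hF a := by
      rw [Finset.lt_inf'_iff]
      intro k hk
      exact (Finset.mem_filter.1 hk).2
    obtain ⟨s, hs, hsm⟩ := sInf_lt_iff.1 hlt
    refine le_trans ?_ hs
    refine le_trans ?_ (ENNReal.sum_le_tsum F)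
    apply Finset.sum_le_sum
    intro k hk
    split_ifs with h1 h2
    · exact le_rfl
    · exfalso
      exact h2 (hsm.trans_le (Finset.inf'_le _ (Finset.mem_filter.2 ⟨hk, h1⟩)))
    · exact zero_le
    · exact le_rfl
  · rw [Finset.not_nonempty_iff_eq_empty, Finset.filter_eq_empty_iff] at hF
    rw [Finset.sum_eq_zero]
    · exact zero_le
    · intro k hk; rw [if_neg (hF hk)]

lemma lev_anti (a : ℤ → ℝ≥0∞) {l m : ℤ} (h : l ≤ m) : lev a m ≤ lev a l := by
  apply sInf_le_sInf
  intro s hs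
  exact le_trans hs (ENNReal.zpow_le_of_le (by norm_num) h)

lemma lt_cnt (a : ℤ → ℝ≥0∞) {l : ℤ} {s : ℝ≥0∞} (h : s < lev a l) : (2:ℝ≥0∞) ^ l < cnt a s := by
  by_contra hc
  push Not at hc
  exact absurd (sInf_le hc : lev a l ≤ s) (not_le.2 h)

lemma not_lt_lev_neg (a : ℤ → ℝ≥0∞) {l : ℤ} (hl : l < 0) (k : ℤ) : a k ≤ lev a l := by
  by_contra hc
  push Not at hc
  have h1 : (1:ℝ≥0∞) ≤ cnt a (lev a l) := by
    refine le_trans ?_ (ENNReal.le_tsum k)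
    rw [if_pos hc]
  have h2 := h1.trans (cnt_lev a l)
  have h3 : (2:ℝ≥0∞) ^ l < 1 := by
    rw [zpow_eq_rpow2]
    exact ENNReal.rpow_lt_one_of_one_lt_of_neg (by norm_num) (by exact_mod_cast hl)
  exact absurd h2 (not_le.2 h3)

lemma lev_fin (a : ℤ → ℝ≥0∞) (l : ℤ) : {k | lev a l < a k}.Finite := by
  have h : cnt a (lev a l) ≠ ∞ := ((cnt_lev a l).trans_lt (by
    rw [zpow_eq_rpow2]; exact (two_rpow_ne_top _).lt_top)).ne
  refine (ENNReal.finite_const_le_of_tsum_ne_top h (ε := 1) one_ne_zero).subset ?_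
  intro k hk
  simp only [mem_ofPred_eq] at hk ⊢
  rw [if_pos hk]

lemma pow_le_layer {q : ℝ} (hq : 0 < q) (A : ℝ≥0∞) : A ^ q ≤
    2 ^ q * ∑' i : ℤ, (if (2:ℝ≥0∞) ^ i < A then ((2:ℝ≥0∞) ^ i) ^ q else 0) := by
  by_cases h0 : A = 0
  · subst h0; rw [ENNReal.zero_rpow_of_pos hq]; exact zero_le
  by_cases ht : A = ∞
  · subst ht
    have : ∑' i : ℤ, (if (2:ℝ≥0∞) ^ i < ∞ then ((2:ℝ≥0∞) ^ i) ^ q else 0) = ∞ := by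
      rw [eq_top_iff]
      refine le_trans (ENNReal.tsum_const_eq_top_of_ne_zero (α := ℕ) (c := 1) one_ne_zero).ge ?_
      refine le_trans ?_ (ENNReal.tsum_comp_le_tsum_of_injective (f := fun i : ℕ => (i:ℤ))
        Nat.cast_injective _)
      apply ENNReal.tsum_le_tsum
      intro i
      rw [if_pos (by rw [zpow_eq_rpow2]; exact (two_rpow_ne_top _).lt_top)]
      apply ENNReal.one_le_rpow _ hq
      rw [zpow_natCast]; exact one_le_pow₀ (by norm_num)
    rw [this, ENNReal.mul_top (two_rpow_ne_zero _)]; exact le_top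
  obtain ⟨m, hm1, hm2⟩ := ENNReal.exists_mem_Ioc_zpow h0 ht (y := 2) (by norm_num) (by norm_num)
  calc A ^ q ≤ ((2:ℝ≥0∞) ^ (m+1)) ^ q := ENNReal.rpow_le_rpow hm2 hq.le
    _ = 2 ^ q * (2 ^ m) ^ q := by
        rw [zpow_eq_rpow2, zpow_eq_rpow2, ← ENNReal.rpow_mul, ← ENNReal.rpow_mul, ← two_rpow_add]
        congr 1; push_cast; ring
    _ ≤ _ := by
        gcongr
        refine le_trans ?_ (ENNReal.le_tsum m)
        rw [if_pos hm1]

lemma lev_sum {q : ℝ} (hq : 0 < q) : ∃ C : ℝ≥0∞, C ≠ ∞ ∧ ∀ a : ℤ → ℝ≥0∞,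
    ∑' l : ℤ, (2:ℝ≥0∞) ^ l * (lev a l) ^ q ≤ C * ∑' k, a k ^ q := by
  obtain ⟨C1, hC1, h1⟩ := geo_sum hq
  obtain ⟨C2, hC2, h2⟩ := geo_sum (zero_lt_one (α := ℝ))
  refine ⟨2 ^ q * (C2 * C1), by
    exact ENNReal.mul_ne_top (two_rpow_ne_top _) (ENNReal.mul_ne_top hC2 hC1), fun a => ?_⟩
  calc ∑' l : ℤ, (2:ℝ≥0∞) ^ l * (lev a l) ^ q
      ≤ ∑' l : ℤ, (2:ℝ≥0∞) ^ l * (2 ^ q * ∑' i : ℤ,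
          (if (2:ℝ≥0∞) ^ i < lev a l then ((2:ℝ≥0∞) ^ i) ^ q else 0)) := by
        apply ENNReal.tsum_le_tsum; intro l
        gcongr
        exact pow_le_layer hq _
    _ = 2 ^ q * ∑' i : ℤ, ∑' l : ℤ, (2:ℝ≥0∞) ^ l *
          (if (2:ℝ≥0∞) ^ i < lev a l then ((2:ℝ≥0∞) ^ i) ^ q else 0) := by
        rw [ENNReal.tsum_comm, ← ENNReal.tsum_mul_left]
        apply tsum_congr; intro l
        rw [ENNReal.tsum_mul_left]; ring
    _ ≤ 2 ^ q * ∑' i : ℤ, C2 * (((2:ℝ≥0∞) ^ i) ^ q * cnt a ((2:ℝ≥0∞) ^ i)) := by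
        gcongr with i
        calc ∑' l : ℤ, (2:ℝ≥0∞) ^ l *
              (if (2:ℝ≥0∞) ^ i < lev a l then ((2:ℝ≥0∞) ^ i) ^ q else 0)
            ≤ ∑' l : ℤ, ((2:ℝ≥0∞) ^ i) ^ q *
              (if (2:ℝ≥0∞) ^ l ≤ cnt a ((2:ℝ≥0∞) ^ i) then ((2:ℝ≥0∞) ^ l) ^ (1:ℝ) else 0) := by
              apply ENNReal.tsum_le_tsum; intro l
              by_cases h : (2:ℝ≥0∞) ^ i < lev a l
              · rw [if_pos h, if_pos (lt_cnt a h).le, ENNReal.rpow_one, mul_comm]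
              · rw [if_neg h]; simp
          _ ≤ ((2:ℝ≥0∞) ^ i) ^ q * (C2 * (cnt a ((2:ℝ≥0∞) ^ i)) ^ (1:ℝ)) := by
              rw [ENNReal.tsum_mul_left]; gcongr; exact h2 _
          _ = _ := by rw [ENNReal.rpow_one]; ring
    _ = 2 ^ q * (C2 * ∑' k, ∑' i : ℤ, (if (2:ℝ≥0∞) ^ i < a k then ((2:ℝ≥0∞) ^ i) ^ q else 0)) := by
        rw [ENNReal.tsum_mul_left, ENNReal.tsum_comm]
        congr 3; ext i
        rw [cnt, ← ENNReal.tsum_mul_left]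
        apply tsum_congr; intro k; split_ifs <;> simp
    _ ≤ 2 ^ q * (C2 * ∑' k, C1 * a k ^ q) := by
        gcongr with k
        refine le_trans (ENNReal.tsum_le_tsum fun i => ?_) (h1 (a k))
        split_ifs with h3 h4 h4
        · exact le_rfl
        · exact absurd h3.le h4
        · exact zero_le
        · exact le_rfl
    _ = _ := by rw [ENNReal.tsum_mul_left]; ring

/-- head part -/
lemma head_le (a : ℤ → ℝ≥0∞) {r : ℝ} (hr : 0 < r) (m : ℤ) :
    ∑' k, (if lev a m < a k then a k else 0) ^ r ≤
      ∑' i : ℕ, (2:ℝ≥0∞) ^ (m - i) * (lev a (m - i - 1)) ^ r := by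
  calc ∑' k, (if lev a m < a k then a k else 0) ^ r
      ≤ ∑' k, ∑' i : ℕ, (if lev a (m - i) < a k then (1:ℝ≥0∞) else 0) * (lev a (m - i - 1)) ^ r := by
        apply ENNReal.tsum_le_tsum; intro k
        by_cases h : lev a m < a k
        · rw [if_pos h]
          have hex : ∃ i : ℕ, a k ≤ lev a (m - i) :=
            ⟨(m + 1).toNat, not_lt_lev_neg a (by omega) k⟩
          classical
          have hsp := Nat.find_spec hex
          have hne : Nat.find hex ≠ 0 := by
            intro h0
            rw [h0] at hsp
            simp at hsp
            exact absurd hsp (not_le.2 h)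
          obtain ⟨i, hi⟩ := Nat.exists_eq_succ_of_ne_zero hne
          have hlt : lev a (m - i) < a k := by
            have := Nat.find_min hex (m := i) (by omega)
            exact not_le.1 this
          refine le_trans ?_ (ENNReal.le_tsum i)
          rw [if_pos hlt, one_mul]
          apply ENNReal.rpow_le_rpow _ hr.le
          rw [hi] at hsp
          refine hsp.trans (le_of_eq ?_)
          congr 1; push_cast; ring
        · rw [if_neg h, ENNReal.zero_rpow_of_pos hr]; exact zero_le
    _ = ∑' i : ℕ, cnt a (lev a (m - i)) * (lev a (m - i - 1)) ^ r := by
        rw [ENNReal.tsum_comm]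
        apply tsum_congr; intro i
        rw [ENNReal.tsum_mul_right]; rfl
    _ ≤ _ := by
        apply ENNReal.tsum_le_tsum; intro i
        gcongr
        exact cnt_lev a _

lemma lev_small (a : ℤ → ℝ≥0∞) {q : ℝ} (hq : 0 < q) (ha : ∑' k, a k ^ q ≠ ∞) (m : ℤ) {x : ℝ≥0∞}
    (hx : x ≠ 0) : ∃ i : ℕ, lev a (m + i) < x := by
  by_contra hc
  push Not at hc
  obtain ⟨C, hC, h⟩ := lev_sum hq
  have h1 := (h a).trans_lt (ENNReal.mul_lt_top hC.lt_top ha.lt_top)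
  have hm0 : (2:ℝ≥0∞) ^ m * x ^ q ≠ 0 := by
    apply mul_ne_zero
    · rw [zpow_eq_rpow2]; exact two_rpow_ne_zero _
    · intro h0
      rw [ENNReal.rpow_eq_zero_iff] at h0
      rcases h0 with h0 | h0
      · exact hx h0.1
      · linarith [h0.2]
  have h2 : (∞:ℝ≥0∞) ≤ ∑' l : ℤ, (2:ℝ≥0∞) ^ l * (lev a l) ^ q := by
    rw [← ENNReal.tsum_const_eq_top_of_ne_zero (α := ℕ) hm0]
    refine le_trans ?_ (ENNReal.tsum_comp_le_tsum_of_injective (f := fun i : ℕ => m + (i:ℤ))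
        (fun a b h => by simpa using h) _)
    apply ENNReal.tsum_le_tsum
    intro i
    gcongr
    · norm_num
    · omega
    · exact hc i
  exact absurd h1 (not_lt.2 h2)

/-- tail part -/
lemma tail_le (a : ℤ → ℝ≥0∞) {q : ℝ} (hq : 0 < q) (ha : ∑' k, a k ^ q ≠ ∞) {r : ℝ} (hr : 0 < r)
    (m : ℤ) : ∑' k, (if lev a m < a k then 0 else a k) ^ r ≤
      ∑' i : ℕ, (2:ℝ≥0∞) ^ (m + i + 1) * (lev a (m + i)) ^ r := by
  calc ∑' k, (if lev a m < a k then 0 else a k) ^ r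
      ≤ ∑' k, ∑' i : ℕ, (if lev a (m + i + 1) < a k then (1:ℝ≥0∞) else 0) * (lev a (m + i)) ^ r := by
        apply ENNReal.tsum_le_tsum; intro k
        by_cases h : lev a m < a k
        · rw [if_pos h, ENNReal.zero_rpow_of_pos hr]; exact zero_le
        by_cases h0 : a k = 0
        · rw [if_neg h, h0, ENNReal.zero_rpow_of_pos hr]; exact zero_le
        rw [if_neg h]
        have hex := lev_small a hq ha m h0
        classical
        have hsp := Nat.find_spec hex
        have hne : Nat.find hex ≠ 0 := by
          intro h0
          rw [h0] at hsp
          simp at hsp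
          exact h hsp
        obtain ⟨i, hi⟩ := Nat.exists_eq_succ_of_ne_zero hne
        have hle : a k ≤ lev a (m + i) := by
          have := Nat.find_min hex (m := i) (by omega)
          exact not_lt.1 this
        refine le_trans ?_ (ENNReal.le_tsum i)
        rw [hi] at hsp
        rw [if_pos (by convert hsp using 2; push_cast; ring), one_mul]
        exact ENNReal.rpow_le_rpow hle hr.le
    _ = ∑' i : ℕ, cnt a (lev a (m + i + 1)) * (lev a (m + i)) ^ r := by
        rw [ENNReal.tsum_comm]
        apply tsum_congr; intro i
        rw [ENNReal.tsum_mul_right]; rfl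
    _ ≤ _ := by
        apply ENNReal.tsum_le_tsum; intro i
        gcongr
        exact cnt_lev a _


lemma gconv_sum {δ σ q : ℝ} (hδ : 0 < δ) (hσ : 0 < σ) (hq : 0 < q) : ∃ C : ℝ≥0∞, C ≠ ∞ ∧
    ∀ (φ : ℕ → ℤ) (a : ℤ → ℝ≥0∞),
      ∑' l, ((∑' i : ℕ, (2:ℝ≥0∞) ^ (-(δ * i)) * (a (l + φ i)) ^ σ) ^ (1/σ)) ^ q ≤
        C * ∑' k, a k ^ q := by
  obtain ⟨C, hC, h⟩ := gconv hδ hσ (q := ENNReal.ofReal q) (by simpa using hq)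
  refine ⟨C ^ q, ENNReal.rpow_ne_top_of_nonneg hq.le hC, fun φ a => ?_⟩
  have := h φ a
  rw [ellq_ofReal _ hq, ellq_ofReal _ hq] at this
  have := ENNReal.rpow_le_rpow this hq.le
  rwa [ENNReal.mul_rpow_of_nonneg _ _ hq.le, ← ENNReal.rpow_mul, ← ENNReal.rpow_mul,
    one_div_mul_cancel hq.ne', ENNReal.rpow_one, ENNReal.rpow_one] at this

lemma two_comb {x y z w v : ℝ} (A : ℝ≥0∞) (e : x + y = z + w + v) :
    (2:ℝ≥0∞) ^ x * (2 ^ y * A) = 2 ^ z * (2 ^ w * (2 ^ v * A)) := by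
  simp only [← mul_assoc, ← two_rpow_add]
  rw [e, add_assoc]

lemma seq_interp {q1 q : ℝ} {q2 : ℝ≥0∞} (hq1 : 0 < q1) (hq1q : q1 < q)
    (hqq2 : ENNReal.ofReal q < q2) {η : ℝ} (hη0 : 0 < η) (hη1 : η < 1)
    (hηdef : 1/q = (1 - η)/q1 + (if q2 = ∞ then 0 else η / q2.toReal)) :
    ∃ θ : ℝ, 0 < θ ∧ ∃ C : ℝ≥0∞, C ≠ ∞ ∧ ∀ a : ℤ → ℝ≥0∞, ∑' k, a k ^ q ≠ ∞ →
      ∃ S : ℤ → Finset ℤ,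
        ∑' m : ℤ, ((2:ℝ≥0∞) ^ (-(m * (η * θ))) *
          ellq (ENNReal.ofReal q1) (fun k => if k ∈ S m then a k else 0)) ^ q ≤ C * ∑' k, a k ^ q ∧
        ∑' m : ℤ, ((2:ℝ≥0∞) ^ (m * ((1 - η) * θ)) *
          ellq q2 (fun k => if k ∈ S m then 0 else a k)) ^ q ≤ C * ∑' k, a k ^ q := by
  have hq : 0 < q := hq1.trans hq1q
  set Q2i : ℝ := if q2 = ∞ then 0 else 1 / q2.toReal with hQ2i
  have hdef : 1/q = (1 - η)/q1 + η * Q2i := by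
    rw [hηdef, hQ2i]; split_ifs <;> ring
  set θ := 1/q1 - Q2i with hθ
  have hQ2q : Q2i < 1/q1 := by
    rw [hQ2i]; split_ifs with h
    · positivity
    · have : q < q2.toReal := by rwa [← ENNReal.ofReal_lt_iff_lt_toReal hq.le h]
      exact one_div_lt_one_div_of_lt hq1 (hq1q.trans this)
  have hθ0 : 0 < θ := by linarith
  have e1 : q1 / q = 1 - η * q1 * θ := by
    have : q1 / q = q1 * (1/q) := by ring
    rw [this, hdef, hθ]; field_simp; ring
  obtain ⟨C0, hC0, hlev⟩ := lev_sum hq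
  obtain ⟨C1, hC1, hg1⟩ := gconv_sum (δ := η * q1 * θ) (σ := q1) (q := q) (by positivity) hq1 hq
  -- e sequence
  have he : ∀ a : ℤ → ℝ≥0∞, ∑' l : ℤ, ((2:ℝ≥0∞) ^ ((l:ℝ) / q) * lev a l) ^ q ≤ C0 * ∑' k, a k ^ q := by
    intro a
    refine le_trans (le_of_eq ?_) (hlev a)
    apply tsum_congr; intro l
    rw [ENNReal.mul_rpow_of_nonneg _ _ hq.le, ← ENNReal.rpow_mul, zpow_eq_rpow2,
      div_mul_cancel₀ _ hq.ne']
  have hpart2 : ∃ C2 : ℝ≥0∞, C2 ≠ ∞ ∧ ∀ a : ℤ → ℝ≥0∞, ∑' k, a k ^ q ≠ ∞ →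
      ∑' m : ℤ, ((2:ℝ≥0∞) ^ (m * ((1 - η) * θ)) *
          ellq q2 (fun k => if lev a m < a k then 0 else a k)) ^ q ≤ C2 * ∑' k, a k ^ q := by
    by_cases h2 : q2 = ∞
    · refine ⟨C0, hC0, fun a _ => le_trans (ENNReal.tsum_le_tsum fun m => ?_) (he a)⟩
      apply ENNReal.rpow_le_rpow _ hq.le
      have : (m:ℝ) * ((1 - η) * θ) = m / q := by
        have : (m:ℝ)/q = m * (1/q) := by ring
        rw [this, hdef, hθ, hQ2i, if_pos h2]; ring
      rw [this]
      gcongr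
      simp only [ellq, if_pos h2]
      refine iSup_le fun k => ?_
      split_ifs with h
      · exact zero_le
      · exact not_lt.1 h
    · have hQ : 0 < q2.toReal := ENNReal.toReal_pos (by rintro rfl; simp at hqq2) h2
      set r := q2.toReal with hr
      have hQi : Q2i = 1 / r := by rw [hQ2i, if_neg h2]
      obtain ⟨C3, hC3, hg3⟩ := gconv_sum (δ := (1 - η) * r * θ) (σ := r) (q := q)
        (by have : 0 < 1 - η := by linarith
            positivity) hQ hq
      have e2 : r / q = (1 - η) * r * θ + 1 := by
        have : r / q = r * (1/q) := by ring
        rw [this, hdef, hθ, hQi]; field_simp; ring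
      refine ⟨((2:ℝ≥0∞) ^ (1/r)) ^ q * (C3 * C0), ENNReal.mul_ne_top
        (ENNReal.rpow_ne_top_of_nonneg hq.le (two_rpow_ne_top _)) (ENNReal.mul_ne_top hC3 hC0),
        fun a ha => ?_⟩
      have key : ∀ m : ℤ, (2:ℝ≥0∞) ^ (m * ((1 - η) * θ)) *
          ellq q2 (fun k => if lev a m < a k then 0 else a k) ≤ (2:ℝ≥0∞) ^ (1/r) *
          (∑' i : ℕ, (2:ℝ≥0∞) ^ (-((1 - η) * r * θ * i)) *
            ((2:ℝ≥0∞) ^ (((m + (i:ℤ) : ℤ):ℝ) / q) * lev a (m + (i:ℤ))) ^ r) ^ (1/r) := by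
        intro m
        simp only [ellq, if_neg h2, ← hr]
        have hB : (2:ℝ≥0∞) ^ (1/r) = ((2:ℝ≥0∞) ^ (1:ℝ)) ^ (1/r) := by
          rw [ENNReal.rpow_one]
        have hA : (2:ℝ≥0∞) ^ (m * ((1 - η) * θ)) = ((2:ℝ≥0∞) ^ (m * ((1 - η) * θ) * r)) ^ (1/r) := by
          rw [← ENNReal.rpow_mul]; congr 1; field_simp
        rw [hA, hB, ← ENNReal.mul_rpow_of_nonneg _ _ (by positivity),
          ← ENNReal.mul_rpow_of_nonneg _ _ (by positivity)]
        apply ENNReal.rpow_le_rpow _ (by positivity)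
        refine (mul_le_mul_right (tail_le a hq ha hQ m) _).trans (le_of_eq ?_)
        rw [← ENNReal.tsum_mul_left, ← ENNReal.tsum_mul_left]
        apply tsum_congr; intro i
        rw [ENNReal.mul_rpow_of_nonneg _ _ hQ.le, ← ENNReal.rpow_mul, zpow_eq_rpow2]
        apply two_comb
        push_cast
        have : ((m:ℝ) + i) / q * r = (m + i) * (r / q) := by ring
        rw [this, e2]; ring
      calc _ ≤ ∑' m : ℤ, ((2:ℝ≥0∞) ^ (1/r) *
          (∑' i : ℕ, (2:ℝ≥0∞) ^ (-((1 - η) * r * θ * i)) *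
            ((2:ℝ≥0∞) ^ (((m + (i:ℤ) : ℤ):ℝ) / q) * lev a (m + (i:ℤ))) ^ r) ^ (1/r)) ^ q :=
            ENNReal.tsum_le_tsum fun m => ENNReal.rpow_le_rpow (key m) hq.le
        _ ≤ ((2:ℝ≥0∞) ^ (1/r)) ^ q * (C3 * ∑' l : ℤ, ((2:ℝ≥0∞) ^ ((l:ℝ) / q) * lev a l) ^ q) := by
            simp_rw [ENNReal.mul_rpow_of_nonneg ((2:ℝ≥0∞) ^ (1/r)) _ hq.le]
            rw [ENNReal.tsum_mul_left]
            gcongr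
            exact hg3 (fun i => (i:ℤ)) (fun l => (2:ℝ≥0∞) ^ ((l:ℝ) / q) * lev a l)
        _ ≤ ((2:ℝ≥0∞) ^ (1/r)) ^ q * (C3 * (C0 * ∑' k, a k ^ q)) := by
            gcongr; exact he a
        _ = _ := by ring
  obtain ⟨C2, hC2, hp2⟩ := hpart2
  refine ⟨θ, hθ0, ((2:ℝ≥0∞) ^ (1/q)) ^ q * (C1 * C0) + C2, ENNReal.add_ne_top.2 ⟨ENNReal.mul_ne_top
        (ENNReal.rpow_ne_top_of_nonneg hq.le (two_rpow_ne_top _)) (ENNReal.mul_ne_top hC1 hC0), hC2⟩,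
        fun a ha => ⟨fun m => (lev_fin a m).toFinset, ?_, ?_⟩⟩
  · simp only [Finite.mem_toFinset, mem_ofPred_eq]
    have key : ∀ m : ℤ, (2:ℝ≥0∞) ^ (-(m * (η * θ))) *
          ellq (ENNReal.ofReal q1) (fun k => if lev a m < a k then a k else 0) ≤ (2:ℝ≥0∞) ^ (1/q) *
          (∑' i : ℕ, (2:ℝ≥0∞) ^ (-(η * q1 * θ * i)) *
            ((2:ℝ≥0∞) ^ (((m + (-(i:ℤ) - 1) : ℤ):ℝ) / q) * lev a (m + (-(i:ℤ) - 1))) ^ q1) ^ (1/q1) := by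
        intro m
        rw [ellq_ofReal _ hq1]
        have hA : (2:ℝ≥0∞) ^ (-(m * (η * θ))) = ((2:ℝ≥0∞) ^ (-(m * (η * θ)) * q1)) ^ (1/q1) := by
          rw [← ENNReal.rpow_mul]; congr 1; field_simp
        have hB : (2:ℝ≥0∞) ^ (1/q) = ((2:ℝ≥0∞) ^ (q1/q)) ^ (1/q1) := by
          rw [← ENNReal.rpow_mul]; congr 1; field_simp
        rw [hA, hB, ← ENNReal.mul_rpow_of_nonneg _ _ (by positivity),
          ← ENNReal.mul_rpow_of_nonneg _ _ (by positivity)]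
        apply ENNReal.rpow_le_rpow _ (by positivity)
        refine (mul_le_mul_right (head_le a hq1 m) _).trans (le_of_eq ?_)
        rw [← ENNReal.tsum_mul_left, ← ENNReal.tsum_mul_left]
        apply tsum_congr; intro i
        rw [ENNReal.mul_rpow_of_nonneg _ _ hq1.le, ← ENNReal.rpow_mul, zpow_eq_rpow2]
        rw [show m - (i:ℤ) - 1 = m + (-(i:ℤ) - 1) by ring]
        apply two_comb
        push_cast
        have : ((m:ℝ) + (-i - 1)) / q * q1 = (m - i) * (q1 / q) - q1 / q := by ring
        rw [this, e1]; ring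
    calc _ ≤ ∑' m : ℤ, ((2:ℝ≥0∞) ^ (1/q) *
          (∑' i : ℕ, (2:ℝ≥0∞) ^ (-(η * q1 * θ * i)) *
            ((2:ℝ≥0∞) ^ (((m + (-(i:ℤ) - 1) : ℤ):ℝ) / q) * lev a (m + (-(i:ℤ) - 1))) ^ q1) ^ (1/q1)) ^ q :=
            ENNReal.tsum_le_tsum fun m => ENNReal.rpow_le_rpow (key m) hq.le
        _ ≤ ((2:ℝ≥0∞) ^ (1/q)) ^ q * (C1 * ∑' l : ℤ, ((2:ℝ≥0∞) ^ ((l:ℝ) / q) * lev a l) ^ q) := by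
            simp_rw [ENNReal.mul_rpow_of_nonneg ((2:ℝ≥0∞) ^ (1/q)) _ hq.le]
            rw [ENNReal.tsum_mul_left]
            gcongr
            exact hg1 (fun i => (-(i:ℤ) - 1)) (fun l => (2:ℝ≥0∞) ^ ((l:ℝ) / q) * lev a l)
        _ ≤ ((2:ℝ≥0∞) ^ (1/q)) ^ q * (C1 * (C0 * ∑' k, a k ^ q)) := by
            gcongr; exact he a
        _ ≤ _ := by
            rw [add_mul, ← mul_assoc, ← mul_assoc, ← mul_assoc]; exact le_self_add
  · simp only [Finite.mem_toFinset, mem_ofPred_eq]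
    refine (hp2 a ha).trans ?_
    gcongr
    exact le_add_self


/-- distance to the complement -/
def dF {n : ℕ} (Ω : Set (Euc n)) (z : Euc n) : ℝ := Metric.infDist z Ωᶜ

/-- the ratio `d / (d + dist x z)` -/
def aF {n : ℕ} (Ω : Set (Euc n)) (x z : Euc n) : ℝ := dF Ω z / (dF Ω z + dist x z)

/-- auxiliary function dominated in `L^1` by the measure of `Ω` -/
def hF {n : ℕ} (Ω : Set (Euc n)) (x : Euc n) : ℝ≥0∞ :=
  ∫⁻ z in Ω, ENNReal.ofReal (aF Ω x z ^ (n+1) / dF Ω z ^ n)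

lemma dF_nonneg {n : ℕ} (Ω : Set (Euc n)) (z : Euc n) : 0 ≤ dF Ω z := Metric.infDist_nonneg

lemma dF_cont {n : ℕ} (Ω : Set (Euc n)) : Continuous (dF Ω) := Metric.continuous_infDist_pt _

lemma dF_le {n : ℕ} (Ω : Set (Euc n)) (x y : Euc n) : dF Ω x ≤ dF Ω y + dist x y :=
  Metric.infDist_le_infDist_add_dist

lemma dF_le_dist {n : ℕ} {Ω : Set (Euc n)} {x : Euc n} (hx : x ∉ Ω) (z : Euc n) : dF Ω z ≤ dist x z := by
  rw [dist_comm]; exact Metric.infDist_le_dist_of_mem hx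

lemma dF_pos {n : ℕ} {Ω : Set (Euc n)} (ho : IsOpen Ω) (hne : Ωᶜ.Nonempty) {z : Euc n} (hz : z ∈ Ω) :
    0 < dF Ω z := by
  have := (ho.isClosed_compl.notMem_iff_infDist_pos hne (x := z)).1 (by simpa using hz)
  exact this

lemma mem_of_dF_pos {n : ℕ} {Ω : Set (Euc n)} {z : Euc n} (hz : 0 < dF Ω z) : z ∈ Ω := by
  by_contra h
  have : dF Ω z = 0 := Metric.infDist_zero_of_mem h
  linarith

lemma aF_nonneg {n : ℕ} (Ω : Set (Euc n)) (x z : Euc n) : 0 ≤ aF Ω x z :=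
  div_nonneg (dF_nonneg _ _) (add_nonneg (dF_nonneg _ _) dist_nonneg)

lemma aF_meas {n : ℕ} (Ω : Set (Euc n)) :
    Measurable (fun p : Euc n × Euc n => ENNReal.ofReal (aF Ω p.1 p.2 ^ (n+1) / dF Ω p.2 ^ n)) := by
  have h1 : Measurable (fun p : Euc n × Euc n => dF Ω p.2) :=
    ((dF_cont Ω).comp continuous_snd).measurable
  have h2 : Measurable (fun p : Euc n × Euc n => dist p.1 p.2) := by fun_prop
  unfold aF
  exact (((h1.div (h1.add h2)).pow_const _).div (h1.pow_const _)).ennreal_ofReal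

lemma aF_meas' {n : ℕ} (Ω : Set (Euc n)) (x : Euc n) :
    Measurable (fun z : Euc n => ENNReal.ofReal (aF Ω x z ^ (n+1) / dF Ω z ^ n)) := by
  have h1 : Measurable (dF Ω) := (dF_cont Ω).measurable
  have h2 : Measurable (fun z : Euc n => dist x z) := by fun_prop
  unfold aF
  exact (((h1.div (h1.add h2)).pow_const _).div (h1.pow_const _)).ennreal_ofReal

lemma hF_meas {n : ℕ} (Ω : Set (Euc n)) : Measurable (hF Ω) :=
  (aF_meas Ω).lintegral_prod_right'

lemma lint_scale {n : ℕ} (g : Euc n → ℝ≥0∞) (hg : Measurable g) {d : ℝ} (hd : 0 < d) (z : Euc n) :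
    ∫⁻ x, g (d⁻¹ • (x - z)) = ENNReal.ofReal (d ^ n) * ∫⁻ x, g x := by
  rw [lintegral_sub_right_eq_self (fun x => g (d⁻¹ • x)) z]
  have h := Measure.map_addHaar_smul (volume : Measure (Euc n)) (inv_ne_zero hd.ne')
  rw [← lintegral_map hg (measurable_const_smul (d⁻¹)), h, lintegral_smul_measure, smul_eq_mul]
  congr 2
  simp only [finrank_euclideanSpace, Fintype.card_fin]
  rw [inv_pow, inv_inv, abs_of_pos (by positivity)]

lemma vol_ball {n : ℕ} (z : Euc n) {r : ℝ} (hr : 0 < r) :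
    volume (Metric.ball z r) = ENNReal.ofReal (r ^ n) * volume (Metric.ball (0 : Euc n) 1) := by
  have := Measure.addHaar_ball_of_pos (volume : Measure (Euc n)) z hr
  simpa using this

lemma H1 (n : ℕ) : ∃ C : ℝ≥0∞, C ≠ ∞ ∧ ∀ Ω : Set (Euc n), IsOpen Ω → Ωᶜ.Nonempty →
    ∫⁻ x, hF Ω x ≤ C * volume Ω := by
  refine ⟨∫⁻ x : Euc n, ENNReal.ofReal ((1 + ‖x‖) ^ (-((n:ℝ)+1))),
    (finite_integral_one_add_norm (by simp)).ne, fun Ω ho hne => ?_⟩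
  unfold hF
  rw [lintegral_lintegral_swap (aF_meas Ω).aemeasurable, ← setLIntegral_const]
  refine setLIntegral_mono' ho.measurableSet fun z hz => ?_
  have hd := dF_pos ho hne hz
  set d := dF Ω z with hdd
  have hg : Measurable (fun x : Euc n => ENNReal.ofReal ((1 + ‖x‖) ^ (-((n:ℝ)+1)))) := by fun_prop
  have e := lint_scale _ hg hd z
  have e2 : ∀ x : Euc n, ENNReal.ofReal (aF Ω x z ^ (n+1) / d ^ n) =
      ENNReal.ofReal ((d^n)⁻¹) * ENNReal.ofReal ((1 + ‖d⁻¹ • (x - z)‖) ^ (-((n:ℝ)+1))) := by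
    intro x
    rw [← ENNReal.ofReal_mul (by positivity)]
    congr 1
    have hpos : 0 < 1 + ‖d⁻¹ • (x - z)‖ := by positivity
    have : (1 + ‖d⁻¹ • (x - z)‖) ^ (-((n:ℝ)+1)) = ((1 + ‖d⁻¹ • (x - z)‖) ^ (n+1))⁻¹ := by
      rw [Real.rpow_neg hpos.le]; norm_cast
    rw [this, norm_smul, Real.norm_eq_abs, abs_of_pos (by positivity : 0 < d⁻¹)]
    have h3 : aF Ω x z = (1 + d⁻¹ * ‖x - z‖)⁻¹ := by
      unfold aF; rw [← hdd, dist_eq_norm]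
      have : 0 ≤ ‖x - z‖ := norm_nonneg _
      field_simp
    rw [h3, inv_pow]; ring
  simp_rw [e2]
  rw [lintegral_const_mul _ (by fun_prop), e, ← mul_assoc, ← ENNReal.ofReal_mul (by positivity),
    inv_mul_cancel₀ (by positivity), ENNReal.ofReal_one, one_mul]

lemma H2 (n : ℕ) : ∃ C : ℝ≥0∞, C ≠ ∞ ∧ ∀ Ω : Set (Euc n), IsOpen Ω → Ωᶜ.Nonempty →
    ∀ x z0, z0 ∈ Ω → ENNReal.ofReal (aF Ω x z0 ^ (n+1)) ≤ C * hF Ω x := by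
  set V := volume (Metric.ball (0 : Euc n) 1) with hV
  set c : ℝ := (1/4)^(n+1) * (1/3)^n with hc
  have hcpos : 0 < c := by positivity
  have hV0 : V ≠ 0 := (Metric.measure_ball_pos _ _ one_pos).ne'
  have hVt : V ≠ ∞ := measure_ball_lt_top.ne
  refine ⟨(ENNReal.ofReal c * V)⁻¹, ?_, fun Ω ho hne x z0 hz0 => ?_⟩
  · rw [ne_eq, ENNReal.inv_eq_top]; exact mul_ne_zero (by simpa using hcpos) hV0
  have hd := dF_pos ho hne hz0
  set d := dF Ω z0 with hdd
  have key : ENNReal.ofReal c * V * ENNReal.ofReal (aF Ω x z0 ^ (n+1)) ≤ hF Ω x := by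
    have hball : ∀ z ∈ Metric.ball z0 (d/2), d/2 ≤ dF Ω z ∧ dF Ω z ≤ 3*d/2 := by
      intro z hz
      rw [Metric.mem_ball] at hz
      have h1 := dF_le Ω z z0; have h2 := dF_le Ω z0 z
      rw [dist_comm] at h2
      constructor <;> linarith
    have hsub : Metric.ball z0 (d/2) ⊆ Ω := fun z hz =>
      mem_of_dF_pos (by have := (hball z hz).1; linarith)
    calc _ = ∫⁻ z in Metric.ball z0 (d/2), ENNReal.ofReal ((aF Ω x z0 / 4)^(n+1) / (3*d/2)^n) := by
          rw [setLIntegral_const, vol_ball z0 (by linarith : 0 < d/2)] 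
          rw [← hV, ← mul_assoc, ← ENNReal.ofReal_mul (by have := aF_nonneg Ω x z0; positivity)]
          rw [mul_right_comm, ← ENNReal.ofReal_mul hcpos.le]
          congr 2
          have e1 : (3*d/2)^n = 3^n * (d/2)^n := by rw [← mul_pow]; congr 1; ring
          have e2 : (d/2)^n ≠ 0 := by positivity
          rw [hc, e1, one_div_pow, one_div_pow, div_pow (aF Ω x z0)]
          field_simp
      _ ≤ ∫⁻ z in Metric.ball z0 (d/2), ENNReal.ofReal (aF Ω x z ^ (n+1) / dF Ω z ^ n) := by
          refine setLIntegral_mono' measurableSet_ball fun z hz => ?_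
          apply ENNReal.ofReal_le_ofReal
          obtain ⟨h1, h2⟩ := hball z hz
          have h0 : 0 < dF Ω z := by linarith
          have h3 : aF Ω x z0 / 4 ≤ aF Ω x z := by
            unfold aF; rw [← hdd]
            have ht := dist_triangle x z0 z
            rw [Metric.mem_ball, dist_comm] at hz
            have hx : 0 ≤ dist x z0 := dist_nonneg
            have hx' : 0 ≤ dist x z := dist_nonneg
            rw [div_div, div_le_div_iff₀ (by positivity) (by positivity)]
            nlinarith
          have := aF_nonneg Ω x z0
          have := aF_nonneg Ω x z
          gcongr
      _ ≤ _ := lintegral_mono_set hsub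
  rw [mul_comm _ (hF Ω x), ← div_eq_mul_inv, ENNReal.le_div_iff_mul_le, mul_comm]
  · exact key
  · left; exact mul_ne_zero (by simpa using hcpos) hV0
  · left; exact mul_ne_top ofReal_ne_top hVt

lemma H3 (n τ : ℕ) : ∃ C : ℝ≥0∞, C ≠ ∞ ∧ ∀ Ω : Set (Euc n), IsOpen Ω → Ωᶜ.Nonempty →
    ∀ x, ∫⁻ z in Ω, ENNReal.ofReal (aF Ω x z ^ ((n+1)*(τ+1)) / dF Ω z ^ n) ≤ C * hF Ω x ^ (τ+1) := by
  obtain ⟨C, hC, h⟩ := H2 n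
  refine ⟨C^τ, pow_ne_top hC, fun Ω ho hne x => ?_⟩
  calc _ ≤ ∫⁻ z in Ω, (C * hF Ω x)^τ * ENNReal.ofReal (aF Ω x z ^ (n+1) / dF Ω z ^ n) := by
        refine setLIntegral_mono' ho.measurableSet fun z hz => ?_
        have ha := aF_nonneg Ω x z
        have hd := dF_nonneg Ω z
        have : aF Ω x z ^ ((n+1)*(τ+1)) / dF Ω z ^ n =
          (aF Ω x z ^ (n+1))^τ * (aF Ω x z ^ (n+1) / dF Ω z ^ n) := by
          rw [pow_mul, pow_succ, mul_div_assoc]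
        rw [this, ENNReal.ofReal_mul (by positivity), ENNReal.ofReal_pow (by positivity)]
        gcongr
        exact h Ω ho hne x z hz
    _ = (C * hF Ω x)^τ * hF Ω x := by
        rw [lintegral_const_mul _ (aF_meas' Ω x), hF]
    _ = _ := by rw [mul_pow, pow_succ, mul_assoc]



/-- level sets of the maximal function with aperture `A` -/
def OmA {n : ℕ} (ψ f : Euc n → ℝ) (A lam : ℝ) : Set (Euc n) :=
  {x | ∃ y t, 0 < t ∧ dist x y < A * t ∧ lam < |convAt ψ f t y|}

lemma OmA_open {n : ℕ} (ψ f : Euc n → ℝ) (A lam : ℝ) : IsOpen (OmA ψ f A lam) := by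
  have : OmA ψ f A lam = ⋃ (y) (t) (_ : 0 < t ∧ lam < |convAt ψ f t y|), Metric.ball y (A * t) := by
    ext x; simp only [OmA, mem_iUnion, Metric.mem_ball, Set.mem_ofPred_eq]
    constructor
    · rintro ⟨y, t, h1, h2, h3⟩; exact ⟨y, t, ⟨h1, h3⟩, h2⟩
    · rintro ⟨y, t, ⟨h1, h3⟩, h2⟩; exact ⟨y, t, h1, h2, h3⟩
  rw [this]
  exact isOpen_iUnion fun y => isOpen_iUnion fun t => isOpen_iUnion fun _ => Metric.isOpen_ball

lemma OmA_one {n : ℕ} (ψ f : Euc n → ℝ) {lam : ℝ} (hl : 0 ≤ lam) :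
    OmA ψ f 1 lam = {x | ENNReal.ofReal lam < ntMax ψ f x} := by
  ext x
  simp only [OmA, ntMax, Set.mem_ofPred_eq, lt_iSup_iff, one_mul]
  constructor
  · rintro ⟨y, t, h1, h2, h3⟩
    exact ⟨y, t, h1, h2, (ENNReal.ofReal_lt_ofReal_iff_of_nonneg hl).2 h3⟩
  · rintro ⟨y, t, h1, h2, h3⟩
    exact ⟨y, t, h1, h2, (ENNReal.ofReal_lt_ofReal_iff_of_nonneg hl).1 h3⟩

lemma OmA_anti {n : ℕ} (ψ f : Euc n → ℝ) (A : ℝ) {l m : ℝ} (h : l ≤ m) : OmA ψ f A m ⊆ OmA ψ f A l := by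
  rintro x ⟨y, t, h1, h2, h3⟩; exact ⟨y, t, h1, h2, h.trans_lt h3⟩

lemma compl_ne {n : ℕ} (hn : 1 ≤ n) {Ω : Set (Euc n)} (h : volume Ω ≠ ∞) : Ωᶜ.Nonempty := by
  rw [Set.nonempty_compl]
  rintro rfl
  have : Nonempty (Fin n) := ⟨⟨0, hn⟩⟩
  have : Nontrivial (Euc n) := inferInstance
  have : NoncompactSpace (Euc n) := NormedSpace.noncompactSpace ℝ _
  exact h (measure_univ_of_isAddLeftInvariant _)

lemma hF_ge {n : ℕ} : ∃ C : ℝ≥0∞, C ≠ ∞ ∧ ∀ Ω : Set (Euc n), IsOpen Ω → Ωᶜ.Nonempty →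
    ∀ x ∈ Ω, 1 ≤ C * hF Ω x := by
  obtain ⟨C, hC, h⟩ := H2 n
  refine ⟨C, hC, fun Ω ho hne x hx => ?_⟩
  have h1 := h Ω ho hne x x hx
  have := dF_pos ho hne hx
  have e : aF Ω x x = 1 := by unfold aF; rw [dist_self, add_zero, div_self this.ne']
  simpa [e] using h1

lemma aperture {n : ℕ} (hn : 1 ≤ n) {A : ℝ} (hA : 0 < A) : ∃ C : ℝ≥0∞, C ≠ ∞ ∧
    ∀ (ψ f : Euc n → ℝ) (lam : ℝ), volume (OmA ψ f 1 lam) ≠ ∞ →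
      volume (OmA ψ f A lam) ≤ C * volume (OmA ψ f 1 lam) := by
  obtain ⟨C1, hC1, h1⟩ := H1 n
  obtain ⟨C2, hC2, h2⟩ := H2 n
  set c := ENNReal.ofReal ((1/(1+A))^(n+1)) with hc
  have hc0 : c ≠ 0 := by rw [hc]; simp only [ne_eq, ENNReal.ofReal_eq_zero, not_le]; positivity
  have hct : c ≠ ∞ := ofReal_ne_top
  refine ⟨c⁻¹ * (C2 * C1), mul_ne_top (inv_ne_top.2 hc0) (mul_ne_top hC2 hC1), fun ψ f lam hfin => ?_⟩
  set Ω := OmA ψ f 1 lam with hΩ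
  have ho : IsOpen Ω := OmA_open _ _ _ _
  have hne := compl_ne hn hfin
  have hsub : OmA ψ f A lam ⊆ {x | c ≤ C2 * hF Ω x} := by
    rintro x ⟨y, t, ht, hxy, hlam⟩
    have hball : ∀ z, dist y z < t → z ∈ Ω := fun z hz => ⟨y, t, ht, by rwa [one_mul, dist_comm], hlam⟩
    have hd : t ≤ dF Ω y := (Metric.le_infDist hne).2 fun z hz => by
      by_contra hlt; exact hz (hball z (not_le.1 hlt))
    refine le_trans ?_ (h2 Ω ho hne x y (hball y (by simpa using ht)))
    refine ENNReal.ofReal_le_ofReal ?_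
    gcongr
    unfold aF
    have : 0 ≤ dist x y := dist_nonneg
    rw [div_le_div_iff₀ (by positivity) (by linarith)]
    nlinarith
  have hm := mul_meas_ge_le_lintegral (μ := volume) ((hF_meas Ω).const_mul C2) c
  rw [lintegral_const_mul _ (hF_meas Ω)] at hm
  calc volume (OmA ψ f A lam) ≤ volume {x | c ≤ C2 * hF Ω x} := measure_mono hsub
    _ = c⁻¹ * (c * volume {x | c ≤ C2 * hF Ω x}) := by
        rw [← mul_assoc, ENNReal.inv_mul_cancel hc0 hct, one_mul]
    _ ≤ c⁻¹ * (C2 * (C1 * volume Ω)) := mul_le_mul_right (hm.trans (mul_le_mul_right (h1 Ω ho hne) _)) _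
    _ = _ := by ring



/-- plain convolution -/
def cv {n : ℕ} (f g : Euc n → ℝ) (y : Euc n) : ℝ := ∫ z, f z * g (y - z)

/-- dilation preserving the integral -/
def scl {n : ℕ} (g : Euc n → ℝ) (t : ℝ) (x : Euc n) : ℝ := (t ^ n)⁻¹ * g (t⁻¹ • x)

lemma convAt_eq {n : ℕ} (ψ f : Euc n → ℝ) (t : ℝ) (y : Euc n) : convAt ψ f t y = cv f (scl ψ t) y := rfl

lemma cv_eq {n : ℕ} (f g : Euc n → ℝ) :
    cv f g = convolution f g (ContinuousLinearMap.mul ℝ ℝ) volume := rfl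

/-- continuous with compact support -/
def CC {n : ℕ} (g : Euc n → ℝ) : Prop := Continuous g ∧ HasCompactSupport g

lemma CC.bdd {n : ℕ} {g : Euc n → ℝ} (hg : CC g) : ∃ C, 0 < C ∧ ∀ x, |g x| ≤ C := by
  obtain ⟨C, hC⟩ := hg.1.bounded_above_of_compact_support hg.2
  exact ⟨max C 1, by positivity, fun x => (hC x).trans (le_max_left _ _)⟩

lemma CC.integrable {n : ℕ} {g : Euc n → ℝ} (hg : CC g) : Integrable g volume :=
  hg.1.integrable_of_hasCompactSupport hg.2

lemma CC.li {n : ℕ} {g : Euc n → ℝ} (hg : CC g) : LocallyIntegrable g volume :=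
  hg.1.locallyIntegrable

lemma CC.supp {n : ℕ} {g : Euc n → ℝ} (hg : CC g) : ∃ B : ℝ, 1 ≤ B ∧ ∀ x, g x ≠ 0 → ‖x‖ ≤ B := by
  obtain ⟨B, hB⟩ := hg.2.isCompact.isBounded.exists_norm_le
  exact ⟨max B 1, le_max_right _ _, fun x hx =>
    (hB x (subset_tsupport _ hx)).trans (le_max_left _ _)⟩

lemma CC.scl {n : ℕ} {g : Euc n → ℝ} (hg : CC g) {t : ℝ} (ht : 0 < t) : CC (scl g t) := by
  refine ⟨continuous_const.mul (hg.1.comp (continuous_const_smul _)), ?_⟩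
  have h := hg.2.comp_homeomorph (Homeomorph.smulOfNeZero t⁻¹ (inv_ne_zero ht.ne'))
  exact h.mul_left

lemma CC.add {n : ℕ} {g h : Euc n → ℝ} (hg : CC g) (hh : CC h) : CC (fun x => g x + h x) :=
  ⟨hg.1.add hh.1, hg.2.add hh.2⟩

lemma CC.const_mul {n : ℕ} {g : Euc n → ℝ} (hg : CC g) (c : ℝ) : CC (fun x => c * g x) :=
  ⟨continuous_const.mul hg.1, hg.2.mul_left⟩

lemma CC.sub {n : ℕ} {g h : Euc n → ℝ} (hg : CC g) (hh : CC h) : CC (fun x => g x - h x) := by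
  have := hg.add (hh.const_mul (-1))
  simpa [sub_eq_add_neg] using this

lemma CC.sum {n : ℕ} {ι : Type*} (s : Finset ι) {g : ι → Euc n → ℝ} (hg : ∀ i ∈ s, CC (g i)) :
    CC (fun x => ∑ i ∈ s, g i x) := by
  classical
  induction s using Finset.induction_on with
  | empty => exact ⟨by simp only [Finset.sum_empty]; exact continuous_const, by simp only [Finset.sum_empty]; exact HasCompactSupport.zero⟩
  | insert a s ha ih =>
    simp only [Finset.sum_insert ha]
    exact (hg a (by simp)).add (ih fun i hi => hg i (by simp [hi]))

lemma CC.abs {n : ℕ} {g : Euc n → ℝ} (hg : CC g) : CC (fun x => |g x|) := by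
  refine ⟨hg.1.abs, ?_⟩
  exact hg.2.comp_left (g := fun r : ℝ => |r|) abs_zero

lemma CC.cv {n : ℕ} {g h : Euc n → ℝ} (hg : CC g) (hh : CC h) : CC (_root_.cv g h) := by
  rw [cv_eq]
  exact ⟨hh.2.continuous_convolution_right _ hg.li hh.1, hg.2.convolution _ hh.2⟩

lemma cv_exists {n : ℕ} {f g : Euc n → ℝ} (hf : LocallyIntegrable f volume) (hg : CC g) (y : Euc n) :
    Integrable (fun z => f z * g (y - z)) volume :=
  hg.2.convolutionExists_right (ContinuousLinearMap.mul ℝ ℝ) hf hg.1 y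

lemma cv_cont {n : ℕ} {f g : Euc n → ℝ} (hf : LocallyIntegrable f volume) (hg : CC g) :
    Continuous (cv f g) := by
  rw [cv_eq]; exact hg.2.continuous_convolution_right _ hf hg.1

lemma cv_li {n : ℕ} {f g : Euc n → ℝ} (hf : LocallyIntegrable f volume) (hg : CC g) :
    LocallyIntegrable (cv f g) volume := (cv_cont hf hg).locallyIntegrable

lemma cv_assoc {n : ℕ} {f g h : Euc n → ℝ} (hf : LocallyIntegrable f volume) (hg : CC g) (hh : CC h) (y : Euc n) :
    cv (cv f g) h y = cv f (cv g h) y := by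
  simp only [cv_eq]
  refine convolution_assoc _ _ _ _ (fun x y z => by simp [mul_assoc]) hf.aestronglyMeasurable
    hg.1.aestronglyMeasurable hh.1.aestronglyMeasurable
    (Filter.Eventually.of_forall fun y => cv_exists hf hg y)
    (Filter.Eventually.of_forall fun y => cv_exists hg.abs.li hh.abs y) ?_
  have h1 : CC (cv (fun x => |g x|) (fun x => |h x|)) := hg.abs.cv hh.abs
  have h2 : LocallyIntegrable (fun x => ‖f x‖) volume := fun x => (hf x).norm
  exact cv_exists h2 h1 y

lemma cv_sub_left {n : ℕ} {f f' g : Euc n → ℝ} (hf : LocallyIntegrable f volume)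
    (hf' : LocallyIntegrable f' volume) (hg : CC g) (y : Euc n) :
    cv (fun x => f x - f' x) g y = cv f g y - cv f' g y := by
  unfold cv; rw [← integral_sub (cv_exists hf hg y) (cv_exists hf' hg y)]
  simp only [sub_mul]

lemma cv_add_left {n : ℕ} {f f' g : Euc n → ℝ} (hf : LocallyIntegrable f volume)
    (hf' : LocallyIntegrable f' volume) (hg : CC g) (y : Euc n) :
    cv (fun x => f x + f' x) g y = cv f g y + cv f' g y := by
  unfold cv; rw [← integral_add (cv_exists hf hg y) (cv_exists hf' hg y)]
  simp only [add_mul]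

lemma cv_sub_right {n : ℕ} {f g h : Euc n → ℝ} (hf : LocallyIntegrable f volume)
    (hg : CC g) (hh : CC h) (y : Euc n) :
    cv f (fun x => g x - h x) y = cv f g y - cv f h y := by
  unfold cv; rw [← integral_sub (cv_exists hf hg y) (cv_exists hf hh y)]
  simp only [mul_sub]

lemma cv_add_right {n : ℕ} {f g h : Euc n → ℝ} (hf : LocallyIntegrable f volume)
    (hg : CC g) (hh : CC h) (y : Euc n) :
    cv f (fun x => g x + h x) y = cv f g y + cv f h y := by
  unfold cv; rw [← integral_add (cv_exists hf hg y) (cv_exists hf hh y)]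
  simp only [mul_add]

lemma cv_sum_left {n : ℕ} {ι : Type*} (s : Finset ι) {f : ι → Euc n → ℝ} {g : Euc n → ℝ}
    (hf : ∀ i ∈ s, LocallyIntegrable (f i) volume) (hg : CC g) (y : Euc n) :
    cv (fun x => ∑ i ∈ s, f i x) g y = ∑ i ∈ s, cv (f i) g y := by
  unfold cv; rw [← integral_finsetSum _ (fun i hi => cv_exists (hf i hi) hg y)]
  simp only [Finset.sum_mul]

lemma cv_sum_right {n : ℕ} {ι : Type*} (s : Finset ι) {f : Euc n → ℝ} {g : ι → Euc n → ℝ}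
    (hf : LocallyIntegrable f volume) (hg : ∀ i ∈ s, CC (g i)) (y : Euc n) :
    cv f (fun x => ∑ i ∈ s, g i x) y = ∑ i ∈ s, cv f (g i) y := by
  unfold cv; rw [← integral_finsetSum _ (fun i hi => cv_exists hf (hg i hi) y)]
  simp only [Finset.mul_sum]

lemma cv_const_mul_right {n : ℕ} (f g : Euc n → ℝ) (c : ℝ) (y : Euc n) :
    cv f (fun x => c * g x) y = c * cv f g y := by
  unfold cv; rw [← integral_const_mul]; congr 1; ext z; ring

lemma cv_comm {n : ℕ} (f g : Euc n → ℝ) (y : Euc n) : cv f g y = cv g f y := by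
  unfold cv
  rw [← integral_sub_left_eq_self (fun z => g z * f (y - z)) volume y]
  congr 1; ext z; rw [show y - (y - z) = z by abel, mul_comm]

lemma cv_congr_left {n : ℕ} {f f' : Euc n → ℝ} (g : Euc n → ℝ) (h : f =ᵐ[volume] f') (y : Euc n) :
    cv f g y = cv f' g y := by
  unfold cv; refine integral_congr_ae ?_
  filter_upwards [h] with z hz; rw [hz]

/-- bound by sup times `L^1` -/
lemma cv_le {n : ℕ} {f g : Euc n → ℝ} {c : ℝ} (hg : Integrable g volume) (y : Euc n)
    (h : ∀ᵐ z, g (y - z) ≠ 0 → |f z| ≤ c) : |cv f g y| ≤ c * ∫ x, |g x| := by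
  have e : c * ∫ x, |g x| = ∫ z, c * |g (y - z)| := by
    rw [integral_const_mul, integral_sub_left_eq_self (fun z => |g z|) volume y]
  rw [e, ← Real.norm_eq_abs]
  refine norm_integral_le_of_norm_le ((hg.comp_sub_left y).abs.const_mul c) ?_
  filter_upwards [h] with z hz
  rw [norm_mul, Real.norm_eq_abs, Real.norm_eq_abs]
  by_cases h0 : g (y - z) = 0
  · simp [h0]
  · exact mul_le_mul_of_nonneg_right (hz h0) (abs_nonneg _)

lemma integral_scl {n : ℕ} (g : Euc n → ℝ) {t : ℝ} (ht : 0 < t) : ∫ x, scl g t x = ∫ x, g x := by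
  unfold scl
  rw [integral_const_mul, Measure.integral_comp_smul]
  simp only [finrank_euclideanSpace, Fintype.card_fin, smul_eq_mul]
  rw [inv_pow, inv_inv, abs_of_pos (by positivity), ← mul_assoc, inv_mul_cancel₀ (by positivity), one_mul]

lemma abs_scl {n : ℕ} (g : Euc n → ℝ) {t : ℝ} (ht : 0 < t) (x : Euc n) : |scl g t x| = scl (fun x => |g x|) t x := by
  unfold scl; rw [abs_mul, abs_of_pos (by positivity : 0 < (t^n)⁻¹)]

lemma scl_scl {n : ℕ} (g : Euc n → ℝ) (s t : ℝ) (x : Euc n) : scl (scl g s) t x = scl g (s * t) x := by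
  unfold scl; rw [smul_smul, mul_inv, mul_pow, mul_inv]; ring

lemma scl_supp {n : ℕ} {g : Euc n → ℝ} {B : ℝ} (hB : ∀ x, g x ≠ 0 → ‖x‖ ≤ B) {t : ℝ} (ht : 0 < t)
    (x : Euc n) (hx : scl g t x ≠ 0) : ‖x‖ ≤ B * t := by
  have := hB _ (right_ne_zero_of_mul hx)
  rw [norm_smul, Real.norm_eq_abs, abs_of_pos (by positivity), inv_mul_eq_div, div_le_iff₀ ht] at this
  exact this

lemma scl_le {n : ℕ} {g : Euc n → ℝ} {C : ℝ} (hC : ∀ x, |g x| ≤ C) {t : ℝ} (ht : 0 < t)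
    (x : Euc n) : |scl g t x| ≤ C * (t^n)⁻¹ := by
  rw [abs_scl _ ht]; unfold scl; rw [mul_comm]; gcongr; exact hC _

lemma cv_supp {n : ℕ} {g h : Euc n → ℝ} {a b : ℝ} (hg : ∀ x, g x ≠ 0 → ‖x‖ ≤ a)
    (hh : ∀ x, h x ≠ 0 → ‖x‖ ≤ b) (x : Euc n) (hx : cv g h x ≠ 0) : ‖x‖ ≤ a + b := by
  by_contra hlt
  apply hx
  unfold cv
  rw [integral_eq_zero_of_ae]
  refine Filter.Eventually.of_forall fun z => ?_
  by_contra hz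
  have h1 := hg z (left_ne_zero_of_mul hz)
  have h2 := hh _ (right_ne_zero_of_mul hz)
  have := norm_add_le z (x - z)
  rw [add_sub_cancel] at this
  linarith



lemma fd_deriv {E G : Type} [NormedAddCommGroup E] [NormedSpace ℝ E] [NormedAddCommGroup G]
    [NormedSpace ℝ G] (v : E) (m : ℕ) : ∀ (F : E → G) (F' : E → E →L[ℝ] G),
    (∀ y, HasFDerivAt F (F' y) y) → ∀ y, HasFDerivAt ((fwdDiff v)^[m] F) ((fwdDiff v)^[m] F' y) y := by
  induction m with
  | zero => intro F F' h y; simpa using h y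
  | succ m ih =>
    intro F F' h y
    rw [Function.iterate_succ_apply, Function.iterate_succ_apply]
    refine ih _ _ (fun y => ?_) y
    exact ((hasFDerivAt_comp_add_right v).2 (h (y + v))).sub (h y)

lemma fd_bound {E : Type} [NormedAddCommGroup E] [NormedSpace ℝ E] (m : ℕ) :
    ∀ (G : Type) [NormedAddCommGroup G] [NormedSpace ℝ G] (F : E → G),
    ContDiff ℝ (⊤ : ℕ∞) F → HasCompactSupport F →
    ∃ C : ℝ, 0 < C ∧ ∀ v y, ‖(fwdDiff v)^[m] F y‖ ≤ C * ‖v‖ ^ m := by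
  induction m with
  | zero =>
    intro G _ _ F hF hc
    obtain ⟨C, hC⟩ := hF.continuous.bounded_above_of_compact_support hc
    exact ⟨max C 1, by positivity, fun v y => by simpa using Or.inl (hC y)⟩
  | succ m ih =>
    intro G _ _ F hF hc
    obtain ⟨C, hC0, hC⟩ := ih (E →L[ℝ] G) (fderiv ℝ F)
      (hF.fderiv_right (m := ((⊤:ℕ∞) : WithTop ℕ∞)) (by simp)) (hc.fderiv ℝ)
    refine ⟨C, hC0, fun v y => ?_⟩
    have hd : ∀ y, HasFDerivAt F (fderiv ℝ F y) y := fun y =>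
      (hF.differentiable (by simp)).differentiableAt.hasFDerivAt
    have hD := fd_deriv v m F _ hd
    rw [Function.iterate_succ_apply']
    have := Convex.norm_image_sub_le_of_norm_hasFDerivWithin_le (𝕜 := ℝ) (s := univ)
      (C := C * ‖v‖^m) (x := y) (y := y + v)
      (fun x _ => (hD x).hasFDerivWithinAt) (fun x _ => hC v x) convex_univ (mem_univ _) (mem_univ _)
    unfold fwdDiff
    refine this.trans ?_
    rw [add_sub_cancel_left, pow_succ, mul_assoc]

/-- coefficients -/
def kco (M i : ℕ) : ℝ := (-1) ^ i * (M.choose (i+1) : ℝ)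

lemma fd_sum {E : Type} [NormedAddCommGroup E] [NormedSpace ℝ E] (M : ℕ) (F : E → ℝ) (v y : E) :
    ∑ i ∈ Finset.range M, kco M i * F (y + ((i:ℝ)+1) • v) - F y = - ((-1)^M * (fwdDiff v)^[M] F y) := by
  rw [fwdDiff_iter_eq_sum_shift, Finset.mul_sum, Finset.sum_range_succ']
  simp only [neg_add]
  rw [← Finset.sum_neg_distrib, sub_eq_add_neg]
  congr 1
  · refine Finset.sum_congr rfl fun i hi => ?_
    have hi' : i + 1 ≤ M := Finset.mem_range.1 hi
    have e : ((-1:ℝ))^M = (-1)^(M-(i+1)) * (-1)^(i+1) := by rw [← pow_add]; congr 1; omega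
    have e2 : ((-1:ℝ))^(M-(i+1)) * (-1)^(M-(i+1)) = 1 := by rw [← mul_pow]; simp
    have e3 : ((i + 1 : ℕ) • v) = ((i:ℝ)+1) • v := by
      rw [← Nat.cast_smul_eq_nsmul ℝ]; push_cast; rfl
    rw [e3, zsmul_eq_mul, e]
    push_cast
    unfold kco
    rw [pow_succ]
    linear_combination (-(-1:ℝ)^i * (M.choose (i+1) : ℝ) * F (y + ((i:ℝ)+1) • v)) * e2
  · have e2 : ((-1:ℝ))^M * (-1)^M = 1 := by rw [← mul_pow]; simp
    simp only [Nat.sub_zero, Nat.choose_zero_right, zero_smul, add_zero, zsmul_eq_mul]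
    push_cast
    linear_combination (F y) * e2



/-- the reproducing kernel of order `M` -/
def Kn {n : ℕ} (ψ : Euc n → ℝ) (M : ℕ) (x : Euc n) : ℝ :=
  (∫ z, ψ z)⁻¹ * ∑ i ∈ Finset.range M, kco M i * scl ψ ((i:ℝ)+1) x

lemma Kn_CC {n : ℕ} {ψ : Euc n → ℝ} (hψ : CC ψ) (M : ℕ) : CC (Kn ψ M) :=
  CC.const_mul (CC.sum _ fun i _ => (hψ.scl (by positivity)).const_mul _) _

lemma kco_sum {M : ℕ} (hM : 1 ≤ M) : ∑ i ∈ Finset.range M, kco M i = 1 := by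
  have h := fd_sum (E := ℝ) M (fun _ => 1) 0 0
  obtain ⟨m, rfl⟩ : ∃ m, M = m + 1 := ⟨M - 1, by omega⟩
  rw [Function.iterate_succ_apply] at h
  have e : fwdDiff (0:ℝ) (fun _ : ℝ => (1:ℝ)) = fun _ => 0 := by ext; simp [fwdDiff]
  have e2 : fwdDiff (0:ℝ) (fun _ : ℝ => (0:ℝ)) = fun _ => 0 := by ext; simp [fwdDiff]
  rw [e, Function.iterate_fixed e2] at h
  simp only [mul_one, mul_zero, neg_zero] at h
  linarith

lemma Kn_int {n : ℕ} {ψ : Euc n → ℝ} (hψ : CC ψ) (hi : ∫ x, ψ x ≠ 0) {M : ℕ} (hM : 1 ≤ M) :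
    ∫ x, Kn ψ M x = 1 := by
  unfold Kn
  rw [integral_const_mul, integral_finsetSum _ fun i _ => ((hψ.scl (by positivity)).const_mul _).integrable]
  have : ∀ i ∈ Finset.range M, ∫ x, kco M i * scl ψ ((i:ℝ)+1) x = kco M i * ∫ x, ψ x := fun i _ => by
    rw [integral_const_mul, integral_scl _ (by positivity)]
  rw [Finset.sum_congr rfl this, ← Finset.sum_mul, kco_sum hM, one_mul, inv_mul_cancel₀ hi]

lemma scl_Kn {n : ℕ} (ψ : Euc n → ℝ) (M : ℕ) (s : ℝ) (x : Euc n) : scl (Kn ψ M) s x =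
    (∫ z, ψ z)⁻¹ * ∑ i ∈ Finset.range M, kco M i * scl ψ (((i:ℝ)+1) * s) x := by
  simp only [← scl_scl]
  conv_lhs => unfold scl
  unfold Kn
  rw [← mul_assoc, mul_comm _ (∫ z, ψ z)⁻¹, mul_assoc, Finset.mul_sum]
  congr 1
  refine Finset.sum_congr rfl fun i _ => ?_
  conv_rhs => unfold scl
  unfold scl
  ring

lemma cv_Kn {n : ℕ} {ψ f : Euc n → ℝ} (hψ : CC ψ) (hf : LocallyIntegrable f volume) (M : ℕ) {s : ℝ} (hs : 0 < s)
    (y : Euc n) : cv f (scl (Kn ψ M) s) y =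
    (∫ z, ψ z)⁻¹ * ∑ i ∈ Finset.range M, kco M i * cv f (scl ψ (((i:ℝ)+1) * s)) y := by
  have : scl (Kn ψ M) s = fun x => _ := funext fun x => scl_Kn ψ M s x
  rw [this, cv_const_mul_right, cv_sum_right _ hf fun i _ => (hψ.scl (by positivity)).const_mul _]
  simp only [cv_const_mul_right]

lemma cv_Kn_le {n : ℕ} {ψ : Euc n → ℝ} (hψ : CC ψ) (M : ℕ) : ∃ C : ℝ, 0 < C ∧
    ∀ (f : Euc n → ℝ) (_ : LocallyIntegrable f volume) (s lam : ℝ) (_ : 0 < s) (y : Euc n),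
      (∀ t, s ≤ t → |convAt ψ f t y| ≤ lam) → |cv f (scl (Kn ψ M) s) y| ≤ C * lam := by
  refine ⟨|(∫ z, ψ z)⁻¹| * (∑ i ∈ Finset.range M, |kco M i|) + 1, by positivity, ?_⟩
  intro f hf s lam hs y h
  have hlam : 0 ≤ lam := (abs_nonneg _).trans (h s le_rfl)
  rw [cv_Kn hψ hf M hs, abs_mul]
  have : |∑ i ∈ Finset.range M, kco M i * cv f (scl ψ (((i:ℝ)+1) * s)) y| ≤
      (∑ i ∈ Finset.range M, |kco M i|) * lam := by
    rw [Finset.sum_mul]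
    refine (Finset.abs_sum_le_sum_abs _ _).trans (Finset.sum_le_sum fun i _ => ?_)
    rw [abs_mul]
    gcongr
    refine h _ ?_
    have : (0:ℝ) ≤ i := by positivity
    nlinarith
  calc _ ≤ |(∫ z, ψ z)⁻¹| * ((∑ i ∈ Finset.range M, |kco M i|) * lam) := by gcongr
    _ ≤ _ := by nlinarith

lemma cv_scl {n : ℕ} (ψ g : Euc n → ℝ) {r : ℝ} (hr : 0 < r) (w : Euc n) :
    cv (scl ψ r) g w = ∫ u, ψ u * g (w - r • u) := by
  rw [← integral_scl (fun u => ψ u * g (w - r • u)) hr]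
  unfold cv scl
  congr 1; ext z
  dsimp only
  rw [smul_smul, mul_inv_cancel₀ hr.ne', one_smul]; ring

lemma Kn_approx {n : ℕ} {ψ : Euc n → ℝ} (hψs : ContDiff ℝ (⊤ : ℕ∞) ψ) (hψ : CC ψ)
    (hi : ∫ x, ψ x ≠ 0) (M : ℕ) : ∃ C : ℝ, 0 < C ∧ ∀ (s R : ℝ) (_ : 0 < s) (_ : 0 < R) (w : Euc n),
      |cv (scl (Kn ψ M) s) (scl ψ R) w - scl ψ R w| ≤ C * ((s/R)^M * (R^n)⁻¹) := by
  obtain ⟨C, hC0, hC⟩ := fd_bound (E := Euc n) M ℝ ψ hψs hψ.2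
  obtain ⟨B, hB1, hB⟩ := hψ.supp
  have hI : 0 ≤ ∫ u, |ψ u| := integral_nonneg fun _ => abs_nonneg _
  refine ⟨|(∫ z, ψ z)⁻¹| * (C * B^M * ∫ u, |ψ u|) + 1, by positivity, ?_⟩
  intro s R hs hR w
  set g := scl ψ R with hg
  have hgc : CC g := hψ.scl hR
  have hint : ∀ r : ℝ, 0 < r → Integrable (fun u => ψ u * g (w - r • u)) volume := fun r hr => by
    refine Continuous.integrable_of_hasCompactSupport ?_ hψ.2.mul_right
    have := hψ.1; have := hgc.1
    fun_prop
  have e1 : cv (scl (Kn ψ M) s) g w - g w =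
      (∫ z, ψ z)⁻¹ * ∫ u, ψ u * (∑ i ∈ Finset.range M, kco M i * g (w + ((i:ℝ)+1) • (-(s • u))) - g w) := by
    rw [cv_comm, cv_Kn hψ hgc.li M hs]
    have e2 : ∀ i ∈ Finset.range M, kco M i * cv g (scl ψ (((i:ℝ)+1) * s)) w =
        ∫ u, kco M i * (ψ u * g (w - (((i:ℝ)+1) * s) • u)) := fun i _ => by
      rw [cv_comm, cv_scl _ _ (by positivity), integral_const_mul]
    rw [Finset.sum_congr rfl e2, ← integral_finsetSum _ fun i _ => (hint _ (by positivity)).const_mul _]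
    have e3 : g w = (∫ z, ψ z)⁻¹ * ∫ u, ψ u * g w := by
      rw [integral_mul_const, ← mul_assoc, inv_mul_cancel₀ hi, one_mul]
    conv_lhs => rw [e3]
    rw [← mul_sub, ← integral_sub (integrable_finsetSum _ fun i _ => (hint _ (by positivity)).const_mul _)
      (hψ.integrable.mul_const _)]
    congr 2; ext u
    rw [mul_sub, Finset.mul_sum]
    congr 1
    refine Finset.sum_congr rfl fun i _ => ?_
    rw [smul_neg, smul_smul, ← sub_eq_add_neg]; ring
  have e4 : ∀ u, |ψ u * (∑ i ∈ Finset.range M, kco M i * g (w + ((i:ℝ)+1) • (-(s • u))) - g w)| ≤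
      |ψ u| * (C * B^M * ((s/R)^M * (R^n)⁻¹)) := by
    intro u
    by_cases hu : ψ u = 0
    · simp [hu]
    rw [abs_mul]
    refine mul_le_mul_of_nonneg_left ?_ (abs_nonneg _)
    have e5 : ∑ i ∈ Finset.range M, kco M i * g (w + ((i:ℝ)+1) • (-(s • u))) - g w =
        (R^n)⁻¹ * (∑ i ∈ Finset.range M, kco M i * ψ (R⁻¹ • w + ((i:ℝ)+1) • (-((s/R) • u))) - ψ (R⁻¹ • w)) := by
      rw [mul_sub, Finset.mul_sum, hg]; unfold scl
      congr 1
      refine Finset.sum_congr rfl fun i _ => ?_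
      have : R⁻¹ • (w + ((i:ℝ)+1) • (-(s • u))) = R⁻¹ • w + ((i:ℝ)+1) • (-((s/R) • u)) := by
        simp only [smul_add, smul_neg, smul_smul]
        congr 3; ring
      rw [this]; ring
    rw [e5, fd_sum, abs_mul, abs_neg, abs_mul, abs_pow, abs_neg, abs_one, one_pow, one_mul,
      abs_of_pos (by positivity : 0 < (R^n)⁻¹)]
    have h1 := hC (-((s/R) • u)) (R⁻¹ • w)
    rw [Real.norm_eq_abs, norm_neg, norm_smul, Real.norm_eq_abs, abs_of_pos (by positivity : 0 < s/R)] at h1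
    have h2 : (s/R * ‖u‖)^M ≤ (s/R*B)^M := by gcongr; exact hB u hu
    calc _ ≤ (R^n)⁻¹ * (C * (s/R*B)^M) := by
          refine mul_le_mul_of_nonneg_left (h1.trans ?_) (by positivity)
          exact mul_le_mul_of_nonneg_left h2 hC0.le
      _ = _ := by rw [mul_pow]; ring
  rw [e1, abs_mul]
  have e6 : |∫ u, ψ u * (∑ i ∈ Finset.range M, kco M i * g (w + ((i:ℝ)+1) • (-(s • u))) - g w)| ≤
      (∫ u, |ψ u|) * (C * B^M * ((s/R)^M * (R^n)⁻¹)) := by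
    rw [← integral_mul_const]
    rw [← Real.norm_eq_abs]
    exact norm_integral_le_of_norm_le (hψ.integrable.abs.mul_const _)
      (Filter.Eventually.of_forall fun u => by rw [Real.norm_eq_abs]; exact e4 u)
  have h7 : 0 ≤ (s/R)^M * (R^n)⁻¹ := by positivity
  calc _ ≤ |(∫ z, ψ z)⁻¹| * ((∫ u, |ψ u|) * (C * B^M * ((s/R)^M * (R^n)⁻¹))) := by gcongr
    _ ≤ _ := by nlinarith



/-- difference kernel -/
def th {n : ℕ} (ψ : Euc n → ℝ) (M : ℕ) (s : ℝ) (x : Euc n) : ℝ :=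
  scl (Kn ψ M) s x - scl (Kn ψ M) (2 * s) x

lemma th_CC {n : ℕ} {ψ : Euc n → ℝ} (hψ : CC ψ) (M : ℕ) {s : ℝ} (hs : 0 < s) : CC (th ψ M s) :=
  ((Kn_CC hψ M).scl hs).sub ((Kn_CC hψ M).scl (by positivity))

lemma th_supp {n : ℕ} {ψ : Euc n → ℝ} {M : ℕ} {B : ℝ} (hB1 : 0 ≤ B)
    (hB : ∀ x, Kn ψ M x ≠ 0 → ‖x‖ ≤ B) {s : ℝ} (hs : 0 < s) (x : Euc n) (hx : th ψ M s x ≠ 0) :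
    ‖x‖ ≤ 2 * B * s := by
  by_contra hlt
  apply hx
  unfold th
  have h1 : scl (Kn ψ M) s x = 0 := by
    by_contra h; have := scl_supp hB hs x h; apply hlt; nlinarith
  have h2 : scl (Kn ψ M) (2*s) x = 0 := by
    by_contra h; have := scl_supp hB (by positivity : 0 < 2*s) x h; apply hlt; linarith
  rw [h1, h2, sub_zero]

lemma th_L1 {n : ℕ} {ψ : Euc n → ℝ} (hψ : CC ψ) (M : ℕ) {s : ℝ} (hs : 0 < s) :
    ∫ x, |th ψ M s x| ≤ 2 * ∫ x, |Kn ψ M x| := by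
  have hK := Kn_CC hψ M
  have h1 := (hK.scl hs).integrable.abs
  have h2 := (hK.scl (by positivity : 0 < 2 * s)).integrable.abs
  calc _ ≤ ∫ x, (|scl (Kn ψ M) s x| + |scl (Kn ψ M) (2*s) x|) :=
        integral_mono (th_CC hψ M hs).integrable.abs (h1.add h2) fun x => abs_sub _ _
    _ = _ := by
        rw [integral_add h1 h2]
        simp only [abs_scl _ hs, abs_scl _ (by positivity : 0 < 2 * s)]
        rw [integral_scl _ hs, integral_scl _ (by positivity)]; ring

lemma T_bound {n : ℕ} {ψ : Euc n → ℝ} (hψs : ContDiff ℝ (⊤ : ℕ∞) ψ) (hψ : CC ψ)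
    (hi : ∫ x, ψ x ≠ 0) (M : ℕ) : ∃ C : ℝ, 0 < C ∧ ∀ (s R : ℝ) (_ : 0 < s) (_ : 0 < R) (w : Euc n),
      |cv (th ψ M s) (scl ψ R) w| ≤ C * (s^M * ((R+s)^(n+M))⁻¹) := by
  obtain ⟨C1, hC1, h1⟩ := Kn_approx hψs hψ hi M
  have hK := Kn_CC hψ M
  obtain ⟨C2, hC2, h2⟩ := hK.bdd
  have hI : 0 ≤ ∫ u, |ψ u| := integral_nonneg fun _ => abs_nonneg _
  refine ⟨(C1 * (1 + 2^M) + 2 * C2 * ∫ u, |ψ u|) * 2^(n+M), by positivity, ?_⟩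
  intro s R hs hR w
  have hRc := hψ.scl hR
  by_cases hsR : s ≤ R
  · have e : cv (th ψ M s) (scl ψ R) w = (cv (scl (Kn ψ M) s) (scl ψ R) w - scl ψ R w) -
        (cv (scl (Kn ψ M) (2*s)) (scl ψ R) w - scl ψ R w) := by
      rw [sub_sub_sub_cancel_right, ← cv_sub_left (hK.scl hs).li (hK.scl (by positivity)).li hRc]; rfl
    rw [e]
    have a1 := h1 s R hs hR w
    have a2 := h1 (2*s) R (by positivity) hR w
    have e2 : (2*s/R)^M = 2^M * (s/R)^M := by rw [← mul_pow]; congr 1; ring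
    rw [e2] at a2
    have a3 : (s/R)^M * (R^n)⁻¹ ≤ 2^(n+M) * (s^M * ((R+s)^(n+M))⁻¹) := by
      have : (s/R)^M * (R^n)⁻¹ = s^M * (R^(n+M))⁻¹ := by
        rw [div_pow, pow_add]; field_simp
      rw [this]
      have h3 : (R+s)^(n+M) ≤ 2^(n+M) * R^(n+M) := by
        rw [← mul_pow]; gcongr; linarith
      have h4 : (R^(n+M))⁻¹ ≤ 2^(n+M) * ((R+s)^(n+M))⁻¹ := by
        rw [← div_eq_mul_inv, le_div_iff₀ (by positivity), inv_mul_le_iff₀ (by positivity)]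
        linarith
      nlinarith [pow_pos hs M]
    have a4 := abs_sub (cv (scl (Kn ψ M) s) (scl ψ R) w - scl ψ R w)
        (cv (scl (Kn ψ M) (2*s)) (scl ψ R) w - scl ψ R w)
    have hX : 0 ≤ s^M * ((R+s)^(n+M))⁻¹ := by positivity
    calc _ ≤ C1 * (1 + 2^M) * ((s/R)^M * (R^n)⁻¹) := by linarith
      _ ≤ C1 * (1 + 2^M) * (2^(n+M) * (s^M * ((R+s)^(n+M))⁻¹)) := by gcongr
      _ ≤ _ := by
          rw [add_mul, add_mul]
          have : 0 ≤ 2 * C2 * (∫ u, |ψ u|) * 2^(n+M) * (s^M * ((R+s)^(n+M))⁻¹) := by positivity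
          linarith
  · push Not at hsR
    have a1 : |cv (th ψ M s) (scl ψ R) w| ≤ (2 * C2 * (s^n)⁻¹) * ∫ u, |scl ψ R u| := by
      refine cv_le hRc.integrable w (Filter.Eventually.of_forall fun z _ => ?_)
      unfold th
      refine (abs_sub _ _).trans ?_
      have b1 := scl_le h2 hs z
      have b2 := scl_le h2 (by positivity : 0 < 2 * s) z
      have b3 : ((2*s)^n)⁻¹ ≤ (s^n)⁻¹ := by gcongr; linarith
      nlinarith
    have e : ∫ u, |scl ψ R u| = ∫ u, |ψ u| := by
      simp only [abs_scl _ hR]; exact integral_scl _ hR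
    rw [e] at a1
    have a3 : (s^n)⁻¹ ≤ 2^(n+M) * (s^M * ((R+s)^(n+M))⁻¹) := by
      have h3 : (R+s)^(n+M) ≤ 2^(n+M) * s^(n+M) := by
        rw [← mul_pow]; gcongr; linarith
      rw [← mul_assoc, ← div_eq_mul_inv, le_div_iff₀ (by positivity), inv_mul_le_iff₀ (by positivity)]
      rw [pow_add s] at h3; linarith
    calc _ ≤ (2 * C2 * ∫ u, |ψ u|) * (s^n)⁻¹ := by linarith
      _ ≤ (2 * C2 * ∫ u, |ψ u|) * (2^(n+M) * (s^M * ((R+s)^(n+M))⁻¹)) := by gcongr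
      _ ≤ _ := by
          rw [add_mul, add_mul]
          have : 0 ≤ C1 * (1 + 2^M) * 2^(n+M) * (s^M * ((R+s)^(n+M))⁻¹) := by positivity
          linarith

/-- dyadic scale -/
def sj (j : ℤ) : ℝ := 2 ^ (-j)
lemma sj_pos (j : ℤ) : 0 < sj j := by unfold sj; positivity
lemma sj_pred (j : ℤ) : sj (j - 1) = 2 * sj j := by
  unfold sj; rw [neg_sub, sub_eq_add_neg, zpow_add₀ two_ne_zero, zpow_one]

/-- sum of two regularizations -/
def uJ {n : ℕ} (ψ : Euc n → ℝ) (M : ℕ) (f : Euc n → ℝ) (j : ℤ) (y : Euc n) : ℝ :=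
  cv f (scl (Kn ψ M) (sj j)) y + cv f (scl (Kn ψ M) (2 * sj j)) y

/-- double regularization -/
def GJ {n : ℕ} (ψ : Euc n → ℝ) (M : ℕ) (f : Euc n → ℝ) (j : ℤ) (y : Euc n) : ℝ :=
  cv (cv f (scl (Kn ψ M) (sj j))) (scl (Kn ψ M) (sj j)) y

lemma uJ_th {n : ℕ} {ψ : Euc n → ℝ} (hψ : CC ψ) (M : ℕ) {f : Euc n → ℝ} (hf : LocallyIntegrable f volume) (j : ℤ)
    (y : Euc n) : cv (uJ ψ M f j) (th ψ M (sj j)) y = GJ ψ M f j y - GJ ψ M f (j-1) y := by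
  have hK := Kn_CC hψ M
  have k1 : CC (scl (Kn ψ M) (sj j)) := hK.scl (sj_pos j)
  have k2 : CC (scl (Kn ψ M) (2 * sj j)) := hK.scl (by have := sj_pos j; positivity)
  unfold GJ uJ
  rw [sj_pred, cv_add_left (cv_li hf k1) (cv_li hf k2) (th_CC hψ M (sj_pos j))]
  unfold th
  rw [cv_sub_right (cv_li hf k1) k1 k2, cv_sub_right (cv_li hf k2) k1 k2,
    cv_assoc hf k1 k2, cv_assoc hf k2 k1]
  have : cv (scl (Kn ψ M) (sj j)) (scl (Kn ψ M) (2 * sj j)) =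
    cv (scl (Kn ψ M) (2 * sj j)) (scl (Kn ψ M) (sj j)) := funext fun y => cv_comm _ _ _
  rw [this]; ring

lemma uJ_cont {n : ℕ} {ψ : Euc n → ℝ} (hψ : CC ψ) (M : ℕ) {f : Euc n → ℝ} (hf : LocallyIntegrable f volume) (j : ℤ) :
    Continuous (uJ ψ M f j) := by
  have hK := Kn_CC hψ M
  exact (cv_cont hf (hK.scl (sj_pos j))).add (cv_cont hf (hK.scl (by have := sj_pos j; positivity)))

lemma cv_scl_scl {n : ℕ} (g h : Euc n → ℝ) {s : ℝ} (hs : 0 < s) (w : Euc n) :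
    cv (scl g s) (scl h s) w = scl (cv g h) s w := by
  rw [cv_scl _ _ hs]
  unfold scl cv
  rw [← integral_const_mul]
  congr 1; ext u
  rw [smul_sub, smul_smul, inv_mul_cancel₀ hs.ne', one_smul]; ring

lemma approx_id {n : ℕ} {Q f : Euc n → ℝ} (hQ : CC Q) (hQi : ∫ x, Q x = 1)
    (hf : LocallyIntegrable f volume) :
    ∀ᵐ x, Filter.Tendsto (fun N : ℕ => cv f (scl Q (sj N)) x) Filter.atTop (nhds (f x)) := by
  obtain ⟨B, hB1, hB⟩ := hQ.supp
  obtain ⟨C, hC0, hC⟩ := hQ.bdd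
  have hB0 : 0 < B := by linarith
  filter_upwards [IsUnifLocDoublingMeasure.ae_tendsto_average_norm_sub (μ := volume) hf 1] with x hx
  have hδ : Filter.Tendsto (fun N : ℕ => B * sj N) Filter.atTop (nhdsWithin 0 (Ioi 0)) := by
    rw [tendsto_nhdsWithin_iff]
    constructor
    · have : Filter.Tendsto (fun N : ℕ => B * (1/2:ℝ)^N) Filter.atTop (nhds (B * 0)) :=
        (_root_.tendsto_pow_atTop_nhds_zero_of_lt_one (by norm_num) (by norm_num)).const_mul B
      rw [mul_zero] at this
      refine this.congr fun N => ?_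
      unfold sj; simp
    · exact Filter.Eventually.of_forall fun N => by have := sj_pos N; simp only [mem_Ioi]; positivity
  have hlim := hx (fun _ : ℕ => x) _ hδ (Filter.Eventually.of_forall fun N => by
    have := sj_pos N
    simp only [Metric.mem_closedBall, dist_self]; positivity)
  set V := volume.real (Metric.ball (0 : Euc n) 1) with hV
  have hlim2 := hlim.const_mul (C * B^n * V)
  rw [mul_zero] at hlim2
  rw [tendsto_iff_norm_sub_tendsto_zero]
  refine squeeze_zero (fun _ => norm_nonneg _) (fun N => ?_) hlim2
  have hs := sj_pos N
  set s := sj N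
  have hi1 := cv_exists hf (hQ.scl hs) x
  have hQc := (hQ.scl hs)
  have e : cv f (scl Q s) x - f x = ∫ z, (f z - f x) * scl Q s (x - z) := by
    have e2 : f x = ∫ z, f x * scl Q s (x - z) := by
      rw [integral_const_mul, integral_sub_left_eq_self (fun z => scl Q s z) volume x, integral_scl _ hs, hQi, mul_one]
    conv_lhs => rw [e2]
    unfold cv
    rw [← integral_sub hi1 ((hQc.integrable.comp_sub_left x).const_mul _)]
    simp only [sub_mul]
  have hvol : volume.real (Metric.closedBall x (B*s)) = (B*s)^n * V := by
    rw [hV, Measure.real, Measure.addHaar_closedBall _ _ (by positivity), ENNReal.toReal_mul,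
      ENNReal.toReal_ofReal (by positivity)]
    simp [Measure.real]
  rw [e]
  have hfi : IntegrableOn (fun z => ‖f z - f x‖) (Metric.closedBall x (B*s)) volume :=
    ((hf.integrableOn_isCompact (isCompact_closedBall _ _)).sub
      (integrableOn_const (measure_closedBall_lt_top.ne))).norm
  calc ‖∫ z, (f z - f x) * scl Q s (x - z)‖ ≤
      ∫ z, (Metric.closedBall x (B*s)).indicator (fun z => (C * (s^n)⁻¹) * ‖f z - f x‖) z := by
        refine norm_integral_le_of_norm_le
          (IntegrableOn.integrable_indicator (hfi.const_mul _) Metric.isClosed_closedBall.measurableSet)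
          (Filter.Eventually.of_forall fun z => ?_)
        by_cases hz : scl Q s (x - z) = 0
        · rw [hz, mul_zero, norm_zero]
          exact indicator_nonneg (fun z _ => by positivity) z
        · have := scl_supp hB hs _ hz
          rw [indicator_of_mem (by rwa [Metric.mem_closedBall, dist_comm, dist_eq_norm]), norm_mul, mul_comm]
          gcongr
          exact scl_le hC hs _
    _ = C * (s^n)⁻¹ * ∫ z in Metric.closedBall x (B*s), ‖f z - f x‖ := by
        rw [integral_indicator Metric.isClosed_closedBall.measurableSet, integral_const_mul]
    _ = C * B^n * V * ⨍ z in Metric.closedBall x (B*s), ‖f z - f x‖ := by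
        rw [setAverage_eq, hvol, smul_eq_mul, mul_pow]
        have hV0 : V ≠ 0 := by
          rw [hV, Measure.real, ENNReal.toReal_ne_zero]
          exact ⟨(Metric.measure_ball_pos _ _ one_pos).ne', measure_ball_lt_top.ne⟩
        field_simp

lemma GJ_lim {n : ℕ} {ψ : Euc n → ℝ} (hψ : CC ψ) (hi : ∫ x, ψ x ≠ 0) {M : ℕ} (hM : 1 ≤ M) {f : Euc n → ℝ}
    (hf : LocallyIntegrable f volume) :
    ∀ᵐ x, Filter.Tendsto (fun N : ℕ => GJ ψ M f N x) Filter.atTop (nhds (f x)) := by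
  have hK := Kn_CC hψ M
  have hQi : ∫ x, cv (Kn ψ M) (Kn ψ M) x = 1 := by
    have := integral_convolution (ContinuousLinearMap.mul ℝ ℝ) hK.integrable hK.integrable (μ := volume) (ν := volume)
    rw [← cv_eq] at this
    rw [this, Kn_int hψ hi hM]; simp
  filter_upwards [approx_id (hK.cv hK) hQi hf] with x hx
  refine hx.congr fun N => ?_
  unfold GJ
  rw [cv_assoc hf (hK.scl (sj_pos N)) (hK.scl (sj_pos N))]
  congr 1; ext w; exact (cv_scl_scl _ _ (sj_pos N) w).symm



/-- the far region at scale `j` -/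
def FJ {n : ℕ} (A : ℝ) (Ω : Set (Euc n)) (j : ℤ) : Set (Euc n) := {y | A * sj j ≤ dF Ω y}

lemma FJ_meas {n : ℕ} (A : ℝ) (Ω : Set (Euc n)) (j : ℤ) : MeasurableSet (FJ A Ω j) :=
  measurableSet_le measurable_const (dF_cont Ω).measurable

/-- bad part at scale `j` -/
def bJ {n : ℕ} (ψ : Euc n → ℝ) (M : ℕ) (f : Euc n → ℝ) (A : ℝ) (Ω : Set (Euc n)) (j : ℤ) (x : Euc n) : ℝ :=
  cv ((FJ A Ω j).indicator (uJ ψ M f j)) (th ψ M (sj j)) x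

/-- good part at scale `j` -/
def eJ {n : ℕ} (ψ : Euc n → ℝ) (M : ℕ) (f : Euc n → ℝ) (A : ℝ) (Ω : Set (Euc n)) (j : ℤ) (x : Euc n) : ℝ :=
  cv ((FJ A Ω j)ᶜ.indicator (uJ ψ M f j)) (th ψ M (sj j)) x

/-- truncated good function -/
def gN {n : ℕ} (ψ : Euc n → ℝ) (M : ℕ) (f : Euc n → ℝ) (A : ℝ) (Ω : Set (Euc n)) (a b : ℤ) (x : Euc n) : ℝ :=
  GJ ψ M f b x - ∑ j ∈ Finset.Ioc a b, bJ ψ M f A Ω j x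

lemma ind_li {n : ℕ} {u : Euc n → ℝ} (hu : LocallyIntegrable u volume) {s : Set (Euc n)} (hs : MeasurableSet s) :
    LocallyIntegrable (s.indicator u) volume := hu.indicator hs

lemma b_add_e {n : ℕ} {ψ : Euc n → ℝ} (hψ : CC ψ) (M : ℕ) {f : Euc n → ℝ} (hf : LocallyIntegrable f volume)
    (A : ℝ) (Ω : Set (Euc n)) (j : ℤ) (x : Euc n) :
    bJ ψ M f A Ω j x + eJ ψ M f A Ω j x = GJ ψ M f j x - GJ ψ M f (j-1) x := by
  have hu : LocallyIntegrable (uJ ψ M f j) volume := (uJ_cont hψ M hf j).locallyIntegrable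
  unfold bJ eJ
  rw [← cv_add_left (ind_li hu (FJ_meas A Ω j)) (ind_li hu (FJ_meas A Ω j).compl) (th_CC hψ M (sj_pos j)),
    ← uJ_th hψ M hf]
  congr 1; ext y
  exact congrFun (indicator_self_add_compl _ _) y

lemma Ioc_succ (a : ℤ) (m : ℕ) : Finset.Ioc a (a + (m+1:ℕ)) = insert (a + (m+1:ℕ)) (Finset.Ioc a (a+m)) := by
  ext j; simp only [Finset.mem_Ioc, Finset.mem_insert]; push_cast; omega

lemma gN_succ {n : ℕ} {ψ : Euc n → ℝ} (hψ : CC ψ) (M : ℕ) {f : Euc n → ℝ} (hf : LocallyIntegrable f volume)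
    (A : ℝ) (Ω : Set (Euc n)) (a : ℤ) (m : ℕ) (x : Euc n) :
    gN ψ M f A Ω a (a + (m+1:ℕ)) x = gN ψ M f A Ω a (a+m) x + eJ ψ M f A Ω (a + (m+1:ℕ)) x := by
  have h := b_add_e hψ M hf A Ω (a + (m+1:ℕ)) x
  have e : a + (m+1:ℕ) - 1 = a + m := by push_cast; ring
  rw [e] at h
  unfold gN
  rw [Ioc_succ, Finset.sum_insert (by simp)]
  linarith

lemma bJ_zero {n : ℕ} {ψ : Euc n → ℝ} {M : ℕ} {B : ℝ} (hB1 : 1 ≤ B)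
    (hB : ∀ x, Kn ψ M x ≠ 0 → ‖x‖ ≤ B) (f : Euc n → ℝ) (Ω : Set (Euc n)) (j : ℤ) (x : Euc n)
    (hx : dF Ω x < 4 * B * sj j) : bJ ψ M f (6*B) Ω j x = 0 := by
  unfold bJ cv
  rw [integral_eq_zero_of_ae]
  refine Filter.Eventually.of_forall fun z => ?_
  by_contra hz
  have h2 := th_supp (by linarith) hB (sj_pos j) _ (right_ne_zero_of_mul hz)
  have h1 := mem_of_indicator_ne_zero (left_ne_zero_of_mul hz)
  have h3 := dF_le Ω z x
  rw [dist_comm, dist_eq_norm] at h3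
  simp only [FJ, Set.mem_ofPred_eq] at h1
  linarith

lemma eJ_zero {n : ℕ} {ψ : Euc n → ℝ} {M : ℕ} {B : ℝ} (hB1 : 1 ≤ B)
    (hB : ∀ x, Kn ψ M x ≠ 0 → ‖x‖ ≤ B) (f : Euc n → ℝ) (Ω : Set (Euc n)) (j : ℤ) (x : Euc n)
    (hx : 8 * B * sj j ≤ dF Ω x) : eJ ψ M f (6*B) Ω j x = 0 := by
  unfold eJ cv
  rw [integral_eq_zero_of_ae]
  refine Filter.Eventually.of_forall fun z => ?_
  by_contra hz
  have h2 := th_supp (by linarith) hB (sj_pos j) _ (right_ne_zero_of_mul hz)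
  have h1 := mem_of_indicator_ne_zero (left_ne_zero_of_mul hz)
  have h3 := dF_le Ω x z
  rw [dist_eq_norm] at h3
  simp only [FJ, mem_compl_iff, Set.mem_ofPred_eq, not_le] at h1
  linarith

lemma near {n : ℕ} {ψ f : Euc n → ℝ} {A lam s : ℝ} (hA : 0 < A) (hne : (OmA ψ f A lam)ᶜ.Nonempty) (hs : 0 < s)
    {y : Euc n} (hy : dF (OmA ψ f A lam) y < A * s) (t : ℝ) (ht : s ≤ t) : |convAt ψ f t y| ≤ lam := by
  obtain ⟨x, hx, hxy⟩ := (Metric.infDist_lt_iff hne).1 hy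
  by_contra h
  rw [not_le] at h
  apply hx
  refine ⟨y, t, by linarith, ?_, h⟩
  rw [dist_comm]
  nlinarith

lemma good_consts {n : ℕ} {ψ : Euc n → ℝ} (hψ : CC ψ) {M : ℕ} {B : ℝ} (hB1 : 1 ≤ B)
    (hB : ∀ x, Kn ψ M x ≠ 0 → ‖x‖ ≤ B) : ∃ C : ℝ, 0 < C ∧
    ∀ (f : Euc n → ℝ) (_ : LocallyIntegrable f volume) (lam : ℝ) (_ : 0 < lam)
      (_ : (OmA ψ f (6*B) lam)ᶜ.Nonempty),
      (∀ j y, dF (OmA ψ f (6*B) lam) y < 6*B*sj j → |uJ ψ M f j y| ≤ C * lam) ∧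
      (∀ j x, dF (OmA ψ f (6*B) lam) x < 4*B*sj j → |GJ ψ M f j x| ≤ C * lam) ∧
      (∀ j x, |eJ ψ M f (6*B) (OmA ψ f (6*B) lam) j x| ≤ C * lam) := by
  obtain ⟨C, hC, h⟩ := cv_Kn_le hψ M
  have hB0 : 0 < B := by linarith
  set I := ∫ x, |Kn ψ M x| with hI
  have hI0 : 0 ≤ I := integral_nonneg fun _ => abs_nonneg _
  refine ⟨2*C + C*I + 4 * C * I, by positivity, fun f hf lam hlam hne => ?_⟩
  set Ω := OmA ψ f (6*B) lam
  have hK := Kn_CC hψ M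
  have hu : ∀ j y, dF Ω y < 6*B*sj j → |uJ ψ M f j y| ≤ 2 * C * lam := fun j y hy => by
    have hs := sj_pos j
    have h1 := h f hf (sj j) lam hs y (near (by positivity) hne hs hy)
    have h2 := h f hf (2 * sj j) lam (by positivity) y fun t ht =>
      near (by positivity) hne hs hy t (by linarith)
    unfold uJ
    have := abs_add_le (cv f (scl (Kn ψ M) (sj j)) y) (cv f (scl (Kn ψ M) (2 * sj j)) y)
    linarith
  have p1 : 0 ≤ C * I * lam := by positivity
  have p2 : 0 ≤ C * lam := by positivity
  refine ⟨fun j y hy => (hu j y hy).trans (by nlinarith), fun j x hx => ?_, fun j x => ?_⟩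
  · have hs := sj_pos j
    have h1 : |GJ ψ M f j x| ≤ (C * lam) * ∫ z, |scl (Kn ψ M) (sj j) z| := by
      refine cv_le (hK.scl hs).integrable x (Filter.Eventually.of_forall fun z hz => ?_)
      have h2 := scl_supp hB hs _ hz
      have h3 := dF_le Ω z x
      rw [dist_comm, dist_eq_norm] at h3
      exact h f hf (sj j) lam hs z (near (by positivity) hne hs (by nlinarith))
    simp only [abs_scl _ hs] at h1
    rw [integral_scl _ hs] at h1
    nlinarith
  · have hs := sj_pos j
    have h1 : |eJ ψ M f (6*B) Ω j x| ≤ (2 * C * lam) * ∫ z, |th ψ M (sj j) z| := by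
      refine cv_le (th_CC hψ M hs).integrable x (Filter.Eventually.of_forall fun z _ => ?_)
      by_cases hz : z ∈ (FJ (6*B) Ω j)ᶜ
      · rw [indicator_of_mem hz]
        exact hu j z (by simpa [FJ] using hz)
      · rw [indicator_of_notMem hz, abs_zero]; positivity
    have h2 := th_L1 hψ M hs
    have h3 : (2 * C * lam) * ∫ z, |th ψ M (sj j) z| ≤ (2 * C * lam) * (2 * I) := by gcongr
    nlinarith

lemma gN_bound {n : ℕ} {ψ : Euc n → ℝ} (hψ : CC ψ) {M : ℕ} {B : ℝ} (hB1 : 1 ≤ B)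
    (hB : ∀ x, Kn ψ M x ≠ 0 → ‖x‖ ≤ B) : ∃ C : ℝ, 0 < C ∧
    ∀ (f : Euc n → ℝ) (_ : LocallyIntegrable f volume) (lam : ℝ) (_ : 0 < lam)
      (_ : (OmA ψ f (6*B) lam)ᶜ.Nonempty) (a : ℤ)
      (_ : ∀ y, dF (OmA ψ f (6*B) lam) y < 4*B*sj a) (m : ℕ) (x : Euc n),
      |gN ψ M f (6*B) (OmA ψ f (6*B) lam) a (a+m) x| ≤ C * lam := by
  obtain ⟨C, hC, h⟩ := good_consts hψ hB1 hB
  have hB0 : 0 < B := by linarith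
  refine ⟨2*C, by positivity, fun f hf lam hlam hne a ha m x => ?_⟩
  obtain ⟨-, hG, he⟩ := h f hf lam hlam hne
  set Ω := OmA ψ f (6*B) lam
  have p : 0 < C * lam := by positivity
  have near0 : ∀ m : ℕ, dF Ω x < 4*B*sj (a+m) → |gN ψ M f (6*B) Ω a (a+m) x| ≤ C * lam := by
    intro m hm
    have : gN ψ M f (6*B) Ω a (a+m) x = GJ ψ M f (a+m) x := by
      unfold gN
      rw [Finset.sum_eq_zero, sub_zero]
      intro j hj
      refine bJ_zero hB1 hB f Ω j x (hm.trans_le ?_)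
      rw [Finset.mem_Ioc] at hj
      have : sj (a+m) ≤ sj j := by unfold sj; gcongr; · norm_num
                                   · omega
      gcongr
    rw [this]; exact hG _ _ hm
  induction m with
  | zero => refine (near0 0 ?_).trans (by linarith); simpa using ha x
  | succ m ih =>
    by_cases h1 : dF Ω x < 4*B*sj (a+(m+1:ℕ))
    · exact (near0 _ h1).trans (by linarith)
    rw [gN_succ hψ M hf]
    by_cases h2 : 8*B*sj (a+(m+1:ℕ)) ≤ dF Ω x
    · rw [eJ_zero hB1 hB f Ω _ x h2, add_zero]; exact ih
    · push Not at h2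
      have e : sj (a+m) = 2 * sj (a+(m+1:ℕ)) := by rw [← sj_pred]; congr 1; push_cast; ring
      have h3 := near0 m (by rw [e]; linarith)
      have h4 := he (a+(m+1:ℕ)) x
      have := abs_add_le (gN ψ M f (6*B) Ω a (a+m) x) (eJ ψ M f (6*B) Ω (a+(m+1:ℕ)) x)
      linarith



lemma dF_bdd {n : ℕ} (hn : 1 ≤ n) {Ω : Set (Euc n)} (hv : volume Ω ≠ ∞) :
    ∃ D : ℝ, ∀ y, dF Ω y ≤ D := by
  have hb0 : volume (Metric.ball (0:Euc n) 1) ≠ 0 := (Metric.measure_ball_pos _ _ one_pos).ne'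
  have hb1 : volume (Metric.ball (0:Euc n) 1) ≠ ∞ := measure_ball_lt_top.ne
  refine ⟨max 1 (volume Ω / volume (Metric.ball (0:Euc n) 1)).toReal, fun y => ?_⟩
  by_cases h : dF Ω y ≤ 1
  · exact h.trans (le_max_left _ _)
  push Not at h
  refine le_trans ?_ (le_max_right _ _)
  have h1 : Metric.ball y (dF Ω y) ⊆ Ω := by
    intro z hz
    by_contra hz'
    have := dF_le_dist hz' y
    rw [Metric.mem_ball] at hz; linarith
  have h2 := measure_mono (μ := volume) h1
  rw [vol_ball y (by linarith)] at h2
  have h3 := (ENNReal.le_div_iff_mul_le (Or.inl hb0) (Or.inl hb1)).2 h2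
  have h4 := (ENNReal.ofReal_le_iff_le_toReal (ENNReal.div_ne_top hv hb0)).1 h3
  refine le_trans ?_ h4
  calc dF Ω y = dF Ω y ^ 1 := (pow_one _).symm
    _ ≤ _ := pow_le_pow_right₀ h.le hn

lemma sj_anti {i j : ℤ} (h : i ≤ j) : sj j ≤ sj i := by
  unfold sj; exact zpow_le_zpow_right₀ (by norm_num) (by omega)

lemma sj_nat (N : ℕ) : sj (N:ℤ) = (1/2:ℝ)^N := by
  unfold sj; rw [zpow_neg, zpow_natCast]; simp

lemma sj_negnat (N : ℕ) : sj (-(N:ℤ)) = (2:ℝ)^N := by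
  unfold sj; rw [neg_neg, zpow_natCast]

lemma gN_shift {n : ℕ} {ψ : Euc n → ℝ} {M : ℕ} {B : ℝ} (hB1 : 1 ≤ B)
    (hB : ∀ x, Kn ψ M x ≠ 0 → ‖x‖ ≤ B) (f : Euc n → ℝ) (Ω : Set (Euc n)) {a' a b : ℤ} (x : Euc n)
    (h1 : a' ≤ a) (hx : dF Ω x < 4 * B * sj a) : gN ψ M f (6*B) Ω a' b x = gN ψ M f (6*B) Ω a b x := by
  unfold gN
  congr 1
  symm
  refine Finset.sum_subset (fun j hj => ?_) (fun j hj hj' => ?_)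
  · simp only [Finset.mem_Ioc] at *; omega
  · simp only [Finset.mem_Ioc] at *
    refine bJ_zero hB1 hB f Ω j x (hx.trans_le ?_)
    exact mul_le_mul_of_nonneg_left (sj_anti (by omega)) (by linarith)

lemma gN_cont {n : ℕ} {ψ : Euc n → ℝ} (hψ : CC ψ) (M : ℕ) {f : Euc n → ℝ} (hf : LocallyIntegrable f volume)
    (A : ℝ) (Ω : Set (Euc n)) (a b : ℤ) : Continuous (gN ψ M f A Ω a b) := by
  have hK := Kn_CC hψ M
  unfold gN
  refine Continuous.sub ?_ (continuous_finsetSum _ fun j _ => ?_)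
  · exact cv_cont (cv_li hf (hK.scl (sj_pos b))) (hK.scl (sj_pos b))
  · exact cv_cont (ind_li (uJ_cont hψ M hf j).locallyIntegrable (FJ_meas A Ω j)) (th_CC hψ M (sj_pos j))

lemma bdd_li {n : ℕ} {g : Euc n → ℝ} (hg : AEStronglyMeasurable g volume) {c : ℝ} (h : ∀ᵐ x, |g x| ≤ c) :
    LocallyIntegrable g volume := by
  rw [locallyIntegrable_iff]
  intro k hk
  exact Measure.integrableOn_of_bounded (M := c) hk.measure_lt_top.ne hg (ae_restrict_of_ae h)

lemma good_exists {n : ℕ} (hn : 1 ≤ n) {ψ : Euc n → ℝ} (hψ : CC ψ) (hi : ∫ x, ψ x ≠ 0) {M : ℕ} (hM : 1 ≤ M)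
    {B : ℝ} (hB1 : 1 ≤ B) (hB : ∀ x, Kn ψ M x ≠ 0 → ‖x‖ ≤ B) : ∃ C : ℝ, 0 < C ∧
    ∀ (f : Euc n → ℝ) (_ : LocallyIntegrable f volume) (lam : ℝ) (_ : 0 < lam)
      (_ : volume (OmA ψ f (6*B) lam) ≠ ∞), ∃ g : Euc n → ℝ, LocallyIntegrable g volume ∧
      (∀ᵐ x, |g x| ≤ C * lam) ∧ (∀ᵐ x, x ∉ OmA ψ f (6*B) lam → g x = f x) ∧
      ∀ (R : ℝ) (_ : 0 < R) (y : Euc n), Filter.Tendsto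
        (fun N : ℕ => convAt ψ (gN ψ M f (6*B) (OmA ψ f (6*B) lam) (-N) N) R y) Filter.atTop
        (nhds (convAt ψ g R y)) := by
  obtain ⟨C, hC, hb⟩ := gN_bound hψ hB1 hB
  have hB0 : 0 < B := by linarith
  refine ⟨C, hC, fun f hf lam hlam hv => ?_⟩
  set Ω := OmA ψ f (6*B) lam with hΩ
  have hne : Ωᶜ.Nonempty := compl_ne hn hv
  have ho : IsOpen Ω := OmA_open ..
  obtain ⟨D, hD⟩ := dF_bdd hn hv
  obtain ⟨N0, hN0⟩ := pow_unbounded_of_one_lt D (one_lt_two (α := ℝ))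
  have hd0 : ∀ N : ℕ, N0 ≤ N → ∀ y, dF Ω y < 4 * B * sj (-(N:ℤ)) := by
    intro N hN y
    have h1 : (2:ℝ)^N0 ≤ 2^N := pow_le_pow_right₀ (by norm_num) hN
    have h2 : (0:ℝ) < 2^N := by positivity
    rw [sj_negnat]
    nlinarith [hD y]
  have hbd : ∀ N : ℕ, N0 ≤ N → ∀ x, |gN ψ M f (6*B) Ω (-N) N x| ≤ C * lam := by
    intro N hN x
    have := hb f hf lam hlam hne (-N) (hd0 N hN) (2*N) x
    have e : -(N:ℤ) + (2*N:ℕ) = N := by push_cast; ring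
    rwa [e] at this
  have hsh : ∀ N : ℕ, N0 ≤ N → ∀ x, gN ψ M f (6*B) Ω (-N) N x = gN ψ M f (6*B) Ω (-N0) N x :=
    fun N hN x => gN_shift hB1 hB f Ω x (by omega) (hd0 N0 le_rfl x)
  have hout : ∀ x, x ∉ Ω → ∀ N : ℕ, gN ψ M f (6*B) Ω (-N) N x = GJ ψ M f N x := by
    intro x hx N
    unfold gN
    rw [Finset.sum_eq_zero, sub_zero]
    intro j _
    refine bJ_zero hB1 hB f Ω j x ?_
    have h1 := dF_le_dist hx x
    rw [dist_self] at h1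
    have := sj_pos j
    have : 0 < 4 * B * sj j := by positivity
    linarith
  have hlim : ∀ᵐ x, ∃ l, Filter.Tendsto (fun N : ℕ => gN ψ M f (6*B) Ω (-N) N x) Filter.atTop (nhds l) := by
    filter_upwards [GJ_lim hψ hi hM hf] with x hx
    by_cases hxO : x ∈ Ω
    · have hd := dF_pos ho hne hxO
      obtain ⟨N1, hN1⟩ := exists_pow_lt_of_lt_one (show 0 < dF Ω x / (8*B) by positivity) (show (1/2:ℝ) < 1 by norm_num)
      refine ⟨gN ψ M f (6*B) Ω (-N0) (N0+N1:ℕ) x, tendsto_const_nhds.congr' ?_⟩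
      filter_upwards [Filter.eventually_ge_atTop (N0+N1)] with N hN
      rw [hsh N (by omega)]
      symm
      induction N, hN using Nat.le_induction with
      | base => rfl
      | succ N hN ih =>
        have := gN_succ hψ M hf (6*B) Ω (-N0) (N0+N) x
        have e1 : -(N0:ℤ) + ((N0 + N + 1 : ℕ)) = (N+1:ℕ) := by push_cast; ring
        have e2 : -(N0:ℤ) + ((N0 + N : ℕ)) = (N:ℕ) := by push_cast; ring
        rw [e1, e2] at this
        rw [this, ih, eJ_zero hB1 hB f Ω, add_zero]
        rw [lt_div_iff₀ (by positivity)] at hN1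
        have := sj_anti (show (N1:ℤ) ≤ (N+1:ℕ) by omega)
        rw [sj_nat N1] at this
        nlinarith
    · exact ⟨f x, by simp only [hout x hxO]; exact hx⟩
  have hms : ∀ N : ℕ, AEStronglyMeasurable (gN ψ M f (6*B) Ω (-N) N) volume := fun N =>
    (gN_cont hψ M hf (6*B) Ω (-N) N).aestronglyMeasurable
  obtain ⟨g, hgm, hg⟩ := exists_stronglyMeasurable_limit_of_tendsto_ae hms hlim
  have hgb : ∀ᵐ x, |g x| ≤ C * lam := by
    filter_upwards [hg] with x hx
    refine le_of_tendsto hx.abs ?_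
    filter_upwards [Filter.eventually_ge_atTop N0] with N hN using hbd N hN x
  refine ⟨g, bdd_li hgm.aestronglyMeasurable hgb, hgb, ?_, fun R hR y => ?_⟩
  · filter_upwards [hg, GJ_lim hψ hi hM hf] with x hx hx' hxO
    simp only [hout x hxO] at hx
    exact tendsto_nhds_unique hx hx'
  · have hsc : CC (scl ψ R) := hψ.scl hR
    unfold convAt
    refine tendsto_integral_filter_of_dominated_convergence (fun z => (C*lam) * |scl ψ R (y - z)|) ?_ ?_ ?_ ?_
    · refine Filter.Eventually.of_forall fun N => ?_
      refine (hms N).mul ?_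
      have : Continuous fun z => scl ψ R (y - z) := hsc.1.comp (continuous_const.sub continuous_id)
      exact this.aestronglyMeasurable
    · filter_upwards [Filter.eventually_ge_atTop N0] with N hN
      refine Filter.Eventually.of_forall fun z => ?_
      rw [Real.norm_eq_abs, abs_mul]
      exact mul_le_mul_of_nonneg_right (hbd N hN z) (abs_nonneg _)
    · refine Integrable.const_mul ?_ _
      exact (hsc.integrable.comp_sub_left y).abs
    · filter_upwards [hg] with z hz
      exact hz.mul_const _


lemma sj_geo {M : ℕ} (hM : 1 ≤ M) : ∃ C : ℝ, 0 < C ∧ ∀ d : ℝ, 0 < d → ∀ s : Finset ℤ,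
    ∑ j ∈ s, (if sj j ≤ d then sj j ^ M else 0) ≤ C * d ^ M := by
  obtain ⟨C, hC, h⟩ := geo_sum (q := M) (by exact_mod_cast hM)
  refine ⟨C.toReal + 1, by positivity, fun d hd s => ?_⟩
  have e : ∀ j : ℤ, ENNReal.ofReal (sj j) = (2:ℝ≥0∞) ^ (-j) := by
    intro j
    unfold sj
    rw [zpow_eq_rpow2, ← Real.rpow_intCast, ← ENNReal.ofReal_rpow_of_pos (by norm_num)]; norm_num
  have h1 : ENNReal.ofReal (∑ j ∈ s, (if sj j ≤ d then sj j ^ M else 0)) ≤ C * ENNReal.ofReal d ^ (M:ℝ) := by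
    refine le_trans ?_ (h (ENNReal.ofReal d))
    rw [ENNReal.ofReal_sum_of_nonneg (fun j _ => by have := sj_pos j; split_ifs <;> positivity)]
    rw [← (Equiv.neg ℤ).tsum_eq]
    refine le_trans (le_of_eq ?_) (ENNReal.sum_le_tsum s)
    refine Finset.sum_congr rfl fun j _ => ?_
    simp only [Equiv.neg_apply]
    rw [← e, ENNReal.rpow_natCast]
    by_cases hj : sj j ≤ d
    · rw [if_pos hj, if_pos (ENNReal.ofReal_le_ofReal hj), ENNReal.ofReal_pow (sj_pos j).le]
    · rw [if_neg hj, if_neg (fun h => hj ((ENNReal.ofReal_le_ofReal_iff hd.le).1 h)), ENNReal.ofReal_zero]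
  rw [ENNReal.rpow_natCast, ← ENNReal.ofReal_pow hd.le, ← ENNReal.ofReal_toReal hC, ← ENNReal.ofReal_mul toReal_nonneg,
    ENNReal.ofReal_le_ofReal_iff (by positivity)] at h1
  refine h1.trans ?_
  have : 0 < d ^ M := by positivity
  nlinarith

lemma dF_anti {n : ℕ} {Ω Ω' : Set (Euc n)} (h : Ω' ⊆ Ω) (hne : Ωᶜ.Nonempty) (z : Euc n) : dF Ω' z ≤ dF Ω z :=
  Metric.infDist_le_infDist_of_subset (compl_subset_compl.2 h) hne

lemma abs_cv_le {n : ℕ} (v T : Euc n → ℝ) (y : Euc n) :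
    ENNReal.ofReal |cv v T y| ≤ ∫⁻ z, ENNReal.ofReal (|v z| * |T (y - z)|) := by
  unfold cv
  rw [← Real.enorm_eq_ofReal_abs]
  refine (enorm_integral_le_lintegral_enorm _).trans (le_of_eq ?_)
  congr 1; ext z
  rw [Real.enorm_eq_ofReal_abs, abs_mul]

lemma far_sum {n : ℕ} {ψ : Euc n → ℝ} (hψs : ContDiff ℝ (⊤ : ℕ∞) ψ) (hψ : CC ψ) (hi : ∫ x, ψ x ≠ 0)
    {M : ℕ} (hM : 1 ≤ M)
    {B : ℝ} (hB1 : 1 ≤ B) (hB : ∀ x, Kn ψ M x ≠ 0 → ‖x‖ ≤ B) (hB' : ∀ x, ψ x ≠ 0 → ‖x‖ ≤ B) : ∃ C : ℝ, 0 < C ∧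
    ∀ (f : Euc n → ℝ) (_ : LocallyIntegrable f volume) (lam : ℝ) (_ : 0 < lam)
      (_ : (OmA ψ f (6*B) lam)ᶜ.Nonempty) (x : Euc n) (_ : x ∉ OmA ψ f (6*B) lam) (R : ℝ) (_ : 0 < R)
      (y : Euc n) (_ : dist x y < R) (s : Finset ℤ) (z : Euc n),
      ∑ j ∈ s, |(FJ (6*B) (OmA ψ f (6*B) lam) j).indicator (uJ ψ M f j) z -
        (FJ (6*B) (OmA ψ f (6*B) (2*lam)) j).indicator (uJ ψ M f j) z| *
        |cv (th ψ M (sj j)) (scl ψ R) (y - z)| ≤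
      (OmA ψ f (6*B) lam).indicator (fun z => C * lam * (aF (OmA ψ f (6*B) lam) x z ^ (n+M) /
        dF (OmA ψ f (6*B) lam) z ^ n)) z := by
  obtain ⟨C1, hC1, hu⟩ := good_consts hψ hB1 hB
  obtain ⟨C2, hC2, hT⟩ := T_bound hψs hψ hi M
  obtain ⟨C3, hC3, hg⟩ := sj_geo hM
  have hB0 : 0 < B := by linarith
  refine ⟨C1 * 2 * C2 * (6*B)^(n+M) * C3, by positivity, fun f hf lam hlam hne x hx R hR y hy s z => ?_⟩
  set Ω := OmA ψ f (6*B) lam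
  set Ω' := OmA ψ f (6*B) (2*lam)
  have hsub : Ω' ⊆ Ω := OmA_anti ψ f _ (by linarith)
  have hne' : Ω'ᶜ.Nonempty := hne.mono (compl_subset_compl.2 hsub)
  have hd' := dF_anti hsub hne z
  have hu' := (hu f hf (2*lam) (by positivity) hne').1
  by_cases hz : z ∈ Ω
  swap
  · rw [indicator_of_notMem hz]
    have hdz := dF_le_dist hz z
    rw [dist_self] at hdz
    refine le_of_eq (Finset.sum_eq_zero fun j _ => ?_)
    have hsj := sj_pos j
    have : 0 < 6 * B * sj j := by positivity
    have h1 : z ∉ FJ (6*B) Ω j := by simp only [FJ, Set.mem_ofPred_eq]; linarith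
    have h2 : z ∉ FJ (6*B) Ω' j := by simp only [FJ, Set.mem_ofPred_eq]; linarith
    rw [indicator_of_notMem h1, indicator_of_notMem h2]; simp
  rw [indicator_of_mem hz]
  have hd : 0 < dF Ω z := dF_pos (OmA_open ..) hne hz
  have hdx := dF_le_dist hx z
  set d := dF Ω z with hdd
  have hD : 0 < d + dist x z := by have := dist_nonneg (x := x) (y := z); linarith
  have ha : aF Ω x z = d / (d + dist x z) := rfl
  have ha0 := aF_nonneg Ω x z
  calc _ ≤ ∑ j ∈ s, (C1*(2*lam)) * (C2 * ((6*B)^(n+M) * aF Ω x z^(n+M) / d^(n+M))) * (if sj j ≤ d then sj j ^ M else 0) := by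
        refine Finset.sum_le_sum fun j _ => ?_
        have hsj := sj_pos j
        by_cases h0 : |(FJ (6*B) Ω j).indicator (uJ ψ M f j) z -
          (FJ (6*B) Ω' j).indicator (uJ ψ M f j) z| * |cv (th ψ M (sj j)) (scl ψ R) (y - z)| = 0
        · rw [h0]
          have : (0:ℝ) ≤ if sj j ≤ d then sj j ^ M else 0 := by split_ifs <;> positivity
          positivity
        have h1 := abs_ne_zero.1 (left_ne_zero_of_mul h0)
        have h2 := abs_ne_zero.1 (right_ne_zero_of_mul h0)
        have hz1 : z ∉ FJ (6*B) Ω' j := by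
          intro h
          have h' : z ∈ FJ (6*B) Ω j := by
            simp only [FJ, Set.mem_ofPred_eq] at *; linarith
          rw [indicator_of_mem h, indicator_of_mem h'] at h1
          simp at h1
        have hz2 : z ∈ FJ (6*B) Ω j := by
          by_contra h
          rw [indicator_of_notMem h, indicator_of_notMem hz1] at h1
          simp at h1
        rw [indicator_of_mem hz2, indicator_of_notMem hz1, sub_zero]
        simp only [FJ, Set.mem_ofPred_eq] at hz1 hz2
        push Not at hz1
        have hsd : sj j ≤ d := by nlinarith
        rw [if_pos hsd, mul_assoc]
        refine mul_le_mul (hu' j z hz1) ?_ (abs_nonneg _) (by positivity)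
        refine (hT (sj j) R hsj hR (y-z)).trans ?_
        rw [mul_assoc]
        refine mul_le_mul_of_nonneg_left ?_ hC2.le
        rw [mul_comm]
        refine mul_le_mul_of_nonneg_right ?_ (by positivity)
        have hs := cv_supp (th_supp hB0.le hB hsj) (scl_supp hB' hR) _ h2
        have hxz : dist x z ≤ 3*B*(R + sj j) := by
          have := dist_triangle x y z
          rw [dist_eq_norm y z] at this
          nlinarith
        have hq : d + dist x z ≤ 6*B*(R+sj j) := by linarith
        rw [← inv_pow, ← mul_pow, ← div_pow]
        refine pow_le_pow_left₀ (by positivity) ?_ _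
        rw [ha, mul_div_assoc, div_div, mul_comm (d + dist x z), ← div_div, div_self hd.ne', mul_one_div, inv_eq_one_div, div_le_div_iff₀ (by positivity) hD]
        linarith
    _ = (C1*(2*lam)) * (C2 * ((6*B)^(n+M) * aF Ω x z^(n+M) / d^(n+M))) * ∑ j ∈ s, (if sj j ≤ d then sj j ^ M else 0) := by
        rw [Finset.mul_sum]
    _ ≤ (C1*(2*lam)) * (C2 * ((6*B)^(n+M) * aF Ω x z^(n+M) / d^(n+M))) * (C3 * d^M) :=
        mul_le_mul_of_nonneg_left (hg d hd s) (by positivity)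
    _ = _ := by
        rw [pow_add d n M]
        field_simp

lemma gN_diff {n : ℕ} {ψ : Euc n → ℝ} (hψ : CC ψ) (M : ℕ) {f : Euc n → ℝ} (hf : LocallyIntegrable f volume)
    (A : ℝ) (Ω Ω' : Set (Euc n)) (a b : ℤ) {R : ℝ} (hR : 0 < R) (y : Euc n) :
    convAt ψ (gN ψ M f A Ω' a b) R y - convAt ψ (gN ψ M f A Ω a b) R y =
    ∑ j ∈ Finset.Ioc a b, cv (fun z => (FJ A Ω j).indicator (uJ ψ M f j) z - (FJ A Ω' j).indicator (uJ ψ M f j) z)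
      (cv (th ψ M (sj j)) (scl ψ R)) y := by
  have hs : CC (scl ψ R) := hψ.scl hR
  have hu : ∀ j (O : Set (Euc n)), LocallyIntegrable ((FJ A O j).indicator (uJ ψ M f j)) volume := fun j O =>
    ind_li (uJ_cont hψ M hf j).locallyIntegrable (FJ_meas A O j)
  rw [convAt_eq, convAt_eq, ← cv_sub_left (gN_cont hψ M hf A Ω' a b).locallyIntegrable
    (gN_cont hψ M hf A Ω a b).locallyIntegrable hs]
  have e : (fun x => gN ψ M f A Ω' a b x - gN ψ M f A Ω a b x) = fun x => ∑ j ∈ Finset.Ioc a b,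
      cv (fun z => (FJ A Ω j).indicator (uJ ψ M f j) z - (FJ A Ω' j).indicator (uJ ψ M f j) z) (th ψ M (sj j)) x := by
    ext x
    unfold gN
    rw [_root_.sub_sub_sub_cancel_left, ← Finset.sum_sub_distrib]
    refine Finset.sum_congr rfl fun j _ => ?_
    rw [cv_sub_left (hu j Ω) (hu j Ω') (th_CC hψ M (sj_pos j))]
    rfl
  have hv : ∀ j, LocallyIntegrable (fun z => (FJ A Ω j).indicator (uJ ψ M f j) z - (FJ A Ω' j).indicator (uJ ψ M f j) z) volume :=
    fun j => (hu j Ω).sub (hu j Ω')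
  rw [e, cv_sum_left _ (fun j _ => cv_li (hv j) (th_CC hψ M (sj_pos j))) hs]
  refine Finset.sum_congr rfl fun j _ => ?_
  rw [cv_assoc (hv j) (th_CC hψ M (sj_pos j)) hs]

lemma far_bound {n τ : ℕ} {ψ : Euc n → ℝ} (hψs : ContDiff ℝ (⊤ : ℕ∞) ψ) (hψ : CC ψ) (hi : ∫ x, ψ x ≠ 0)
    {M : ℕ} (hM : 1 ≤ M) (hMτ : n + M = (n+1)*(τ+1))
    {B : ℝ} (hB1 : 1 ≤ B) (hB : ∀ x, Kn ψ M x ≠ 0 → ‖x‖ ≤ B) (hB' : ∀ x, ψ x ≠ 0 → ‖x‖ ≤ B) :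
    ∃ C : ℝ≥0∞, C ≠ ∞ ∧
    ∀ (f : Euc n → ℝ) (_ : LocallyIntegrable f volume) (lam : ℝ) (_ : 0 < lam)
      (_ : (OmA ψ f (6*B) lam)ᶜ.Nonempty) (x : Euc n) (_ : x ∉ OmA ψ f (6*B) lam) (R : ℝ) (_ : 0 < R)
      (y : Euc n) (_ : dist x y < R) (a b : ℤ),
      ENNReal.ofReal |convAt ψ (gN ψ M f (6*B) (OmA ψ f (6*B) (2*lam)) a b) R y -
        convAt ψ (gN ψ M f (6*B) (OmA ψ f (6*B) lam) a b) R y| ≤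
      C * (ENNReal.ofReal lam * hF (OmA ψ f (6*B) lam) x ^ (τ+1)) := by
  obtain ⟨C1, hC1, h1⟩ := far_sum hψs hψ hi hM hB1 hB hB'
  obtain ⟨C2, hC2, h2⟩ := H3 n τ
  refine ⟨ENNReal.ofReal C1 * C2, mul_ne_top ofReal_ne_top hC2, fun f hf lam hlam hne x hx R hR y hy a b => ?_⟩
  have h3 := h1 f hf lam hlam hne x hx R hR y hy (Finset.Ioc a b)
  have ho : IsOpen (OmA ψ f (6*B) lam) := OmA_open ..
  set Ω := OmA ψ f (6*B) lam
  set Ω' := OmA ψ f (6*B) (2*lam)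
  rw [gN_diff hψ M hf _ _ _ _ _ hR]
  have hmeas : ∀ j, Measurable fun z => ENNReal.ofReal (|(FJ (6*B) Ω j).indicator (uJ ψ M f j) z - (FJ (6*B) Ω' j).indicator (uJ ψ M f j) z| *
        |cv (th ψ M (sj j)) (scl ψ R) (y - z)|) := by
    intro j
    refine ENNReal.measurable_ofReal.comp (Measurable.mul ?_ ?_)
    · have hu := (uJ_cont hψ M hf j).measurable
      have := (hu.indicator (FJ_meas (6*B) Ω j)).sub (hu.indicator (FJ_meas (6*B) Ω' j))
      exact continuous_abs.measurable.comp this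
    · have := (cv_cont (th_CC hψ M (sj_pos j)).li (hψ.scl hR)).comp (continuous_const.sub continuous_id : Continuous fun z => y - z)
      exact this.abs.measurable
  calc _ ≤ ∑ j ∈ Finset.Ioc a b, ENNReal.ofReal (abs (cv (fun z => (FJ (6*B) Ω j).indicator (uJ ψ M f j) z - (FJ (6*B) Ω' j).indicator (uJ ψ M f j) z)
          (cv (th ψ M (sj j)) (scl ψ R)) y)) := by
        rw [← ENNReal.ofReal_sum_of_nonneg fun _ _ => abs_nonneg _]
        exact ENNReal.ofReal_le_ofReal (Finset.abs_sum_le_sum_abs _ _)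
    _ ≤ ∑ j ∈ Finset.Ioc a b, ∫⁻ z, ENNReal.ofReal (|(FJ (6*B) Ω j).indicator (uJ ψ M f j) z - (FJ (6*B) Ω' j).indicator (uJ ψ M f j) z| *
        |cv (th ψ M (sj j)) (scl ψ R) (y - z)|) := Finset.sum_le_sum fun j _ => abs_cv_le _ _ _
    _ = ∫⁻ z, ∑ j ∈ Finset.Ioc a b, ENNReal.ofReal (|(FJ (6*B) Ω j).indicator (uJ ψ M f j) z - (FJ (6*B) Ω' j).indicator (uJ ψ M f j) z| *
        |cv (th ψ M (sj j)) (scl ψ R) (y - z)|) := by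
        rw [lintegral_finsetSum _ fun j _ => hmeas j]
    _ ≤ ∫⁻ z, Ω.indicator (fun z => (ENNReal.ofReal C1 * ENNReal.ofReal lam) * ENNReal.ofReal (aF Ω x z ^ ((n+1)*(τ+1)) / dF Ω z ^ n)) z := by
        refine lintegral_mono fun z => ?_
        rw [← ENNReal.ofReal_sum_of_nonneg fun _ _ => by positivity]
        refine (ENNReal.ofReal_le_ofReal (h3 z)).trans ?_
        by_cases hz : z ∈ Ω
        · rw [indicator_of_mem hz, indicator_of_mem hz, ← ENNReal.ofReal_mul hC1.le, ← ENNReal.ofReal_mul (by positivity), hMτ]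
        · rw [indicator_of_notMem hz, indicator_of_notMem hz]; simp
    _ = (ENNReal.ofReal C1 * ENNReal.ofReal lam) * ∫⁻ z in Ω, ENNReal.ofReal (aF Ω x z ^ ((n+1)*(τ+1)) / dF Ω z ^ n) := by
        rw [lintegral_indicator ho.measurableSet, lintegral_const_mul' _ _ (mul_ne_top ofReal_ne_top ofReal_ne_top)]
    _ ≤ (ENNReal.ofReal C1 * ENNReal.ofReal lam) * (C2 * hF Ω x ^ (τ+1)) := mul_le_mul_right (h2 Ω ho hne x) _
    _ = _ := by ring


lemma sj_tendsto : Filter.Tendsto (fun N : ℕ => sj N) Filter.atTop (nhds 0) := by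
  have : Filter.Tendsto (fun N : ℕ => (1/2:ℝ)^N) Filter.atTop (nhds 0) :=
    _root_.tendsto_pow_atTop_nhds_zero_of_lt_one (by norm_num) (by norm_num)
  exact this.congr fun N => (sj_nat N).symm

lemma approx_cont {n : ℕ} {Q F : Euc n → ℝ} (hQ : CC Q) (hQi : ∫ x, Q x = 1) (hF : Continuous F) (y : Euc n) :
    Filter.Tendsto (fun N : ℕ => cv F (scl Q (sj N)) y) Filter.atTop (nhds (F y)) := by
  obtain ⟨B, hB1, hB⟩ := hQ.supp
  have hB0 : 0 < B := by linarith
  have hI : 0 ≤ ∫ x, |Q x| := integral_nonneg fun _ => abs_nonneg _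
  rw [Metric.tendsto_atTop]
  intro ε hε
  obtain ⟨δ, hδ, h⟩ := Metric.continuous_iff.1 hF y (ε / ((∫ x, |Q x|) + 1)) (by positivity)
  obtain ⟨N0, hN0⟩ := Metric.tendsto_atTop.1 sj_tendsto (δ / B) (by positivity)
  refine ⟨N0, fun N hN => ?_⟩
  have hs := sj_pos N
  have h1 := hN0 N hN
  rw [Real.dist_eq, sub_zero, abs_of_pos hs, lt_div_iff₀ hB0] at h1
  have hc : CC (scl Q (sj N)) := hQ.scl hs
  have e : cv F (scl Q (sj N)) y - F y = cv (fun z => F z - F y) (scl Q (sj N)) y := by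
    rw [cv_sub_left hF.locallyIntegrable (continuous_const.locallyIntegrable) hc]
    congr 1
    unfold cv
    rw [integral_const_mul, integral_sub_left_eq_self (fun z => scl Q (sj N) z) volume y, integral_scl _ hs, hQi, mul_one]
  rw [Real.dist_eq, e]
  have := cv_le (f := fun z => F z - F y) (c := ε / ((∫ x, |Q x|) + 1)) hc.integrable y (Filter.Eventually.of_forall fun z hz => by
    have := scl_supp hB hs _ hz
    have h2 := h z (by rw [dist_comm, dist_eq_norm]; linarith)
    rw [Real.dist_eq] at h2; exact h2.le)
  simp only [abs_scl Q hs] at this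
  rw [integral_scl _ hs] at this
  refine this.trans_lt ?_
  rw [div_mul_eq_mul_div, div_lt_iff₀ (by positivity)]
  nlinarith

lemma conv_GJ_lim {n : ℕ} {ψ : Euc n → ℝ} (hψ : CC ψ) (hi : ∫ x, ψ x ≠ 0) {M : ℕ} (hM : 1 ≤ M) {f : Euc n → ℝ}
    (hf : LocallyIntegrable f volume) {R : ℝ} (hR : 0 < R) (y : Euc n) :
    Filter.Tendsto (fun N : ℕ => convAt ψ (GJ ψ M f N) R y) Filter.atTop (nhds (convAt ψ f R y)) := by
  have hK := Kn_CC hψ M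
  have hs : CC (scl ψ R) := hψ.scl hR
  have hQi : ∫ x, cv (Kn ψ M) (Kn ψ M) x = 1 := by
    have := integral_convolution (ContinuousLinearMap.mul ℝ ℝ) hK.integrable hK.integrable (μ := volume) (ν := volume)
    rw [← cv_eq] at this
    rw [this, Kn_int hψ hi hM]; simp
  refine (approx_cont (hK.cv hK) hQi (cv_cont hf hs) y).congr fun N => ?_
  have hQ : CC (scl (cv (Kn ψ M) (Kn ψ M)) (sj N)) := (hK.cv hK).scl (sj_pos N)
  rw [convAt_eq]
  have e : GJ ψ M f N = cv f (scl (cv (Kn ψ M) (Kn ψ M)) (sj N)) := by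
    ext x
    unfold GJ
    rw [cv_assoc hf (hK.scl (sj_pos N)) (hK.scl (sj_pos N))]
    congr 1; ext w; exact (cv_scl_scl _ _ (sj_pos N) w)
  rw [e, cv_assoc hf hQ hs, cv_assoc hf hs hQ]
  congr 1; ext w; exact cv_comm _ _ _

lemma cvloc {n : ℕ} {v T φ : Euc n → ℝ} {y y' : Euc n} {r c : ℝ} (hc : 0 ≤ c) (hφ : LocallyIntegrable φ volume)
    (h : ∀ z, v z ≠ 0 → T (y - z) ≠ 0 → z ∈ Metric.closedBall y' r ∧ |v z| * |T (y - z)| ≤ c * |φ z|) :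
    |cv v T y| ≤ c * ∫ z in Metric.closedBall y' r, |φ z| := by
  have hi : IntegrableOn (fun z => |φ z|) (Metric.closedBall y' r) volume :=
    (hφ.integrableOn_isCompact (isCompact_closedBall _ _)).norm
  rw [← integral_const_mul, ← integral_indicator Metric.isClosed_closedBall.measurableSet]
  rw [← Real.norm_eq_abs]
  unfold cv
  refine norm_integral_le_of_norm_le (IntegrableOn.integrable_indicator (hi.const_mul _) Metric.isClosed_closedBall.measurableSet)
    (Filter.Eventually.of_forall fun z => ?_)
  by_cases hz : v z * T (y - z) = 0
  · rw [hz, norm_zero]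
    exact indicator_nonneg (fun z _ => by positivity) z
  · obtain ⟨h1, h2⟩ := h z (left_ne_zero_of_mul hz) (right_ne_zero_of_mul hz)
    rw [indicator_of_mem h1, norm_mul]; exact h2

lemma far_term {n : ℕ} {ψ : Euc n → ℝ} (hψs : ContDiff ℝ (⊤ : ℕ∞) ψ) (hψ : CC ψ) (hi : ∫ x, ψ x ≠ 0)
    {M : ℕ} (hM : n + 1 ≤ M)
    {B : ℝ} (hB1 : 1 ≤ B) (hB : ∀ x, Kn ψ M x ≠ 0 → ‖x‖ ≤ B) (hB' : ∀ x, ψ x ≠ 0 → ‖x‖ ≤ B)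
    {f : Euc n → ℝ} (hf : LocallyIntegrable f volume) {R : ℝ} (hR : 0 < R) (y : Euc n) :
    ∃ K : ℝ, 0 ≤ K ∧ ∀ (j : ℤ) (_ : 0 ≤ j) (F : Set (Euc n)),
      |cv (F.indicator (uJ ψ M f j)) (cv (th ψ M (sj j)) (scl ψ R)) y| ≤ K * sj j := by
  obtain ⟨C2, hC2, hT⟩ := T_bound hψs hψ hi M
  obtain ⟨C1, hC1, hK⟩ := (Kn_CC hψ M).bdd
  have hB0 : 0 < B := by linarith
  set L := ∫ z in Metric.closedBall y (2*B+B*R+2*B), |f z| with hL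
  have hL0 : 0 ≤ L := integral_nonneg fun _ => abs_nonneg _
  set V := ∫ z in Metric.closedBall y (2*B+B*R), |(fun _ : Euc n => (1:ℝ)) z| with hV
  have hV0 : 0 ≤ V := integral_nonneg fun _ => abs_nonneg _
  refine ⟨(2*C1*L) * (C2 * (R^(n+M))⁻¹) * V, by positivity, fun j hj F => ?_⟩
  have hs := sj_pos j
  have hs1 : sj j ≤ 1 := by have := sj_anti hj; simpa [sj] using this
  have key : ∀ t : ℝ, sj j ≤ t → t ≤ 2 * sj j → ∀ z ∈ Metric.closedBall y (2*B+B*R), |cv f (scl (Kn ψ M) t) z| ≤ C1 * (sj j^n)⁻¹ * L := by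
    intro t ht1 ht2 z hz
    have ht0 : 0 < t := hs.trans_le ht1
    refine cvloc (by positivity) hf fun w _ hw => ⟨?_, ?_⟩
    · have h1 := scl_supp hB ht0 _ hw
      rw [← dist_eq_norm, dist_comm] at h1
      rw [Metric.mem_closedBall] at *
      have := dist_triangle w z y
      nlinarith
    · rw [mul_comm]
      refine mul_le_mul_of_nonneg_right ?_ (abs_nonneg _)
      refine (scl_le hK ht0 _).trans ?_
      gcongr
  have hw : ∀ z, cv (th ψ M (sj j)) (scl ψ R) (y - z) ≠ 0 → z ∈ Metric.closedBall y (2*B+B*R) := by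
    intro z hz
    have := cv_supp (th_supp hB0.le hB hs) (scl_supp hB' hR) _ hz
    rw [Metric.mem_closedBall, dist_comm, dist_eq_norm]
    nlinarith
  have hpw : sj j ^ M ≤ sj j ^ n * sj j := by
    rw [← pow_succ]; exact pow_le_pow_of_le_one hs.le hs1 hM
  have hfin := cvloc (v := F.indicator (uJ ψ M f j)) (T := cv (th ψ M (sj j)) (scl ψ R)) (y := y) (y' := y)
    (r := 2*B+B*R) (c := (2*C1*L) * (C2 * (R^(n+M))⁻¹) * sj j) (φ := fun _ => 1) (by positivity)
    (continuous_const.locallyIntegrable) (fun z hz1 hz2 => ⟨hw z hz2, ?_⟩)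
  · refine hfin.trans (le_of_eq ?_)
    rw [← hV]; ring
  · have hz := hw z hz2
    have h1 : |F.indicator (uJ ψ M f j) z| ≤ 2*C1*(sj j^n)⁻¹*L := by
      rw [indicator_of_mem (mem_of_indicator_ne_zero hz1)]
      unfold uJ
      refine (abs_add_le _ _).trans ?_
      have := key _ le_rfl (by linarith) z hz
      have := key (2*sj j) (by linarith) le_rfl z hz
      linarith
    have h2 : |cv (th ψ M (sj j)) (scl ψ R) (y - z)| ≤ C2 * ((sj j^n * sj j) * (R^(n+M))⁻¹) := by
      refine (hT _ R hs hR _).trans ?_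
      refine mul_le_mul_of_nonneg_left ?_ hC2.le
      refine mul_le_mul hpw ?_ (by positivity) (by positivity)
      refine inv_anti₀ (by positivity) (pow_le_pow_left₀ hR.le (by linarith) _)
    refine (mul_le_mul h1 h2 (abs_nonneg _) (by positivity)).trans (le_of_eq ?_)
    field_simp
    simp

lemma dF_small {n : ℕ} {Ω : Set (Euc n)} {r : ℝ} (hr : 0 < r) (hv : volume Ω < volume (Metric.ball (0:Euc n) r)) (y : Euc n) :
    dF Ω y < r := by
  by_contra h
  push Not at h
  have h1 : Metric.ball y r ⊆ Ω := by
    intro z hz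
    by_contra hz'
    have := dF_le_dist hz' y
    rw [Metric.mem_ball] at hz; linarith
  have h2 := measure_mono (μ := volume) h1
  rw [Measure.addHaar_ball_center] at h2
  exact absurd h2 (not_le.2 hv)

lemma good_lim {n : ℕ} {ψ : Euc n → ℝ} (hψs : ContDiff ℝ (⊤ : ℕ∞) ψ) (hψ : CC ψ) (hi : ∫ x, ψ x ≠ 0)
    {M : ℕ} (hM : n + 1 ≤ M)
    {B : ℝ} (hB1 : 1 ≤ B) (hB : ∀ x, Kn ψ M x ≠ 0 → ‖x‖ ≤ B) (hB' : ∀ x, ψ x ≠ 0 → ‖x‖ ≤ B)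
    {f : Euc n → ℝ} (hf : LocallyIntegrable f volume) {Ω : ℕ → Set (Euc n)} {g : ℕ → Euc n → ℝ}
    (hΩ : Filter.Tendsto (fun b => volume (Ω b)) Filter.atTop (nhds 0))
    (hg : ∀ (b : ℕ) (R : ℝ) (_ : 0 < R) (y : Euc n), Filter.Tendsto
        (fun N : ℕ => convAt ψ (gN ψ M f (6*B) (Ω b) (-N) N) R y) Filter.atTop
        (nhds (convAt ψ (g b) R y))) {R : ℝ} (hR : 0 < R) (y : Euc n) :
    Filter.Tendsto (fun b : ℕ => convAt ψ (g b) R y) Filter.atTop (nhds (convAt ψ f R y)) := by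
  obtain ⟨K, hK, h⟩ := far_term hψs hψ hi hM hB1 hB hB' hf hR y
  obtain ⟨C3, hC3, hgeo⟩ := sj_geo (le_refl 1)
  have hB0 : 0 < B := by linarith
  have main : ∀ J : ℕ, ∀ b, volume (Ω b) < volume (Metric.ball (0:Euc n) (6*B*sj J)) →
      |convAt ψ f R y - convAt ψ (g b) R y| ≤ K * C3 * sj J := by
    intro J b hb
    have hsJ := sj_pos J
    refine le_of_tendsto ((conv_GJ_lim hψ hi (by omega : 1 ≤ M) hf hR y).sub (hg b R hR y)).abs
      (Filter.Eventually.of_forall fun N => ?_)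
    have hem : ∀ j, FJ (6*B) (∅ : Set (Euc n)) j = ∅ := by
      intro j
      ext z
      simp only [FJ, Set.mem_ofPred_eq, mem_empty_iff_false, iff_false, not_le]
      have : dF (∅ : Set (Euc n)) z = 0 := Metric.infDist_zero_of_mem (by simp)
      rw [this]; have := sj_pos j; positivity
    have e : GJ ψ M f N = gN ψ M f (6*B) ∅ (-N) N := by
      ext x
      unfold gN
      rw [Finset.sum_eq_zero, sub_zero]
      intro j _
      unfold bJ cv; rw [hem]; simp
    rw [e, gN_diff hψ M hf _ _ _ _ _ hR]
    calc _ ≤ ∑ j ∈ Finset.Ioc (-(N:ℤ)) N, K * (if sj j ≤ sj J then sj j^1 else 0) := by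
          refine (Finset.abs_sum_le_sum_abs _ _).trans (Finset.sum_le_sum fun j _ => ?_)
          simp only [hem, indicator_empty, sub_zero]
          split_ifs with hj
          · rw [pow_one]
            refine h j ?_ _
            by_contra hlt
            push Not at hlt
            have : sj j ≤ 1 := hj.trans (by have := sj_anti (show (0:ℤ) ≤ J by omega); simpa [sj] using this)
            have h2 := sj_anti (show j ≤ -1 by omega)
            norm_num [sj] at h2 this
            linarith
          · have : FJ (6*B) (Ω b) j = ∅ := by
              ext z
              simp only [FJ, Set.mem_ofPred_eq, mem_empty_iff_false, iff_false, not_le]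
              refine (dF_small (by positivity) hb z).trans_le ?_
              push Not at hj
              exact mul_le_mul_of_nonneg_left hj.le (by positivity)
            unfold cv
            rw [this]; simp
      _ = K * ∑ j ∈ Finset.Ioc (-(N:ℤ)) N, (if sj j ≤ sj J then sj j^1 else 0) := by rw [Finset.mul_sum]
      _ ≤ K * (C3 * sj J^1) := mul_le_mul_of_nonneg_left (hgeo _ hsJ _) hK
      _ = _ := by rw [pow_one]; ring
  rw [Metric.tendsto_atTop]
  intro ε hε
  obtain ⟨J, hJ⟩ := Metric.tendsto_atTop.1 sj_tendsto (ε / (K * C3 + 1)) (by positivity)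
  have hJ := hJ J le_rfl
  have hsJ := sj_pos J
  rw [Real.dist_eq, sub_zero, abs_of_pos hsJ, lt_div_iff₀ (by positivity)] at hJ
  have hev := hΩ.eventually (gt_mem_nhds (Metric.measure_ball_pos volume (0:Euc n) (show 0 < 6*B*sj J by positivity)))
  obtain ⟨b0, hb0⟩ := Filter.eventually_atTop.1 hev
  refine ⟨b0, fun b hb => ?_⟩
  have := main J b (hb0 b hb)
  rw [Real.dist_eq, abs_sub_comm]
  nlinarith


lemma ofReal_two_zpow (k : ℤ) : ENNReal.ofReal ((2:ℝ)^k) = (2:ℝ≥0∞)^k := by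
  rw [zpow_eq_rpow2, ← Real.rpow_intCast, ← ENNReal.ofReal_rpow_of_pos (by norm_num)]; norm_num

lemma conv_bdd {n : ℕ} {ψ : Euc n → ℝ} (hψ : CC ψ) {g : Euc n → ℝ} {c : ℝ} (hg : ∀ᵐ x, |g x| ≤ c)
    {R : ℝ} (hR : 0 < R) (y : Euc n) : |convAt ψ g R y| ≤ c * ∫ x, |ψ x| := by
  rw [convAt_eq]
  refine (cv_le (c := c) (hψ.scl hR).integrable y (by filter_upwards [hg] with z hz _ using hz)).trans (le_of_eq ?_)
  simp only [abs_scl ψ hR]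
  rw [integral_scl _ hR]

lemma decomp {n : ℕ} (hn : 1 ≤ n) {ψ : Euc n → ℝ} (hψs : ContDiff ℝ (⊤ : ℕ∞) ψ) (hψc : HasCompactSupport ψ)
    (hi : ∫ x, ψ x ≠ 0) {τ : ℕ} (hτ : 1 ≤ τ) : ∃ C : ℝ≥0∞, C ≠ ∞ ∧
    ∀ (f : Euc n → ℝ) (_ : LocallyIntegrable f volume)
      (_ : ∀ k : ℤ, distFn (ntMax ψ f) ((2:ℝ≥0∞)^k) ≠ ∞)
      (_ : Filter.Tendsto (fun N : ℕ => distFn (ntMax ψ f) ((2:ℝ≥0∞)^(N:ℤ))) Filter.atTop (nhds 0)),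
      ∃ (g : ℤ → Euc n → ℝ) (h : ℤ → Euc n → ℝ≥0∞),
        (∀ k, LocallyIntegrable (g k) volume) ∧
        (∀ (R : ℝ) (_ : 0 < R) (y : Euc n),
          Filter.Tendsto (fun N : ℕ => convAt ψ (g (-(N:ℤ))) R y) Filter.atTop (nhds 0)) ∧
        (∀ (R : ℝ) (_ : 0 < R) (y : Euc n),
          Filter.Tendsto (fun N : ℕ => convAt ψ (g (N:ℤ)) R y) Filter.atTop (nhds (convAt ψ f R y))) ∧
        (∀ k, Measurable (h k)) ∧
        (∀ k, ∫⁻ x, h k x ≤ C * distFn (ntMax ψ f) ((2:ℝ≥0∞)^k)) ∧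
        (∀ k x, ntMax ψ (fun z => g (k+1) z - g k z) x ≤ C * ((2:ℝ≥0∞)^k * min 1 (h k x ^ (τ+1)))) := by
  have hψ : CC ψ := ⟨hψs.continuous, hψc⟩
  set M := (n+1)*(τ+1) - n with hMdef
  have hge : n + 1 ≤ (n+1)*(τ+1) := Nat.le_mul_of_pos_right _ (by omega)
  have hge2 : (n+1)*2 ≤ (n+1)*(τ+1) := Nat.mul_le_mul_left _ (by omega)
  have hM1 : n + 1 ≤ M := by omega
  have hM : 1 ≤ M := by omega
  have hMτ : n + M = (n+1)*(τ+1) := by omega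
  obtain ⟨B1, hB11, hB1⟩ := (Kn_CC hψ M).supp
  obtain ⟨B2, hB21, hB2⟩ := hψ.supp
  set B := max B1 B2
  have hB0 : 1 ≤ B := hB11.trans (le_max_left _ _)
  have hBp : 0 < B := by linarith
  have hB : ∀ x, Kn ψ M x ≠ 0 → ‖x‖ ≤ B := fun x hx => (hB1 x hx).trans (le_max_left _ _)
  have hB' : ∀ x, ψ x ≠ 0 → ‖x‖ ≤ B := fun x hx => (hB2 x hx).trans (le_max_right _ _)
  obtain ⟨C1, hC1, h1⟩ := good_exists hn hψ hi hM hB0 hB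
  obtain ⟨C2, hC2, h2⟩ := far_bound hψs hψ hi hM hMτ hB0 hB hB'
  obtain ⟨C3, hC3, h3⟩ := hF_ge (n := n)
  obtain ⟨C4, hC4, h4⟩ := aperture hn (A := 6*B) (by positivity)
  obtain ⟨C5, hC5, h5⟩ := H1 n
  set I := ∫ x, |ψ x|
  have hI : 0 ≤ I := integral_nonneg fun _ => abs_nonneg _
  set D := ENNReal.ofReal (3*C1*I) with hD
  refine ⟨ENNReal.ofReal C1 + C4 + C5*C4 + D + C2 + D * C3^(τ+1), ?_, fun f hf hfin hlim => ?_⟩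
  · simp only [ne_eq, ENNReal.add_eq_top, not_or]
    exact ⟨⟨⟨⟨⟨ofReal_ne_top, hC4⟩, mul_ne_top hC5 hC4⟩, ofReal_ne_top⟩, hC2⟩, mul_ne_top ofReal_ne_top (pow_ne_top hC3)⟩
  set Ω : ℤ → Set (Euc n) := fun k => OmA ψ f (6*B) ((2:ℝ)^k) with hΩ
  have hpos : ∀ k : ℤ, (0:ℝ) < 2^k := fun k => by positivity
  have hd1 : ∀ k : ℤ, volume (OmA ψ f 1 ((2:ℝ)^k)) = distFn (ntMax ψ f) ((2:ℝ≥0∞)^k) := by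
    intro k; rw [OmA_one ψ f (hpos k).le, ofReal_two_zpow]; rfl
  have hv : ∀ k, volume (Ω k) ≤ C4 * distFn (ntMax ψ f) ((2:ℝ≥0∞)^k) := by
    intro k
    have := h4 ψ f ((2:ℝ)^k) (by rw [hd1]; exact hfin k)
    rwa [hd1] at this
  have hvf : ∀ k, volume (Ω k) ≠ ∞ := fun k => ne_top_of_le_ne_top (mul_ne_top hC4 (hfin k)) (hv k)
  have hne : ∀ k, (Ω k)ᶜ.Nonempty := fun k => compl_ne hn (hvf k)
  have ho : ∀ k, IsOpen (Ω k) := fun k => OmA_open ..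
  choose g hg1 hg2 hg3 hg4 using fun k : ℤ => h1 f hf ((2:ℝ)^k) (hpos k) (hvf k)
  have hle1 : ENNReal.ofReal C1 ≤ ENNReal.ofReal C1 + C4 + C5*C4 + D + C2 + D * C3^(τ+1) := by
    simp only [add_assoc]; exact le_self_add
  have hle2 : C4 ≤ ENNReal.ofReal C1 + C4 + C5*C4 + D + C2 + D * C3^(τ+1) := by
    simp only [add_assoc]; exact le_add_left le_self_add
  have hle3 : C5*C4 ≤ ENNReal.ofReal C1 + C4 + C5*C4 + D + C2 + D * C3^(τ+1) := by
    simp only [add_assoc]; exact le_add_left (le_add_left le_self_add)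
  have hle4 : D + C2 + D * C3^(τ+1) ≤ ENNReal.ofReal C1 + C4 + C5*C4 + D + C2 + D * C3^(τ+1) := by
    simp only [add_assoc]; exact le_add_left (le_add_left (le_add_left le_rfl))
  have hΩ0 : Filter.Tendsto (fun N : ℕ => volume (Ω N)) Filter.atTop (nhds 0) := by
    have := ENNReal.Tendsto.const_mul hlim (Or.inr hC4)
    rw [mul_zero] at this
    exact tendsto_of_tendsto_of_tendsto_of_le_of_le tendsto_const_nhds this (fun _ => zero_le) (fun N => hv N)
  refine ⟨g, fun k => hF (Ω k), hg1, fun R hR y => ?_, fun R hR y => ?_, fun k => hF_meas _, fun k => ?_, fun k x => ?_⟩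
  · have h6 : Filter.Tendsto (fun N : ℕ => C1 * sj N * I) Filter.atTop (nhds (C1 * 0 * I)) :=
      (sj_tendsto.const_mul C1).mul_const I
    rw [mul_zero, zero_mul] at h6
    refine squeeze_zero_norm (fun N => ?_) h6
    exact conv_bdd hψ (hg2 (-N)) hR y
  · exact good_lim hψs hψ hi hM1 hB0 hB hB' hf hΩ0 (fun b => hg4 b) hR y
  · calc _ ≤ C5 * volume (Ω k) := h5 _ (ho k) (hne k)
      _ ≤ C5 * (C4 * distFn (ntMax ψ f) ((2:ℝ≥0∞)^k)) := mul_le_mul_right (hv k) _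
      _ = C5 * C4 * distFn (ntMax ψ f) ((2:ℝ≥0∞)^k) := by ring
      _ ≤ _ := mul_le_mul_left hle3 _
  · have e2 : (2:ℝ)^(k+1) = 2 * 2^k := by rw [zpow_add₀ two_ne_zero, zpow_one, mul_comm]
    have hA : ntMax ψ (fun z => g (k+1) z - g k z) x ≤ D * (2:ℝ≥0∞)^k := by
      refine iSup_le fun y => iSup_le fun R => iSup_le fun hR => iSup_le fun _ => ?_
      have := conv_bdd hψ (g := fun z => g (k+1) z - g k z) (c := 3*C1*2^k) (by
        filter_upwards [hg2 (k+1), hg2 k] with z ha hb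
        rw [e2] at ha
        have := abs_sub (g (k+1) z) (g k z)
        linarith) hR y
      refine (ENNReal.ofReal_le_ofReal this).trans (le_of_eq ?_)
      rw [hD, ← ofReal_two_zpow, ← ENNReal.ofReal_mul (by positivity)]
      congr 1; ring
    have hBd : ntMax ψ (fun z => g (k+1) z - g k z) x ≤ (C2 + D * C3^(τ+1)) * ((2:ℝ≥0∞)^k * hF (Ω k) x ^ (τ+1)) := by
      by_cases hx : x ∈ Ω k
      · have h6 := h3 (Ω k) (ho k) (hne k) x hx
        calc _ ≤ D * (2:ℝ≥0∞)^k := hA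
          _ = D * (2:ℝ≥0∞)^k * 1 ^ (τ+1) := by simp
          _ ≤ D * (2:ℝ≥0∞)^k * (C3 * hF (Ω k) x) ^ (τ+1) := by gcongr
          _ = D * C3^(τ+1) * ((2:ℝ≥0∞)^k * hF (Ω k) x ^ (τ+1)) := by rw [mul_pow]; ring
          _ ≤ _ := mul_le_mul_left le_add_self _
      · refine le_trans ?_ (mul_le_mul_left (le_self_add (a := C2)) _)
        refine iSup_le fun y => iSup_le fun R => iSup_le fun hR => iSup_le fun hy => ?_
        have hl : Filter.Tendsto (fun N : ℕ => convAt ψ (gN ψ M f (6*B) (Ω (k+1)) (-N) N) R y -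
            convAt ψ (gN ψ M f (6*B) (Ω k) (-N) N) R y) Filter.atTop (nhds (convAt ψ (fun z => g (k+1) z - g k z) R y)) := by
          have e : convAt ψ (fun z => g (k+1) z - g k z) R y = convAt ψ (g (k+1)) R y - convAt ψ (g k) R y :=
            cv_sub_left (hg1 _) (hg1 _) (hψ.scl hR) y
          rw [e]
          exact (hg4 (k+1) R hR y).sub (hg4 k R hR y)
        refine le_of_tendsto (ENNReal.tendsto_ofReal hl.abs) (Filter.Eventually.of_forall fun N => ?_)
        have := h2 f hf ((2:ℝ)^k) (hpos k) (hne k) x hx R hR y hy (-N) N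
        rw [← e2, ofReal_two_zpow] at this
        exact this
    refine le_trans ?_ (mul_le_mul_left hle4 _)
    rcases min_cases 1 (hF (Ω k) x ^ (τ+1)) with ⟨h, _⟩ | ⟨h, _⟩
    · rw [h, mul_one]
      refine hA.trans (mul_le_mul_left ?_ _)
      rw [add_assoc]; exact le_self_add
    · rw [h]
      refine hBd.trans (mul_le_mul_left ?_ _)
      rw [add_assoc]; exact le_add_self


lemma ellq_mono {q : ℝ≥0∞} {a b : ℤ → ℝ≥0∞} (h : ∀ k, a k ≤ b k) : ellq q a ≤ ellq q b := by
  unfold ellq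
  split_ifs
  · exact iSup_mono h
  · have : 0 ≤ q.toReal := toReal_nonneg
    gcongr with k; exact h k

lemma ellq_const {q : ℝ≥0∞} (hq : q ≠ 0) (C : ℝ≥0∞) (a : ℤ → ℝ≥0∞) : ellq q (fun k => C * a k) = C * ellq q a := by
  unfold ellq
  split_ifs with hqt
  · rw [ENNReal.mul_iSup]
  · have hq0 : 0 < q.toReal := toReal_pos hq hqt
    simp only [ENNReal.mul_rpow_of_nonneg _ _ hq0.le]
    rw [ENNReal.tsum_mul_left, ENNReal.mul_rpow_of_nonneg _ _ (by positivity), ← ENNReal.rpow_mul,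
      mul_one_div_cancel hq0.ne', ENNReal.rpow_one]

lemma lorentz_ellq {n : ℕ} (p : ℝ) (q : ℝ≥0∞) (F : Euc n → ℝ≥0∞) :
    lorentzNorm p q F = ellq q (fun k => (2:ℝ≥0∞)^k * (distFn F ((2:ℝ≥0∞)^k))^(1/p)) := rfl

lemma tsum_pow_le (x : ℕ → ℝ≥0∞) (τ : ℕ) : ∑' i, x i ^ (τ+1) ≤ (∑' i, x i) ^ (τ+1) := by
  calc ∑' i, x i ^ (τ+1) ≤ ∑' i, (∑' i, x i)^τ * x i := by
        refine ENNReal.tsum_le_tsum fun i => ?_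
        rw [pow_succ]
        gcongr
        exact ENNReal.le_tsum i
    _ = _ := by rw [ENNReal.tsum_mul_left, pow_succ]

lemma exists_two_zpow (C : ℝ≥0∞) (hC : C ≠ ∞) : ∃ e : ℤ, C ≤ (2:ℝ≥0∞)^e := by
  obtain ⟨N, hN⟩ := pow_unbounded_of_one_lt C.toReal (one_lt_two (α := ℝ))
  refine ⟨N, ?_⟩
  rw [zpow_natCast, ← ENNReal.ofReal_toReal hC]
  refine (ENNReal.ofReal_le_ofReal hN.le).trans (le_of_eq ?_)
  rw [ENNReal.ofReal_pow (by norm_num)]; norm_num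

lemma tail_reindex (G : ℤ → ℝ≥0∞) (l : ℤ) : ∑' k : ℤ, (if l < k then G k else 0) = ∑' i : ℕ, G (l + 1 + i) := by
  have hinj : Function.Injective (fun i : ℕ => l + 1 + (i:ℤ)) := fun i j h => by
    simp only at h; omega
  rw [← hinj.tsum_eq]
  · refine tsum_congr fun i => ?_
    rw [if_pos (by omega)]
  · intro k hk
    simp only [Function.mem_support, ne_eq, ite_eq_right_iff, Classical.not_imp] at hk
    refine ⟨(k - l - 1).toNat, ?_⟩
    simp only; omega

lemma lor {n : ℕ} {p : ℝ} (hp : 0 < p) {τ : ℕ} (hτ : 1 / ((τ:ℝ)+1) < p) {q : ℝ≥0∞} (hq : q ≠ 0) {C0 : ℝ≥0∞} (hC0 : C0 ≠ ∞) :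
    ∃ C : ℝ≥0∞, C ≠ ∞ ∧ ∀ (F : Euc n → ℝ≥0∞) (h : ℤ → Euc n → ℝ≥0∞) (m : ℤ → ℝ≥0∞),
      (∀ k, Measurable (h k)) → (∀ k, ∫⁻ x, h k x ≤ C0 * m k) →
      (∀ x, F x ≤ C0 * ∑' k : ℤ, (2:ℝ≥0∞)^k * min 1 (h k x ^ (τ+1))) →
      lorentzNorm p q F ≤ C * ellq q (fun k => (2:ℝ≥0∞)^k * (m k)^(1/p)) := by
  set r := 1 / ((τ:ℝ)+1) with hr
  have hr0 : 0 < r := by positivity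
  have hrτ : r * ((τ:ℝ)+1) = 1 := by rw [hr]; field_simp
  obtain ⟨Cg, hCg, hgeo⟩ := geo_sum (q := 1) one_pos
  obtain ⟨e, he⟩ := exists_two_zpow (C0 * (Cg + 1)) (mul_ne_top hC0 (add_ne_top.2 ⟨hCg, one_ne_top⟩))
  obtain ⟨C1, hC1, hconv⟩ := gconv (δ := p - r) (by linarith) hp hq
  set D := (C0 * (2:ℝ≥0∞)^(e*p + (r - p)))^(1/p) with hD
  have hDt : D ≠ ∞ := rpow_ne_top_of_nonneg (by positivity) (mul_ne_top hC0 (two_rpow_ne_top _))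
  refine ⟨D * C1, mul_ne_top hDt hC1, fun F h m hm hint hF => ?_⟩
  set a : ℤ → ℝ≥0∞ := fun k => (2:ℝ≥0∞)^k * (m k)^(1/p) with ha
  have ham : ∀ k : ℤ, m k = (2:ℝ≥0∞)^(-(k*p)) * a k ^ p := by
    intro k
    simp only [ha]
    rw [ENNReal.mul_rpow_of_nonneg _ _ hp.le, zpow_eq_rpow2, ← ENNReal.rpow_mul, ← ENNReal.rpow_mul,
      one_div_mul_cancel hp.ne', ENNReal.rpow_one, ← mul_assoc, ← two_rpow_add]
    simp
  have key : ∀ l : ℤ, (2:ℝ≥0∞)^l * (distFn F ((2:ℝ≥0∞)^l))^(1/p) ≤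
      D * (∑' i : ℕ, (2:ℝ≥0∞)^(-((p-r)*i)) * (a (l + (i + 1 - e)))^p)^(1/p) := by
    intro l
    set l' := l - e with hl'
    set X : Euc n → ℝ≥0∞ := fun x => ∑' i : ℕ, (2:ℝ≥0∞)^(((l' + 1 + i : ℤ):ℝ) * r) * h (l' + 1 + i) x with hX
    have hsub : {x | (2:ℝ≥0∞)^l < F x} ⊆ {x | (2:ℝ≥0∞)^((l':ℝ)*r) ≤ X x} := by
      intro x hx
      by_contra hxn
      simp only [Set.mem_ofPred_eq, not_le] at hx hxn
      have h1 : ∑' k : ℤ, (2:ℝ≥0∞)^k * min 1 (h k x ^ (τ+1)) ≤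
          (∑' k : ℤ, (if (2:ℝ≥0∞)^k ≤ (2:ℝ≥0∞)^l' then ((2:ℝ≥0∞)^k)^(1:ℝ) else 0)) +
          ∑' k : ℤ, (if l' < k then (2:ℝ≥0∞)^k * h k x ^ (τ+1) else 0) := by
        rw [← ENNReal.tsum_add]
        refine ENNReal.tsum_le_tsum fun k => ?_
        by_cases hk : l' < k
        · rw [if_pos hk]
          exact le_add_left (mul_le_mul_right (min_le_right _ _) _)
        · have : (2:ℝ≥0∞)^k ≤ (2:ℝ≥0∞)^l' := by
            rw [zpow_eq_rpow2, zpow_eq_rpow2]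
            refine ENNReal.rpow_le_rpow_of_exponent_le (by norm_num) ?_
            push Not at hk; exact_mod_cast hk
          rw [if_neg hk, if_pos this, add_zero, ENNReal.rpow_one]
          exact (mul_le_mul_right (min_le_left _ _) _).trans (by rw [mul_one])
      have h2 : ∑' k : ℤ, (if l' < k then (2:ℝ≥0∞)^k * h k x ^ (τ+1) else 0) ≤ (2:ℝ≥0∞)^l' := by
        rw [tail_reindex (fun k => (2:ℝ≥0∞)^k * h k x ^ (τ+1))]
        calc _ = ∑' i : ℕ, ((2:ℝ≥0∞)^(((l' + 1 + i : ℤ):ℝ) * r) * h (l' + 1 + i) x)^(τ+1) := by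
              refine tsum_congr fun i => ?_
              rw [mul_pow, ← ENNReal.rpow_natCast ((2:ℝ≥0∞)^_), ← ENNReal.rpow_mul]
              push_cast
              rw [mul_assoc, hrτ, mul_one, zpow_eq_rpow2]; push_cast; rfl
          _ ≤ (X x)^(τ+1) := tsum_pow_le _ _
          _ ≤ ((2:ℝ≥0∞)^((l':ℝ)*r))^(τ+1) := by gcongr
          _ = _ := by
              rw [← ENNReal.rpow_natCast, ← ENNReal.rpow_mul]
              push_cast
              rw [mul_assoc, hrτ, mul_one, zpow_eq_rpow2]
      have h3 := hgeo ((2:ℝ≥0∞)^l')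
      rw [ENNReal.rpow_one] at h3
      have : F x ≤ (2:ℝ≥0∞)^l := by
        calc F x ≤ C0 * (Cg * (2:ℝ≥0∞)^l' + (2:ℝ≥0∞)^l') := (hF x).trans (mul_le_mul_right (h1.trans (add_le_add h3 h2)) _)
          _ = C0 * (Cg + 1) * (2:ℝ≥0∞)^l' := by ring
          _ ≤ (2:ℝ≥0∞)^e * (2:ℝ≥0∞)^l' := mul_le_mul_left he _
          _ = _ := by
            rw [zpow_eq_rpow2, zpow_eq_rpow2, zpow_eq_rpow2, ← two_rpow_add, hl']; push_cast; congr 1; ring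
      exact absurd hx (not_lt.2 this)
    have hmk : distFn F ((2:ℝ≥0∞)^l) ≤ ∑' i : ℕ, (2:ℝ≥0∞)^((1 + (i:ℝ)) * r) * (C0 * m (l' + 1 + i)) := by
      have h1 := measure_mono (μ := volume) hsub
      have hXm : Measurable X := Measurable.ennreal_tsum fun i => (hm _).const_mul _
      have h2 := mul_meas_ge_le_lintegral (μ := volume) hXm ((2:ℝ≥0∞)^((l':ℝ)*r))
      have h3 : ∫⁻ x, X x ≤ ∑' i : ℕ, (2:ℝ≥0∞)^(((l' + 1 + i : ℤ):ℝ) * r) * (C0 * m (l' + 1 + i)) := by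
        rw [hX, lintegral_tsum fun i => ((hm _).const_mul _).aemeasurable]
        refine ENNReal.tsum_le_tsum fun i => ?_
        rw [lintegral_const_mul _ (hm _)]
        exact mul_le_mul_right (hint _) _
      have h4 : (2:ℝ≥0∞)^((l':ℝ)*r) * distFn F ((2:ℝ≥0∞)^l) ≤ ∑' i : ℕ, (2:ℝ≥0∞)^(((l' + 1 + i : ℤ):ℝ) * r) * (C0 * m (l' + 1 + i)) :=
        (mul_le_mul_right h1 _).trans (h2.trans h3)
      have h5 := mul_le_mul_right h4 ((2:ℝ≥0∞)^(-((l':ℝ)*r)))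
      rw [← mul_assoc, ← two_rpow_add, neg_add_cancel, ENNReal.rpow_zero, one_mul, ← ENNReal.tsum_mul_left] at h5
      refine h5.trans (le_of_eq (tsum_congr fun i => ?_))
      rw [← mul_assoc, ← two_rpow_add]
      congr 2
      push_cast; ring
    calc _ = ((2:ℝ≥0∞)^((l:ℝ)*p) * distFn F ((2:ℝ≥0∞)^l))^(1/p) := by
          rw [ENNReal.mul_rpow_of_nonneg _ _ (by positivity), ← ENNReal.rpow_mul, mul_assoc, mul_one_div_cancel hp.ne', mul_one, zpow_eq_rpow2]
      _ ≤ ((2:ℝ≥0∞)^((l:ℝ)*p) * ∑' i : ℕ, (2:ℝ≥0∞)^((1 + (i:ℝ)) * r) * (C0 * m (l' + 1 + i)))^(1/p) := by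
          refine ENNReal.rpow_le_rpow (mul_le_mul_right hmk _) (by positivity)
      _ = ((C0 * (2:ℝ≥0∞)^(e*p + (r - p))) * ∑' i : ℕ, (2:ℝ≥0∞)^(-((p-r)*i)) * (a (l + (i + 1 - e)))^p)^(1/p) := by
          congr 1
          rw [← ENNReal.tsum_mul_left, ← ENNReal.tsum_mul_left]
          refine tsum_congr fun i => ?_
          have e1 : l' + 1 + (i:ℤ) = l + (i + 1 - e) := by rw [hl']; ring
          rw [e1, ham (l + (i + 1 - e))]
          have e2 : (2:ℝ≥0∞)^((l:ℝ)*p) * ((2:ℝ≥0∞)^((1 + (i:ℝ)) * r) * (2:ℝ≥0∞)^(-(((l + (i + 1 - e) : ℤ):ℝ)*p))) =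
              (2:ℝ≥0∞)^(e*p + (r - p)) * (2:ℝ≥0∞)^(-((p-r)*i)) := by
            rw [← two_rpow_add, ← two_rpow_add, ← two_rpow_add]
            congr 1; push_cast; ring
          calc _ = C0 * ((2:ℝ≥0∞)^((l:ℝ)*p) * ((2:ℝ≥0∞)^((1 + (i:ℝ)) * r) * (2:ℝ≥0∞)^(-(((l + (i + 1 - e) : ℤ):ℝ)*p)))) * a (l + (i + 1 - e))^p := by ring
            _ = _ := by rw [e2]; ring
      _ = _ := by rw [ENNReal.mul_rpow_of_nonneg _ _ (by positivity)]
  rw [lorentz_ellq]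
  calc _ ≤ ellq q (fun l => D * (∑' i : ℕ, (2:ℝ≥0∞)^(-((p-r)*i)) * (a (l + (i + 1 - e)))^p)^(1/p)) := ellq_mono key
    _ = D * ellq q (fun l => (∑' i : ℕ, (2:ℝ≥0∞)^(-((p-r)*i)) * (a (l + (i + 1 - e)))^p)^(1/p)) := ellq_const hq _ _
    _ ≤ D * (C1 * ellq q a) := mul_le_mul_right (hconv (fun i => i + 1 - e) a) _
    _ = _ := by ring


lemma telesc (c : ℤ → ℝ) (N : ℕ) : ∑ k ∈ Finset.Ico (-(N:ℤ)) N, (c (k+1) - c k) = c N - c (-N) := by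
  induction N with
  | zero => simp
  | succ N ih =>
    have e : Finset.Ico (-((N+1:ℕ):ℤ)) ((N+1:ℕ):ℤ) = insert (N:ℤ) (insert (-((N+1:ℕ):ℤ)) (Finset.Ico (-(N:ℤ)) N)) := by
      ext j; simp only [Finset.mem_Ico, Finset.mem_insert]; push_cast; omega
    rw [e, Finset.sum_insert, Finset.sum_insert, ih]
    · push_cast
      rw [show -((N:ℤ)+1)+1 = -(N:ℤ) by ring]; ring
    · simp only [Finset.mem_Ico]; push_cast; omega
    · simp only [Finset.mem_Ico, Finset.mem_insert]; push_cast; omega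

lemma le_ntMax {n : ℕ} (ψ f : Euc n → ℝ) {x y : Euc n} {R : ℝ} (hR : 0 < R) (hy : dist x y < R) :
    ENNReal.ofReal |convAt ψ f R y| ≤ ntMax ψ f x := by
  unfold ntMax
  exact le_iSup_of_le y (le_iSup_of_le R (le_iSup_of_le hR (le_iSup_of_le hy le_rfl)))

lemma conv_delta {n : ℕ} {ψ : Euc n → ℝ} (hψ : CC ψ) {g : ℤ → Euc n → ℝ} (hg : ∀ k, LocallyIntegrable (g k) volume)
    (S : Finset ℤ) {R : ℝ} (hR : 0 < R) (y : Euc n) :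
    convAt ψ (fun z => ∑ k ∈ S, (g (k+1) z - g k z)) R y = ∑ k ∈ S, (convAt ψ (g (k+1)) R y - convAt ψ (g k) R y) := by
  have hs : CC (scl ψ R) := hψ.scl hR
  simp only [convAt_eq]
  rw [cv_sum_left S (f := fun k z => g (k+1) z - g k z) (fun k _ => (hg (k+1)).sub (hg k)) hs]
  exact Finset.sum_congr rfl fun k _ => cv_sub_left (hg _) (hg _) hs y

lemma split0 {n : ℕ} {ψ : Euc n → ℝ} (hψ : CC ψ) {g : ℤ → Euc n → ℝ} (hg : ∀ k, LocallyIntegrable (g k) volume)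
    (S : Finset ℤ) (x : Euc n) :
    ntMax ψ (fun z => ∑ k ∈ S, (g (k+1) z - g k z)) x ≤
      ∑' k : ℤ, (if k ∈ S then ntMax ψ (fun z => g (k+1) z - g k z) x else 0) := by
  refine iSup_le fun y => iSup_le fun R => iSup_le fun hR => iSup_le fun hy => ?_
  rw [conv_delta hψ hg S hR]
  calc _ ≤ ∑ k ∈ S, ENNReal.ofReal |convAt ψ (g (k+1)) R y - convAt ψ (g k) R y| := by
        rw [← ENNReal.ofReal_sum_of_nonneg fun _ _ => abs_nonneg _]
        exact ENNReal.ofReal_le_ofReal (Finset.abs_sum_le_sum_abs _ _)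
    _ ≤ ∑ k ∈ S, (if k ∈ S then ntMax ψ (fun z => g (k+1) z - g k z) x else 0) := by
        refine Finset.sum_le_sum fun k hk => ?_
        rw [if_pos hk]
        have := le_ntMax ψ (fun z => g (k+1) z - g k z) hR hy
        rw [convAt_eq, cv_sub_left (hg _) (hg _) (hψ.scl hR)] at this
        exact this
    _ ≤ _ := ENNReal.sum_le_tsum S

lemma split1 {n : ℕ} {ψ : Euc n → ℝ} (hψ : CC ψ) {f : Euc n → ℝ} (hf : LocallyIntegrable f volume)
    {g : ℤ → Euc n → ℝ} (hg : ∀ k, LocallyIntegrable (g k) volume)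
    (h0 : ∀ (R : ℝ) (_ : 0 < R) (y : Euc n),
          Filter.Tendsto (fun N : ℕ => convAt ψ (g (-(N:ℤ))) R y) Filter.atTop (nhds 0))
    (h1 : ∀ (R : ℝ) (_ : 0 < R) (y : Euc n),
          Filter.Tendsto (fun N : ℕ => convAt ψ (g (N:ℤ)) R y) Filter.atTop (nhds (convAt ψ f R y)))
    (S : Finset ℤ) (x : Euc n) :
    ntMax ψ (fun z => f z - ∑ k ∈ S, (g (k+1) z - g k z)) x ≤
      ∑' k : ℤ, (if k ∈ S then 0 else ntMax ψ (fun z => g (k+1) z - g k z) x) := by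
  refine iSup_le fun y => iSup_le fun R => iSup_le fun hR => iSup_le fun hy => ?_
  have hs : CC (scl ψ R) := hψ.scl hR
  have hli : LocallyIntegrable (fun z => ∑ k ∈ S, (g (k+1) z - g k z)) volume :=
    locallyIntegrable_finsetSum S (f := fun k z => g (k+1) z - g k z) fun k _ => (hg (k+1)).sub (hg k)
  have e : convAt ψ (fun z => f z - ∑ k ∈ S, (g (k+1) z - g k z)) R y =
      convAt ψ f R y - ∑ k ∈ S, (convAt ψ (g (k+1)) R y - convAt ψ (g k) R y) := by
    rw [← conv_delta hψ hg S hR]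
    exact cv_sub_left hf hli hs y
  have hl : Filter.Tendsto (fun N : ℕ => convAt ψ (g (N:ℤ)) R y - convAt ψ (g (-(N:ℤ))) R y -
      ∑ k ∈ S, (convAt ψ (g (k+1)) R y - convAt ψ (g k) R y)) Filter.atTop
      (nhds (convAt ψ (fun z => f z - ∑ k ∈ S, (g (k+1) z - g k z)) R y)) := by
    rw [e]
    have := ((h1 R hR y).sub (h0 R hR y)).sub_const (∑ k ∈ S, (convAt ψ (g (k+1)) R y - convAt ψ (g k) R y))
    rwa [sub_zero] at this
  refine le_of_tendsto (ENNReal.tendsto_ofReal hl.abs) ?_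
  obtain ⟨N0, hN0⟩ : ∃ N0 : ℕ, ∀ k ∈ S, k.natAbs < N0 := by
    refine ⟨S.sup Int.natAbs + 1, fun k hk => ?_⟩
    have : k.natAbs ≤ S.sup Int.natAbs := Finset.le_sup hk
    omega
  filter_upwards [Filter.eventually_ge_atTop N0] with N hN
  have hsub : S ⊆ Finset.Ico (-(N:ℤ)) N := by
    intro k hk
    have := hN0 k hk
    simp only [Finset.mem_Ico]; omega
  have htel := telesc (fun k => convAt ψ (g k) R y) N
  rw [← htel, ← Finset.sum_sdiff_eq_sub hsub]
  calc _ ≤ ∑ k ∈ Finset.Ico (-(N:ℤ)) N \ S, ENNReal.ofReal |convAt ψ (g (k+1)) R y - convAt ψ (g k) R y| := by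
        rw [← ENNReal.ofReal_sum_of_nonneg fun _ _ => abs_nonneg _]
        exact ENNReal.ofReal_le_ofReal (Finset.abs_sum_le_sum_abs _ _)
    _ ≤ ∑ k ∈ Finset.Ico (-(N:ℤ)) N \ S, (if k ∈ S then 0 else ntMax ψ (fun z => g (k+1) z - g k z) x) := by
        refine Finset.sum_le_sum fun k hk => ?_
        rw [if_neg (Finset.mem_sdiff.1 hk).2]
        have := le_ntMax ψ (fun z => g (k+1) z - g k z) hR hy
        rw [convAt_eq, cv_sub_left (hg _) (hg _) (hψ.scl hR)] at this
        exact this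
    _ ≤ _ := ENNReal.sum_le_tsum _

lemma fin_dist {n : ℕ} {p q : ℝ} (hp : 0 < p) (hq : 0 < q) {F : Euc n → ℝ≥0∞}
    (hF : lorentzNorm p (ENNReal.ofReal q) F < ∞) :
    (∀ k : ℤ, distFn F ((2:ℝ≥0∞)^k) ≠ ∞) ∧
      Filter.Tendsto (fun N : ℕ => distFn F ((2:ℝ≥0∞)^(N:ℤ))) Filter.atTop (nhds 0) := by
  set L := lorentzNorm p (ENNReal.ofReal q) F with hL
  have hb : ∀ k : ℤ, distFn F ((2:ℝ≥0∞)^k) ≤ ((2:ℝ≥0∞)^(-(k:ℝ)) * L)^p := by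
    intro k
    have h1 : (2:ℝ≥0∞)^k * (distFn F ((2:ℝ≥0∞)^k))^(1/p) ≤ L := by
      rw [hL, lorentz_ellq, ellq_ofReal _ hq]
      calc _ = (((2:ℝ≥0∞)^k * (distFn F ((2:ℝ≥0∞)^k))^(1/p))^q)^(1/q) := by
            rw [← ENNReal.rpow_mul, mul_one_div_cancel hq.ne', ENNReal.rpow_one]
        _ ≤ _ := ENNReal.rpow_le_rpow (ENNReal.le_tsum (f := fun k : ℤ => ((2:ℝ≥0∞)^k * (distFn F ((2:ℝ≥0∞)^k))^(1/p))^q) k) (by positivity)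
    have h2 := mul_le_mul_right h1 ((2:ℝ≥0∞)^(-(k:ℝ)))
    rw [← mul_assoc, zpow_eq_rpow2, ← two_rpow_add, neg_add_cancel, ENNReal.rpow_zero, one_mul] at h2
    have h3 := ENNReal.rpow_le_rpow h2 hp.le
    rwa [← ENNReal.rpow_mul, one_div_mul_cancel hp.ne', ENNReal.rpow_one, ← zpow_eq_rpow2] at h3
  refine ⟨fun k => ne_top_of_le_ne_top (rpow_ne_top_of_nonneg hp.le (mul_ne_top (two_rpow_ne_top _) hF.ne)) (hb k), ?_⟩
  have hz : Filter.Tendsto (fun N : ℕ => (2:ℝ≥0∞)^(-((N:ℤ):ℝ))) Filter.atTop (nhds 0) := by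
    have : Filter.Tendsto (fun N : ℕ => (2⁻¹:ℝ≥0∞)^N) Filter.atTop (nhds 0) :=
      ENNReal.tendsto_pow_atTop_nhds_zero_of_lt_one (by simp)
    refine this.congr fun N => ?_
    rw [ENNReal.rpow_neg, Int.cast_natCast, ENNReal.rpow_natCast, ENNReal.inv_pow]
  have h4 : Filter.Tendsto (fun N : ℕ => ((2:ℝ≥0∞)^(-((N:ℤ):ℝ)) * L)^p) Filter.atTop (nhds ((0 * L)^p)) :=
    (ENNReal.Tendsto.mul_const hz (Or.inr hF.ne)).ennrpow_const p
  rw [zero_mul, ENNReal.zero_rpow_of_pos hp] at h4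
  exact tendsto_of_tendsto_of_tendsto_of_le_of_le tendsto_const_nhds h4 (fun _ => zero_le) (fun N => hb N)

lemma K_bound {n : ℕ} (hn : 1 ≤ n) {ψ : Euc n → ℝ} (hψs : ContDiff ℝ (⊤ : ℕ∞) ψ) (hψc : HasCompactSupport ψ)
    (hi : ∫ x, ψ x ≠ 0) {p q : ℝ} (hp : 0 < p) (hq : 0 < q) {q1 q2 : ℝ≥0∞} (hq1 : q1 ≠ 0) (hq2 : q2 ≠ 0) :
    ∃ C : ℝ≥0∞, C ≠ ∞ ∧ ∀ f : Euc n → ℝ, LocallyIntegrable f volume →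
      lorentzNorm p (ENNReal.ofReal q) (ntMax ψ f) < ∞ → ∀ (S : Finset ℤ) (t : ℝ),
      Kfun ψ p q1 q2 f t ≤ C * ellq q1 (fun k => if k ∈ S then (2:ℝ≥0∞)^k * (distFn (ntMax ψ f) ((2:ℝ≥0∞)^k))^(1/p) else 0)
        + ENNReal.ofReal t * (C * ellq q2 (fun k => if k ∈ S then 0 else (2:ℝ≥0∞)^k * (distFn (ntMax ψ f) ((2:ℝ≥0∞)^k))^(1/p))) := by
  have hψ : CC ψ := ⟨hψs.continuous, hψc⟩
  obtain ⟨τ, hτ1, hτ⟩ : ∃ τ : ℕ, 1 ≤ τ ∧ 1 / ((τ:ℝ)+1) < p := by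
    obtain ⟨N, hN⟩ := exists_nat_one_div_lt hp
    refine ⟨N + 1, by omega, lt_of_le_of_lt ?_ hN⟩
    push_cast
    exact one_div_le_one_div_of_le (by positivity) (by linarith)
  obtain ⟨C0, hC0, hdec⟩ := decomp hn hψs hψc hi hτ1
  obtain ⟨Ca, hCa, hlora⟩ := lor (n := n) hp hτ hq1 hC0
  obtain ⟨Cb, hCb, hlorb⟩ := lor (n := n) hp hτ hq2 hC0
  refine ⟨Ca + Cb, add_ne_top.2 ⟨hCa, hCb⟩, fun f hf hL S t => ?_⟩
  obtain ⟨hfin, hlim⟩ := fin_dist hp hq hL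
  obtain ⟨g, h, hg, hg0, hg1, hm, hint, hΔ⟩ := hdec f hf hfin hlim
  have hp1 : 0 < 1/p := by positivity
  have hli : LocallyIntegrable (fun z => ∑ k ∈ S, (g (k+1) z - g k z)) volume :=
    locallyIntegrable_finsetSum S (f := fun k z => g (k+1) z - g k z) fun k _ => (hg (k+1)).sub (hg k)
  have A0 : lorentzNorm p q1 (ntMax ψ (fun z => ∑ k ∈ S, (g (k+1) z - g k z))) ≤ Ca * ellq q1 (fun k => if k ∈ S then (2:ℝ≥0∞)^k * (distFn (ntMax ψ f) ((2:ℝ≥0∞)^k))^(1/p) else 0) := by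
    have := hlora (ntMax ψ (fun z => ∑ k ∈ S, (g (k+1) z - g k z))) (fun k x => if k ∈ S then h k x else 0)
      (fun k => if k ∈ S then distFn (ntMax ψ f) ((2:ℝ≥0∞)^k) else 0) (fun k => by
        split_ifs
        · exact hm k
        · exact measurable_const) (fun k => by
        split_ifs
        · exact hint k
        · simp) (fun x => by
        refine (split0 hψ hg S x).trans ?_
        rw [← ENNReal.tsum_mul_left]
        refine ENNReal.tsum_le_tsum fun k => ?_
        split_ifs
        · exact hΔ k x
        · simp)
    refine this.trans (mul_le_mul_right (ellq_mono fun k => ?_) _)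
    split_ifs
    · exact le_rfl
    · rw [ENNReal.zero_rpow_of_pos hp1, mul_zero]
  have A1 : lorentzNorm p q2 (ntMax ψ (fun z => f z - ∑ k ∈ S, (g (k+1) z - g k z))) ≤ Cb * ellq q2 (fun k => if k ∈ S then 0 else (2:ℝ≥0∞)^k * (distFn (ntMax ψ f) ((2:ℝ≥0∞)^k))^(1/p)) := by
    have := hlorb (ntMax ψ (fun z => f z - ∑ k ∈ S, (g (k+1) z - g k z))) (fun k x => if k ∈ S then 0 else h k x)
      (fun k => if k ∈ S then 0 else distFn (ntMax ψ f) ((2:ℝ≥0∞)^k)) (fun k => by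
        split_ifs
        · exact measurable_const
        · exact hm k) (fun k => by
        split_ifs
        · simp
        · exact hint k) (fun x => by
        refine (split1 hψ hf hg hg0 hg1 S x).trans ?_
        rw [← ENNReal.tsum_mul_left]
        refine ENNReal.tsum_le_tsum fun k => ?_
        split_ifs
        · simp
        · exact hΔ k x)
    refine this.trans (mul_le_mul_right (ellq_mono fun k => ?_) _)
    split_ifs
    · rw [ENNReal.zero_rpow_of_pos hp1, mul_zero]
    · exact le_rfl
  unfold Kfun
  refine iInf_le_of_le (fun z => ∑ k ∈ S, (g (k+1) z - g k z)) ?_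
  refine iInf_le_of_le (fun z => f z - ∑ k ∈ S, (g (k+1) z - g k z)) ?_
  refine iInf_le_of_le hli ?_
  refine iInf_le_of_le (hf.sub hli) ?_
  refine iInf_le_of_le (fun x => by ring) ?_
  refine add_le_add (A0.trans (mul_le_mul_left le_self_add _)) (mul_le_mul_right (A1.trans (mul_le_mul_left le_add_self _)) _)

lemma add_rpow_le2 {q : ℝ} (hq : 0 < q) (x y : ℝ≥0∞) : (x + y)^q ≤ 2^q * (x^q + y^q) := by
  have h1 : x + y ≤ 2 * max x y := by rw [two_mul]; exact add_le_add (le_max_left _ _) (le_max_right _ _)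
  refine (ENNReal.rpow_le_rpow h1 hq.le).trans ?_
  rw [ENNReal.mul_rpow_of_nonneg _ _ hq.le]
  refine mul_le_mul_right ?_ _
  rcases max_cases x y with ⟨h, _⟩ | ⟨h, _⟩ <;> rw [h]
  · exact le_self_add
  · exact le_add_self


lemma piece {η θ q : ℝ} (hη0 : 0 < η) (hθ : 0 < θ) (hq : 0 < q) (m : ℤ) {C X Y : ℝ≥0∞} {G : ℝ → ℝ≥0∞}
    (hG : ∀ t : ℝ, G t ≤ C * X + ENNReal.ofReal t * (C * Y)) :
    ∫⁻ t in Ico (((2:ℝ)^θ)^m) (((2:ℝ)^θ)^(m+1)), (ENNReal.ofReal (t ^ (-η)) * G t) ^ q / ENNReal.ofReal t ≤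
      (2^q * (C^q * ((2:ℝ≥0∞)^(-((m:ℝ)*(η*θ))) * X)^q + ((2:ℝ≥0∞)^θ * C)^q * ((2:ℝ≥0∞)^((m:ℝ)*((1-η)*θ)) * Y)^q)) * ENNReal.ofReal ((2:ℝ)^θ - 1) := by
  set b : ℝ := (2:ℝ)^θ with hb
  have hb0 : 0 < b := by positivity
  have hbm : 0 < b^m := by positivity
  have e1 : b^m = (2:ℝ)^(θ*m) := by rw [hb, ← Real.rpow_intCast, ← Real.rpow_mul (by norm_num)]
  have e2 : ∀ s : ℝ, ENNReal.ofReal ((2:ℝ)^s) = (2:ℝ≥0∞)^s := by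
    intro s
    rw [← ENNReal.ofReal_rpow_of_pos (by norm_num)]; simp
  have e3 : ENNReal.ofReal ((b^m)^(-η)) = (2:ℝ≥0∞)^(-((m:ℝ)*(η*θ))) := by
    rw [e1, ← Real.rpow_mul (by norm_num), e2]; congr 1; ring
  have e4 : ENNReal.ofReal (b^(m+1)) = (2:ℝ≥0∞)^(θ*m) * (2:ℝ≥0∞)^θ := by
    rw [zpow_add_one₀ hb0.ne', ENNReal.ofReal_mul hbm.le, e1, e2, hb, e2]
  have key : ∀ t ∈ Ico (b^m) (b^(m+1)), (ENNReal.ofReal (t ^ (-η)) * G t) ^ q / ENNReal.ofReal t ≤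
      (ENNReal.ofReal ((b^m)^(-η)) * (C * X + ENNReal.ofReal (b^(m+1)) * (C*Y)))^q / ENNReal.ofReal (b^m) := by
    intro t ht
    refine ENNReal.div_le_div (ENNReal.rpow_le_rpow (mul_le_mul' ?_ ((hG t).trans ?_)) hq.le) (ENNReal.ofReal_le_ofReal ht.1)
    · exact ENNReal.ofReal_le_ofReal (Real.rpow_le_rpow_of_nonpos hbm ht.1 (by linarith))
    · gcongr
      exact ht.2.le
  refine (setLIntegral_mono' measurableSet_Ico key).trans ?_
  have e6 : ENNReal.ofReal (b^(m+1) - b^m) = ENNReal.ofReal (b^m) * ENNReal.ofReal (b-1) := by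
    rw [← ENNReal.ofReal_mul hbm.le, zpow_add_one₀ hb0.ne']; congr 1; ring
  rw [setLIntegral_const, Real.volume_Ico, e6, ← mul_assoc,
    ENNReal.div_mul_cancel (by simpa using hbm) ENNReal.ofReal_ne_top]
  refine mul_le_mul_left ?_ _
  rw [e3, e4, mul_add]
  refine (add_rpow_le2 hq _ _).trans (mul_le_mul_right (le_of_eq ?_) _)
  rw [← ENNReal.mul_rpow_of_nonneg _ _ hq.le, ← ENNReal.mul_rpow_of_nonneg _ _ hq.le]
  have e5 : (2:ℝ≥0∞)^((m:ℝ)*((1-η)*θ)) = (2:ℝ≥0∞)^(-((m:ℝ)*(η*θ))) * (2:ℝ≥0∞)^(θ*m) := by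
    rw [← two_rpow_add]; congr 1; ring
  rw [e5]
  congr 2 <;> ring

/-- The other half of Theorem 2.5: `H^{p,q} ↪ (H^{p,q₁},H^{p,q₂})_{η,q}`. -/
theorem stmt11 (n : ℕ) (hn : 1 ≤ n) (p : ℝ) (hp0 : 0 < p) (hp1 : p ≤ 1)
    (q1 q : ℝ) (q2 : ℝ≥0∞) (hq1 : 0 < q1) (hq1q : q1 < q) (hqq2 : ENNReal.ofReal q < q2)
    (η : ℝ) (hη0 : 0 < η) (hη1 : η < 1)
    (hηdef : 1/q = (1 - η)/q1 + (if q2 = ∞ then 0 else η / q2.toReal))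
    (ψ : Euc n → ℝ) (hψ : ContDiff ℝ (⊤ : ℕ∞) ψ) (hψc : HasCompactSupport ψ)
    (hψi : (∫ x : Euc n, ψ x) ≠ 0) :
    ∃ c : ℝ, 0 < c ∧
      ∀ f : Euc n → ℝ, LocallyIntegrable f volume →
        lorentzNorm p (ENNReal.ofReal q) (ntMax ψ f) < ∞ →
        (∫⁻ t in Ioi (0:ℝ),
            (ENNReal.ofReal (t ^ (-η)) * Kfun ψ p (ENNReal.ofReal q1) q2 f t) ^ q /
              ENNReal.ofReal t) ^ (1/q) ≤
          ENNReal.ofReal c * lorentzNorm p (ENNReal.ofReal q) (ntMax ψ f) := by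
  have hq : 0 < q := hq1.trans hq1q
  obtain ⟨θ, hθ, Cs, hCs, hseq⟩ := seq_interp hq1 hq1q hqq2 hη0 hη1 hηdef
  obtain ⟨Ck, hCk, hK⟩ := K_bound hn hψ hψc hψi hp0 hq (q1 := ENNReal.ofReal q1) (q2 := q2)
    (by simpa using hq1) (ne_bot_of_gt hqq2)
  set D : ℝ≥0∞ := (2^q * (Ck^q * Cs + ((2:ℝ≥0∞)^θ * Ck)^q * Cs)) * ENNReal.ofReal ((2:ℝ)^θ - 1) with hD
  have hDt : D ≠ ∞ := by
    refine mul_ne_top (mul_ne_top (two_rpow_ne_top _) (add_ne_top.2 ⟨mul_ne_top ?_ hCs, mul_ne_top ?_ hCs⟩)) ofReal_ne_top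
    · exact rpow_ne_top_of_nonneg hq.le hCk
    · exact rpow_ne_top_of_nonneg hq.le (mul_ne_top (two_rpow_ne_top _) hCk)
  have hDt' : D^(1/q) ≠ ∞ := rpow_ne_top_of_nonneg (by positivity) hDt
  refine ⟨(D^(1/q)).toReal + 1, by positivity, fun f hf hL => ?_⟩
  have hc : D^(1/q) ≤ ENNReal.ofReal ((D^(1/q)).toReal + 1) := by
    rw [ENNReal.le_ofReal_iff_toReal_le hDt' (by positivity)]; linarith
  refine le_trans ?_ (mul_le_mul_left hc _)
  rw [lorentz_ellq, ellq_ofReal _ hq] at hL ⊢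
  set a : ℤ → ℝ≥0∞ := fun k => (2:ℝ≥0∞)^k * (distFn (ntMax ψ f) ((2:ℝ≥0∞)^k))^(1/p) with ha
  have hfin : ∑' k, a k ^ q ≠ ∞ := by
    intro h
    rw [h, ENNReal.top_rpow_of_pos (by positivity)] at hL
    exact lt_irrefl _ hL
  obtain ⟨S, hS1, hS2⟩ := hseq a hfin
  rw [← ENNReal.mul_rpow_of_nonneg _ _ (by positivity : 0 ≤ 1/q)]
  refine ENNReal.rpow_le_rpow ?_ (by positivity)
  have hL' : lorentzNorm p (ENNReal.ofReal q) (ntMax ψ f) < ∞ := by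
    rw [lorentz_ellq, ellq_ofReal _ hq]; exact hL
  have hb1 : 1 < (2:ℝ)^θ := Real.one_lt_rpow (by norm_num) hθ
  have hsub : Ioi (0:ℝ) ⊆ ⋃ m : ℤ, Ico (((2:ℝ)^θ)^m) (((2:ℝ)^θ)^(m+1)) := by
    intro t ht
    obtain ⟨m, hm⟩ := exists_mem_Ico_zpow (mem_Ioi.1 ht) hb1
    exact mem_iUnion.2 ⟨m, hm⟩
  refine (lintegral_mono_set hsub).trans ((lintegral_iUnion_le _ _).trans ?_)
  refine (ENNReal.tsum_le_tsum fun m => piece hη0 hθ hq m (fun t => hK f hf hL' (S m) t)).trans ?_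
  rw [ENNReal.tsum_mul_right, ENNReal.tsum_mul_left, ENNReal.tsum_add, ENNReal.tsum_mul_left, ENNReal.tsum_mul_left]
  calc _ ≤ (2^q * (Ck^q * (Cs * ∑' k, a k ^ q) + ((2:ℝ≥0∞)^θ * Ck)^q * (Cs * ∑' k, a k ^ q))) * ENNReal.ofReal ((2:ℝ)^θ - 1) := by
        gcongr
    _ = D * ∑' k, a k ^ q := by rw [hD]; ring

end
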